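/- arXiv:2604.14462 — 3 statements merged into one kernel-verified Lean document; each statement's English description precedes it below -/
import Mathlib

section
/- Let m ≥ 2 and n ≥ 1, and let U_{m,n} = {1, …, m} ∪ {i, 2i, …, ni} ⊆ ℂ, writing x_j = j for 1 ≤ j ≤ m and y_k = ki for 1 ≤ k ≤ n. Let A be the subposet of NC(U_{m,n}) consisting of all noncrossing partitions in which x_m is either a singleton block or lies in the same block as x_{m−1}; for each k ∈ {1, …, n} let B_k be the subposet consisting of all noncrossing partitions in which x_m shares a block with y_k but with none of x_{m−1}, y_1, …, y_{k−1}. Then: (1) A is order-isomorphic to the direct product of NC(U_{m−1,n}) with a two-element chain; (2) B_k is order-isomorphic to the direct product of NC(U_{m−1,k−1}) with the Boolean lattice of subsets of an (n−k)-element set; and (3) NC(U_{m,n}) is the disjoint union of A, B_1, …, B_n. -/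
open Finset

/-- A finpartition of a finite set of points in the plane is *noncrossing* if the
convex hulls (over `ℝ`) of its blocks are pairwise disjoint. -/
def IsNoncrossing {P : Finset ℂ} (π : Finpartition P) : Prop :=
  (π.parts : Set (Finset ℂ)).Pairwise fun B₁ B₂ =>
    Disjoint (convexHull ℝ (B₁ : Set ℂ)) (convexHull ℝ (B₂ : Set ℂ))

/-- The poset `NC(P)` of noncrossing partitions of `P`, ordered by refinement:
`π ≤ μ` iff every block of `μ` is a union of blocks of `π`. -/
abbrev NC (P : Finset ℂ) : Type := {π : Finpartition P // IsNoncrossing π}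

/-- The blocks of a noncrossing partition. -/
def NC.parts {P : Finset ℂ} (π : NC P) : Finset (Finset ℂ) := π.1.parts

/-- Two points lie in a common block of a noncrossing partition. -/
def NC.SameBlock {P : Finset ℂ} (π : NC P) (a b : ℂ) : Prop :=
  ∃ B ∈ π.parts, a ∈ B ∧ b ∈ B

/-- The open cone configuration `U_{m,n} = {1, …, m} ∪ {i, 2i, …, ni} ⊆ ℂ`. -/
noncomputable def Uconfig (m n : ℕ) : Finset ℂ :=
  ((Finset.Icc 1 m).image fun j : ℕ => (j : ℂ)) ∪
    ((Finset.Icc 1 n).image fun k : ℕ => (k : ℂ) * Complex.I)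

/-- `x_m` is a singleton block or lies in the same block as `x_{m-1}`. -/
def UcondA (m n : ℕ) (μ : NC (Uconfig m n)) : Prop :=
  ({((m : ℕ) : ℂ)} : Finset ℂ) ∈ μ.parts ∨ μ.SameBlock (((m - 1 : ℕ) : ℂ)) ((m : ℂ))

/-- `x_m` shares a block with `y_k` but with none of `x_{m-1}, y_1, …, y_{k-1}`. -/
def UcondB (m n k : ℕ) (μ : NC (Uconfig m n)) : Prop :=
  ∃ B ∈ μ.parts, (m : ℂ) ∈ B ∧ (k : ℂ) * Complex.I ∈ B ∧
    ((m - 1 : ℕ) : ℂ) ∉ B ∧ ∀ j : ℕ, 1 ≤ j → j < k → (j : ℂ) * Complex.I ∉ B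

/-!
On the coordinate half-axes write `a ≤ b` if `a` lies on the segment from the origin to `b`. Two
sets of points have intersecting hulls exactly when a point of the second lies below a point of
the first while a point of the first lies below a point of the second: the two chords then cross,
and otherwise a line cutting both half-axes separates the sets. So noncrossing partitions are
equivalence relations subject to a condition on this order.

In `A`, deleting `x_m` loses only the information whether it was isolated or merged into its
neighbour `x_{m-1}`. In `B_k`, no block crosses the segment from `x_m` to `y_k`: the points
strictly inside it form `U_{m-1,k-1}`, and outside, with `x_m` merged into `y_k`, only the chain
`y_k, …, y_n` remains, whose noncrossing partitions are given by choosing which of the `n - k`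
gaps to cut. Finally, if `x_m` is neither isolated nor merged into `x_{m-1}`, its block avoids all
other `x_j`, hence contains some `y_k`, and the least such `k` tells which `B_k` contains the
partition.
-/

section Geometry

theorem segment_inter_segment_nonempty {𝕜 E : Type*} [Field 𝕜] [LinearOrder 𝕜]
    [IsStrictOrderedRing 𝕜] [AddCommGroup E] [Module 𝕜 E] {b b' c c' : E}
    (hc : c ∈ segment 𝕜 0 b) (hb' : b' ∈ segment 𝕜 0 c') :
    (segment 𝕜 b b' ∩ segment 𝕜 c c').Nonempty := by
  rw [segment_eq_image] at hc hb'
  obtain ⟨s, ⟨hs₀, hs₁⟩, rfl⟩ := hc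
  obtain ⟨t, ⟨ht₀, ht₁⟩, rfl⟩ := hb'
  simp only [smul_zero, zero_add]
  have hst : s * t ≤ 1 := mul_le_one₀ hs₁ ht₀ ht₁
  rcases hst.eq_or_lt with hst | hst
  · obtain rfl : s = 1 := by nlinarith
    exact ⟨b, left_mem_segment 𝕜 _ _, by simp [left_mem_segment]⟩
  · have hpos : 0 < 1 - s * t := sub_pos.2 hst
    refine ⟨(s * (1 - t) / (1 - s * t)) • b + (t * (1 - s) / (1 - s * t)) • c', ?_, ?_⟩
    · refine ⟨s * (1 - t) / (1 - s * t), (1 - s) / (1 - s * t),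
        div_nonneg (mul_nonneg hs₀ (sub_nonneg.2 ht₁)) hpos.le,
        div_nonneg (sub_nonneg.2 hs₁) hpos.le, ?_, ?_⟩
      · rw [← add_div, div_eq_one_iff_eq hpos.ne']; ring
      · rw [smul_smul]; congr 2; ring
    · refine ⟨(1 - t) / (1 - s * t), t * (1 - s) / (1 - s * t),
        div_nonneg (sub_nonneg.2 ht₁) hpos.le,
        div_nonneg (mul_nonneg ht₀ (sub_nonneg.2 hs₁)) hpos.le, ?_, ?_⟩
      · rw [← add_div, div_eq_one_iff_eq hpos.ne']; ring
      · rw [smul_smul]; congr 2; ring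

/-- The union of the two open positive coordinate half-axes of the complex plane. -/
def positiveAxes : Set ℂ := {z | (0 < z.re ∧ z.im = 0) ∨ (z.re = 0 ∧ 0 < z.im)}

theorem mem_segment_zero_iff {z w : ℂ} (hz : z ∈ positiveAxes) (hw : w ∈ positiveAxes) :
    z ∈ segment ℝ 0 w ↔ z.re ≤ w.re ∧ z.im ≤ w.im := by
  rw [segment_eq_image]
  simp only [smul_zero, zero_add]
  constructor
  · rintro ⟨θ, ⟨-, hθ⟩, rfl⟩
    rcases hw with ⟨hre, him⟩ | ⟨hre, him⟩ <;> simp [hre, him, hθ]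
  · rintro ⟨hre, him⟩
    rcases hz with ⟨hzre, hzim⟩ | ⟨hzre, hzim⟩
    · have hwre : 0 < w.re := hzre.trans_le hre
      have hwim : w.im = 0 := by rcases hw with hw | hw <;> linarith [hw.1, hw.2]
      exact ⟨z.re / w.re, ⟨by positivity, (div_le_one hwre).2 hre⟩,
        Complex.ext (by simp [hwre.ne']) (by simp [hwim, hzim])⟩
    · have hwim : 0 < w.im := hzim.trans_le him
      have hwre : w.re = 0 := by rcases hw with hw | hw <;> linarith [hw.1, hw.2]
      exact ⟨z.im / w.im, ⟨by positivity, (div_le_one hwim).2 him⟩,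
        Complex.ext (by simp [hwre, hzre]) (by simp [hwim.ne'])⟩

theorem exists_pos_forall_lt_and_forall_lt {ι : Type*} (f : ι → ℝ) {B C : Finset ι}
    (h : ∀ b ∈ B, ∀ c ∈ C, 0 < f c → f b < f c) :
    ∃ α > 0, (∀ b ∈ B, f b < α) ∧ ∀ c ∈ C, 0 < f c → α < f c := by
  classical
  obtain ⟨α, hlo, hhi⟩ := Order.exists_between_finsets
    (insert 0 (B.image f)) ((C.image f).filter (0 < ·)) (by
      simp only [mem_insert, mem_image, mem_filter]
      rintro _ (rfl | ⟨b, hb, rfl⟩) _ ⟨⟨c, hc, rfl⟩, hpos⟩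
      exacts [hpos, h b hb c hc hpos])
  exact ⟨α, hlo 0 (mem_insert_self _ _),
    fun b hb => hlo _ (mem_insert_of_mem (mem_image_of_mem f hb)),
    fun c hc hpos => hhi _ (mem_filter.2 ⟨mem_image_of_mem f hc, hpos⟩)⟩

theorem disjoint_convexHull_of_forall_notMem_segment {B C : Finset ℂ}
    (hB : ↑B ⊆ positiveAxes) (hC : ↑C ⊆ positiveAxes)
    (h : ∀ b ∈ B, ∀ c ∈ C, c ∉ segment ℝ 0 b) :
    Disjoint (convexHull ℝ (B : Set ℂ)) (convexHull ℝ (C : Set ℂ)) := by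
  have hlt : ∀ b ∈ B, ∀ c ∈ C, c.re ≤ b.re → b.im < c.im := fun b hb c hc hre =>
    not_le.1 fun him => h b hb c hc ((mem_segment_zero_iff (hC hc) (hB hb)).2 ⟨hre, him⟩)
  obtain ⟨α, hα, hBα, hCα⟩ := exists_pos_forall_lt_and_forall_lt Complex.re (B := B) (C := C)
    fun b hb c hc hpos => not_le.1 fun hle => by
      have := hlt b hb c hc hle
      rcases hB hb with hb | hb <;> rcases hC hc with hc | hc <;>
        linarith [hb.1, hb.2, hc.1, hc.2]
  obtain ⟨β, hβ, hBβ, hCβ⟩ := exists_pos_forall_lt_and_forall_lt Complex.im (B := B) (C := C)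
    fun b hb c hc hpos => hlt b hb c hc (by
      rcases hB hb with hb | hb <;> rcases hC hc with hc | hc <;>
        linarith [hb.1, hb.2, hc.1, hc.2])
  -- The line through the thresholds `α` and `β * I` separates `B` from `C`.
  let ℓ : ℂ →ₗ[ℝ] ℝ := α⁻¹ • Complex.reLm + β⁻¹ • Complex.imLm
  have hℓ (z : ℂ) : ℓ z = z.re / α + z.im / β := by
    simp [ℓ, div_eq_inv_mul]
  have hℓB : convexHull ℝ (B : Set ℂ) ⊆ {z | ℓ z < 1} := by
    refine convexHull_min (fun b hb => ?_) (convex_halfSpace_lt ℓ.isLinear 1)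
    rw [Set.mem_ofPred_eq, hℓ]
    rcases hB hb with ⟨-, him⟩ | ⟨hre, -⟩
    · simpa [him, div_lt_one hα] using hBα b hb
    · simpa [hre, div_lt_one hβ] using hBβ b hb
  have hℓC : convexHull ℝ (C : Set ℂ) ⊆ {z | 1 < ℓ z} := by
    refine convexHull_min (fun c hc => ?_) (convex_halfSpace_gt ℓ.isLinear 1)
    rw [Set.mem_ofPred_eq, hℓ]
    rcases hC hc with ⟨hre, him⟩ | ⟨hre, him⟩
    · simpa [him, one_lt_div hα] using hCα c hc hre
    · simpa [hre, one_lt_div hβ] using hCβ c hc him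
  refine Set.disjoint_left.2 fun z hzB hzC => ?_
  have hlt : ℓ z < 1 := hℓB hzB
  exact hlt.asymm (hℓC hzC)

theorem disjoint_convexHull_iff {B C : Finset ℂ}
    (hB : ↑B ⊆ positiveAxes) (hC : ↑C ⊆ positiveAxes) :
    Disjoint (convexHull ℝ (B : Set ℂ)) (convexHull ℝ (C : Set ℂ)) ↔
      ∀ b ∈ B, ∀ b' ∈ B, ∀ c ∈ C, ∀ c' ∈ C,
        c ∈ segment ℝ 0 b → b' ∉ segment ℝ 0 c' := by
  constructor
  · intro hdisj b hb b' hb' c hc c' hc' hcb hbc'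
    obtain ⟨z, hzB, hzC⟩ := segment_inter_segment_nonempty hcb hbc'
    exact Set.disjoint_left.1 hdisj (segment_subset_convexHull hb hb' hzB)
      (segment_subset_convexHull hc hc' hzC)
  · intro h
    by_cases hin : ∃ b ∈ B, ∃ c ∈ C, c ∈ segment ℝ 0 b
    · obtain ⟨b, hb, c, hc, hcb⟩ := hin
      exact (disjoint_convexHull_of_forall_notMem_segment hC hB
        fun c' hc' b' hb' => h b hb b' hb' c hc c' hc' hcb).symm
    · push Not at hin
      exact disjoint_convexHull_of_forall_notMem_segment hB hC hin

end Geometry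

section RestrictTo

variable {α : Type*} {V W O : Set α} {r r₁ r₂ s : Setoid α} {a b t : α}

/-- The restriction of an equivalence relation to `W`, extended by equality to the whole type, so
that equivalence relations on different subsets can be compared directly. -/
def restrictTo (W : Set α) (r : Setoid α) : Setoid α where
  r a b := a = b ∨ a ∈ W ∧ b ∈ W ∧ r a b
  iseqv := by
    refine ⟨fun a => Or.inl rfl, ?_, ?_⟩
    · rintro a b (rfl | ⟨ha, hb, hab⟩)
      exacts [Or.inl rfl, Or.inr ⟨hb, ha, r.symm' hab⟩]
    · rintro a b c (rfl | ⟨ha, hb, hab⟩) (rfl | ⟨hb', hc, hbc⟩)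
      exacts [Or.inl rfl, Or.inr ⟨hb', hc, hbc⟩, Or.inr ⟨ha, hb, hab⟩,
        Or.inr ⟨ha, hc, r.trans' hab hbc⟩]

theorem restrictTo_rel : restrictTo W r a b ↔ a = b ∨ a ∈ W ∧ b ∈ W ∧ r a b :=
  Iff.rfl

theorem restrictTo_rel_of_mem (ha : a ∈ W) (hb : b ∈ W) : restrictTo W r a b ↔ r a b := by
  rw [restrictTo_rel]
  exact ⟨fun h => h.elim (fun h => h ▸ r.refl' a) (·.2.2), fun h => Or.inr ⟨ha, hb, h⟩⟩

theorem restrictTo_le : restrictTo W r ≤ r := by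
  rintro a b (rfl | ⟨-, -, hab⟩)
  exacts [r.refl' a, hab]

theorem restrictTo_mono (h : r ≤ s) : restrictTo W r ≤ restrictTo W s := by
  rintro a b (rfl | ⟨ha, hb, hab⟩)
  exacts [Or.inl rfl, Or.inr ⟨ha, hb, h hab⟩]

/-- An equivalence relation is supported on `V` if its classes outside `V` are singletons. -/
def IsSupportedOn (V : Set α) (r : Setoid α) : Prop :=
  ∀ ⦃a b⦄, r a b → a ≠ b → a ∈ V

theorem isSupportedOn_restrictTo : IsSupportedOn W (restrictTo W r) := by
  rintro a b (rfl | ⟨ha, -, -⟩) hne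
  exacts [absurd rfl hne, ha]

theorem IsSupportedOn.mem_right (h : IsSupportedOn V r) (hab : r a b) (hne : a ≠ b) : b ∈ V :=
  h (r.symm' hab) hne.symm

theorem IsSupportedOn.mem_of_rel (h : IsSupportedOn V r) (hab : r a b) (ha : a ∈ V) : b ∈ V := by
  rcases eq_or_ne a b with rfl | hne
  exacts [ha, h.mem_right hab hne]

theorem IsSupportedOn.eq_of_notMem (h : IsSupportedOn V r) (hab : r a b) (ha : a ∉ V) : a = b :=
  not_not.1 fun hne => ha (h hab hne)

theorem IsSupportedOn.restrictTo_eq (h : IsSupportedOn V r) : restrictTo V r = r :=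
  le_antisymm restrictTo_le fun a b hab =>
    (eq_or_ne a b).imp_right fun hne => ⟨h hab hne, h.mem_right hab hne, hab⟩

theorem IsSupportedOn.restrictTo_eq_of_isolated (hs : IsSupportedOn V s)
    (ht : ∀ a, s t a → a = t) : restrictTo (V \ {t}) s = s :=
  restrictTo_eq fun _ b hab hne =>
    ⟨hs hab hne, fun hat => hne (hat.trans (ht b (hat ▸ hab)).symm)⟩

theorem sup_rel (h₁ : IsSupportedOn W r₁) (h₂ : IsSupportedOn O r₂) (hWO : Disjoint W O) :
    (r₁ ⊔ r₂) a b ↔ r₁ a b ∨ r₂ a b := by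
  have mixed {r₁ r₂ : Setoid α} {W O : Set α} (h₁ : IsSupportedOn W r₁) (h₂ : IsSupportedOn O r₂)
      (hWO : Disjoint W O) {a b c : α} (hab : r₁ a b) (hbc : r₂ b c) : r₁ a c ∨ r₂ a c := by
    rcases eq_or_ne a b with rfl | hne
    · exact Or.inr hbc
    · have hb : b ∉ O := Set.disjoint_left.1 hWO (h₁.mem_right hab hne)
      exact Or.inl (h₂.eq_of_notMem hbc hb ▸ hab)
  let glued : Setoid α :=
    { r := fun a b => r₁ a b ∨ r₂ a b
      iseqv :=
        ⟨fun a => Or.inl (r₁.refl' a), fun h => h.imp r₁.symm' r₂.symm', by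
          rintro a b c (hab | hab) (hbc | hbc)
          exacts [Or.inl (r₁.trans' hab hbc), mixed h₁ h₂ hWO hab hbc,
            (mixed h₂ h₁ hWO.symm hab hbc).symm, Or.inr (r₂.trans' hab hbc)]⟩ }
  have hle : r₁ ⊔ r₂ ≤ glued := sup_le (fun _ _ => Or.inl) (fun _ _ => Or.inr)
  exact ⟨fun h => hle h, fun h => h.elim (fun h => le_sup_left (b := r₂) h)
    (fun h => le_sup_right (a := r₁) h)⟩

theorem sup_rel_of_mem_left (h₁ : IsSupportedOn W r₁) (h₂ : IsSupportedOn O r₂)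
    (hWO : Disjoint W O) (ha : a ∈ W) : (r₁ ⊔ r₂) a b ↔ r₁ a b := by
  rw [sup_rel h₁ h₂ hWO, or_iff_left_iff_imp]
  intro hab
  exact h₂.eq_of_notMem hab (Set.disjoint_left.1 hWO ha) ▸ r₁.refl' a

theorem restrictTo_sup_left (h₁ : IsSupportedOn W r₁) (h₂ : IsSupportedOn O r₂)
    (hWO : Disjoint W O) : restrictTo W (r₁ ⊔ r₂) = r₁ := by
  conv_rhs => rw [← h₁.restrictTo_eq]
  ext a b
  simp only [restrictTo_rel]
  exact or_congr_right <| and_congr_right fun ha => and_congr_right fun _ =>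
    sup_rel_of_mem_left h₁ h₂ hWO ha

theorem restrictTo_sup_restrictTo (hs : IsSupportedOn (W ∪ O) s)
    (hsplit : ∀ w ∈ W, ∀ o ∈ O, ¬ s w o) : restrictTo W s ⊔ restrictTo O s = s := by
  refine le_antisymm (sup_le restrictTo_le restrictTo_le) fun a b hab => ?_
  rcases eq_or_ne a b with rfl | hne
  · exact Setoid.refl' _ a
  rcases hs hab hne with ha | ha <;> rcases hs.mem_right hab hne with hb | hb
  · exact le_sup_left (α := Setoid α) (Or.inr ⟨ha, hb, hab⟩)
  · exact absurd hab (hsplit a ha b hb)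
  · exact absurd (s.symm' hab) (hsplit b hb a ha)
  · exact le_sup_right (α := Setoid α) (Or.inr ⟨ha, hb, hab⟩)

end RestrictTo

section OrderNoncrossing

variable {α : Type*} [PartialOrder α] {V W O : Set α} {r r₁ r₂ s s' : Setoid α} {a b c t p : α}

/-- The order-theoretic form of noncrossing on the points of the coordinate half-axes, where `a ≤ b`
means that `a` lies on the segment from the origin to `b`. The classes of `b` and `c` cross when `c`
is nested below `b` while a point of the class of `b` is nested below a point of the class of `c`.
-/
structure IsOrderNoncrossing (V : Set α) (r : Setoid α) : Prop where
  supported : IsSupportedOn V r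
  rel_of_le : ∀ ⦃b b' c c'⦄, b ∈ V → c ∈ V → r b b' → r c c' → c ≤ b → b' ≤ c' → r b c

/-- The order-noncrossing equivalence relations on `V`, ordered by refinement: the order-theoretic
counterpart of `NC`. -/
abbrev NCSetoid (V : Set α) : Type _ := {r : Setoid α // IsOrderNoncrossing V r}

theorem IsOrderNoncrossing.rel_of_mem_Icc (hr : IsOrderNoncrossing V r) (ha : a ∈ V) (hb : b ∈ V)
    (hac : r a c) (hbac : b ∈ Set.Icc a c) : r a b :=
  r.symm' (hr.rel_of_le hb ha (r.refl' b) hac hbac.1 hbac.2)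

theorem IsOrderNoncrossing.restrictTo (hr : IsOrderNoncrossing V r) (hWV : W ⊆ V) :
    IsOrderNoncrossing W (restrictTo W r) where
  supported := isSupportedOn_restrictTo
  rel_of_le b b' c c' hb hc hbb' hcc' hcb hbc' := by
    have hb' := isSupportedOn_restrictTo.mem_of_rel hbb' hb
    have hc' := isSupportedOn_restrictTo.mem_of_rel hcc' hc
    rw [restrictTo_rel_of_mem ‹_› ‹_›] at hbb' hcc' ⊢
    exact hr.rel_of_le (hWV hb) (hWV hc) hbb' hcc' hcb hbc'

/-- Restriction of an order-noncrossing equivalence relation to a smaller set of points. -/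
def NCSetoid.restrict (hWV : W ⊆ V) (s : NCSetoid V) : NCSetoid W :=
  ⟨restrictTo W s.1, s.2.restrictTo hWV⟩

theorem isOrderNoncrossing_restrictTo_ker {β : Type*} [PartialOrder β] {h : α → β}
    (hh : MonotoneOn h V) : IsOrderNoncrossing V (restrictTo V (Setoid.ker h)) where
  supported := isSupportedOn_restrictTo
  rel_of_le b b' c c' hb hc hbb' hcc' hcb hbc' := by
    have hb' := isSupportedOn_restrictTo.mem_of_rel hbb' hb
    have hc' := isSupportedOn_restrictTo.mem_of_rel hcc' hc
    rw [restrictTo_rel_of_mem ‹_› ‹_›, Setoid.ker_def] at hbb' hcc' ⊢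
    exact le_antisymm (hbb'.trans_le <| (hh hb' hc' hbc').trans_eq hcc'.symm) (hh hc hb hcb)

theorem isOrderNoncrossing_bot : IsOrderNoncrossing V (⊥ : Setoid α) where
  supported _ _ hab hne := absurd hab hne
  rel_of_le := by
    rintro b _ c _ - - rfl rfl hcb hbc
    exact le_antisymm hbc hcb

theorem IsOrderNoncrossing.sup (h₁ : IsOrderNoncrossing W r₁) (h₂ : IsOrderNoncrossing O r₂)
    (hOW : ∀ o ∈ O, ∀ w ∈ W, ¬ o ≤ w) : IsOrderNoncrossing (W ∪ O) (r₁ ⊔ r₂) := by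
  have hWO : Disjoint W O := Set.disjoint_left.2 fun a haW haO => hOW a haO a haW le_rfl
  have rel_left {a b} (ha : a ∈ W) (hab : (r₁ ⊔ r₂) a b) : r₁ a b ∧ b ∈ W := by
    rw [sup_rel_of_mem_left h₁.supported h₂.supported hWO ha] at hab
    exact ⟨hab, h₁.supported.mem_of_rel hab ha⟩
  have rel_right {a b} (ha : a ∈ O) (hab : (r₁ ⊔ r₂) a b) : r₂ a b ∧ b ∈ O := by
    rw [sup_comm, sup_rel_of_mem_left h₂.supported h₁.supported hWO.symm ha] at hab
    exact ⟨hab, h₂.supported.mem_of_rel hab ha⟩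
  refine ⟨fun a b hab hne => ?_, fun b b' c c' hb hc hbb' hcc' hcb hbc' => ?_⟩
  · exact ((sup_rel h₁.supported h₂.supported hWO).1 hab).imp
      (h₁.supported · hne) (h₂.supported · hne)
  rcases hb with hb | hb <;> rcases hc with hc | hc
  · obtain ⟨⟨hbb', -⟩, ⟨hcc', -⟩⟩ := And.intro (rel_left hb hbb') (rel_left hc hcc')
    exact le_sup_left (α := Setoid α) (h₁.rel_of_le hb hc hbb' hcc' hcb hbc')
  · exact absurd hcb (hOW c hc b hb)
  · exact absurd hbc' (hOW b' (rel_right hb hbb').2 c' (rel_left hc hcc').2)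
  · obtain ⟨⟨hbb', -⟩, ⟨hcc', -⟩⟩ := And.intro (rel_right hb hbb') (rel_right hc hcc')
    exact le_sup_right (α := Setoid α) (h₂.rel_of_le hb hc hbb' hcc' hcb hbc')

end OrderNoncrossing

section NoncrossingPartitions

variable {α : Type*} {f : α → ℂ} {P : Finset ℂ} {π π' : Finpartition P} {a b : α}

/-- The equivalence relation on labels whose classes are the blocks of a partition of the labelled
points; labels of points outside `P` are singletons. -/
noncomputable def blockSetoid (f : α → ℂ) (π : Finpartition P) : Setoid α :=
  restrictTo (f ⁻¹' P) (Setoid.ker fun a => π.part (f a))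

theorem isSupportedOn_blockSetoid : IsSupportedOn (f ⁻¹' P) (blockSetoid f π) :=
  isSupportedOn_restrictTo

theorem blockSetoid_rel (ha : f a ∈ P) : blockSetoid f π a b ↔ f b ∈ π.part (f a) := by
  by_cases hb : f b ∈ P
  · rw [blockSetoid, restrictTo_rel_of_mem (W := f ⁻¹' P) ha hb, Setoid.ker_def, eq_comm,
      π.mem_part_iff_part_eq_part hb ha]
  · have hsupp : IsSupportedOn (f ⁻¹' P) (blockSetoid f π) := isSupportedOn_blockSetoid
    exact iff_of_false (fun hab => hb (hsupp.mem_of_rel hab ha))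
      (fun hab => hb (π.part_subset _ hab))

theorem blockSetoid_rel_iff_exists (ha : f a ∈ P) :
    blockSetoid f π a b ↔ ∃ B ∈ π.parts, f a ∈ B ∧ f b ∈ B := by
  simp only [blockSetoid_rel ha, π.mem_part_iff_exists, and_comm (a := f b ∈ _)]

theorem blockSetoid_rel_of_mem {B : Finset ℂ} (hB : B ∈ π.parts) (ha : f a ∈ B) :
    blockSetoid f π a b ↔ f b ∈ B := by
  rw [blockSetoid_rel (π.le hB ha), π.part_eq_of_mem hB ha]

theorem blockSetoid_le_iff (hP : ↑P ⊆ Set.range f) :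
    blockSetoid f π ≤ blockSetoid f π' ↔ π ≤ π' := by
  constructor
  · intro h B hB
    obtain ⟨z, hz⟩ := π.nonempty_of_mem_parts hB
    obtain ⟨a, rfl⟩ := hP (π.le hB hz)
    have ha : f a ∈ P := π.le hB hz
    refine ⟨π'.part (f a), π'.part_mem.2 ha, fun w hw => ?_⟩
    obtain ⟨b, rfl⟩ := hP (π.le hB hw)
    exact (blockSetoid_rel ha).1 (h ((blockSetoid_rel_iff_exists ha).2 ⟨B, hB, hz, hw⟩))
  · intro h a b hab
    by_cases ha : f a ∈ P
    · obtain ⟨B, hB, haB, hbB⟩ := (blockSetoid_rel_iff_exists ha).1 hab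
      obtain ⟨C, hC, hBC⟩ := h hB
      exact (blockSetoid_rel_iff_exists ha).2 ⟨C, hC, hBC haB, hBC hbB⟩
    · exact isSupportedOn_blockSetoid.eq_of_notMem hab ha ▸ Setoid.refl' _ a

theorem exists_blockSetoid_eq (hf : Function.Injective f) {r : Setoid α}
    (hr : IsSupportedOn (f ⁻¹' P) r) : ∃ π : Finpartition P, blockSetoid f π = r := by
  classical
  refine ⟨Finpartition.ofSetSetoid (r.map f) P, ?_⟩
  have hmap (a b : α) : r.map f (f a) (f b) ↔ r a b := by
    rw [← Setoid.comap_rel, Setoid.comap_map_eq f r hf]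
  ext a b
  by_cases ha : f a ∈ P
  · rw [blockSetoid_rel ha, Finpartition.mem_part_ofSetSetoid_iff_rel, hmap]
    exact ⟨(·.2.2), fun hab => ⟨ha, hr.mem_of_rel hab ha, hab⟩⟩
  · exact ⟨fun hab => isSupportedOn_blockSetoid.eq_of_notMem hab ha ▸ r.refl' a,
      fun hab => hr.eq_of_notMem hab ha ▸ Setoid.refl' _ a⟩

theorem singleton_mem_parts_iff (hf : Function.Injective f) (hP : ↑P ⊆ Set.range f)
    (ha : f a ∈ P) : {f a} ∈ π.parts ↔ ∀ b, blockSetoid f π a b → b = a := by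
  constructor
  · intro h b hab
    exact hf (mem_singleton.1 ((blockSetoid_rel_of_mem h (mem_singleton_self _)).1 hab))
  · intro h
    have hpart : π.part (f a) = {f a} := by
      refine eq_singleton_iff_unique_mem.2 ⟨π.mem_part_self.2 ha, fun z hz => ?_⟩
      obtain ⟨b, rfl⟩ := hP (π.part_subset _ hz)
      rw [h b ((blockSetoid_rel ha).2 hz)]
    exact hpart ▸ π.part_mem.2 ha

variable [PartialOrder α]

/-- A labelling of points on the positive coordinate half-axes by a partial order in which `a ≤ b`
means that the point of `a` lies on the segment from the origin to the point of `b`. -/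
structure IsAxisLabelling (f : α → ℂ) : Prop where
  mem_positiveAxes : ∀ a, f a ∈ positiveAxes
  mem_segment_iff : ∀ a b, f a ∈ segment ℝ 0 (f b) ↔ a ≤ b

theorem IsAxisLabelling.injective (hf : IsAxisLabelling f) : Function.Injective f := fun a b hab =>
  le_antisymm ((hf.mem_segment_iff a b).1 (hab ▸ right_mem_segment ℝ 0 _))
    ((hf.mem_segment_iff b a).1 (hab ▸ right_mem_segment ℝ 0 _))

theorem isOrderNoncrossing_blockSetoid_iff (hf : IsAxisLabelling f) (hP : ↑P ⊆ Set.range f) :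
    IsOrderNoncrossing (f ⁻¹' P) (blockSetoid f π) ↔ IsNoncrossing π := by
  have hPaxes : ↑P ⊆ positiveAxes := hP.trans (Set.range_subset_iff.2 hf.mem_positiveAxes)
  have haxes {B : Finset ℂ} (hB : B ∈ π.parts) : ↑B ⊆ positiveAxes :=
    (Finset.coe_subset.2 (π.le hB)).trans hPaxes
  constructor
  · intro h B hB C hC hne
    rw [disjoint_convexHull_iff (haxes hB) (haxes hC)]
    intro z hz z' hz' w hw w' hw' hwz hzw'
    obtain ⟨b, rfl⟩ := hP (π.le hB hz)
    obtain ⟨b', rfl⟩ := hP (π.le hB hz')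
    obtain ⟨c, rfl⟩ := hP (π.le hC hw)
    obtain ⟨c', rfl⟩ := hP (π.le hC hw')
    have hb : f b ∈ P := π.le hB hz
    have hc : f c ∈ P := π.le hC hw
    have hbc : blockSetoid f π b c := h.rel_of_le hb hc
      ((blockSetoid_rel_iff_exists hb).2 ⟨B, hB, hz, hz'⟩)
      ((blockSetoid_rel_iff_exists hc).2 ⟨C, hC, hw, hw'⟩)
      ((hf.mem_segment_iff c b).1 hwz) ((hf.mem_segment_iff b' c').1 hzw')
    rw [blockSetoid_rel hb, π.part_eq_of_mem hB hz] at hbc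
    exact hne (π.eq_of_mem_parts hB hC hbc hw)
  · refine fun h => ⟨isSupportedOn_blockSetoid, fun b b' c c' hb hc hbb' hcc' hcb hbc' => ?_⟩
    obtain ⟨B, hB, hbB, hbB'⟩ := (blockSetoid_rel_iff_exists hb).1 hbb'
    obtain ⟨C, hC, hcC, hcC'⟩ := (blockSetoid_rel_iff_exists hc).1 hcc'
    by_contra hnot
    have hne : B ≠ C := fun hBC =>
      hnot ((blockSetoid_rel_iff_exists hb).2 ⟨B, hB, hbB, hBC ▸ hcC⟩)
    exact (disjoint_convexHull_iff (haxes hB) (haxes hC)).1 (h hB hC hne)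
      _ hbB _ hbB' _ hcC _ hcC' ((hf.mem_segment_iff c b).2 hcb) ((hf.mem_segment_iff b' c').2 hbc')

/-- Noncrossing partitions of points on the positive coordinate half-axes are the order-noncrossing
equivalence relations on the set of their labels. -/
noncomputable def ncOrderIso (hf : IsAxisLabelling f) (hP : ↑P ⊆ Set.range f) :
    NC P ≃o NCSetoid (f ⁻¹' P) :=
  RelIso.ofSurjective
    (OrderEmbedding.ofMapLEIff
      (fun π : NC P => (⟨blockSetoid f π.1,
        (isOrderNoncrossing_blockSetoid_iff hf hP).2 π.2⟩ : NCSetoid (f ⁻¹' P)))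
      fun _ _ => blockSetoid_le_iff hP)
    fun r => by
      obtain ⟨π, hπ⟩ := exists_blockSetoid_eq hf.injective r.2.supported
      exact ⟨⟨π, (isOrderNoncrossing_blockSetoid_iff hf hP).1 (hπ ▸ r.2)⟩, Subtype.ext hπ⟩

end NoncrossingPartitions

section Decompositions

variable {α : Type*} {V W O : Set α} {κ : α → α} {r s s' : Setoid α} {t p : α}

theorem forall_rel_update_iff [DecidableEq α] :
    (∀ a, s a (Function.update id t p a)) ↔ s t p := by
  refine ⟨fun h => by simpa using h t, fun h a => ?_⟩
  rcases eq_or_ne a t with rfl | hat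
  · simpa using h
  · simp [hat]

/-- The point `t` forms a class of its own or is equivalent to `p`. -/
def IsIsolatedOrMerged (t p : α) (s : Setoid α) : Prop :=
  (∀ a, s t a → a = t) ∨ s t p

variable [PartialOrder α]

/-- A monotone retraction of the point set `V` onto `W`, extended by the identity outside `V`. -/
structure IsMonotoneRetraction (κ : α → α) (V W : Set α) : Prop where
  subset : W ⊆ V
  mapsTo : Set.MapsTo κ V W
  monotoneOn : MonotoneOn κ V
  eq_of_mem : ∀ a ∈ W, κ a = a
  eq_of_notMem : ∀ a ∉ V, κ a = a

theorem isMonotoneRetraction_update [DecidableEq α] (ht : t ∈ V) (hp : p ∈ V) (hpt : p ≠ t)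
    (hmono : MonotoneOn (Function.update id t p) V) :
    IsMonotoneRetraction (Function.update id t p) V (V \ {t}) where
  subset := Set.sdiff_subset
  mapsTo a ha := by
    rcases eq_or_ne a t with rfl | hat
    · simpa using ⟨hp, hpt⟩
    · simpa [hat] using ha
  monotoneOn := hmono
  eq_of_mem _ ha := Function.update_of_ne ha.2 _ _
  eq_of_notMem _ ha := Function.update_of_ne (ne_of_mem_of_not_mem ht ha).symm _ _

namespace IsMonotoneRetraction

theorem isOrderNoncrossing_comap (hκ : IsMonotoneRetraction κ V W) (hr : IsOrderNoncrossing W r) :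
    IsOrderNoncrossing V (r.comap κ) := by
  have hsupp : IsSupportedOn V (r.comap κ) := by
    intro a b hab hne
    by_contra ha
    have heq : κ a = κ b := hr.supported.eq_of_notMem hab fun hκa =>
      ha (hκ.subset (hκ.eq_of_notMem a ha ▸ hκa))
    by_cases hb : b ∈ V
    · exact ha (hκ.eq_of_notMem a ha ▸ heq ▸ hκ.subset (hκ.mapsTo hb))
    · exact hne (by rwa [hκ.eq_of_notMem a ha, hκ.eq_of_notMem b hb] at heq)
  refine ⟨hsupp, fun b b' c c' hb hc hbb' hcc' hcb hbc' => ?_⟩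
  exact hr.rel_of_le (hκ.mapsTo hb) (hκ.mapsTo hc) hbb' hcc' (hκ.monotoneOn hc hb hcb)
    (hκ.monotoneOn (hsupp.mem_of_rel hbb' hb) (hsupp.mem_of_rel hcc' hc) hbc')

theorem restrictTo_comap (hκ : IsMonotoneRetraction κ V W) (hr : IsSupportedOn W r) :
    restrictTo W (r.comap κ) = r := by
  conv_rhs => rw [← hr.restrictTo_eq]
  ext a b
  simp only [restrictTo_rel, Setoid.comap_rel]
  refine or_congr_right <| and_congr_right fun ha => and_congr_right fun hb => ?_
  rw [hκ.eq_of_mem a ha, hκ.eq_of_mem b hb]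

theorem comap_restrictTo (hκ : IsMonotoneRetraction κ V W) (hs : IsSupportedOn V s)
    (h : ∀ a, s a (κ a)) : (restrictTo W s).comap κ = s := by
  ext a b
  rw [Setoid.comap_rel]
  constructor
  · intro hab
    exact s.trans' (h a) (s.trans' (restrictTo_le hab) (s.symm' (h b)))
  · intro hab
    rcases eq_or_ne a b with rfl | hne
    · exact Setoid.refl' _ _
    · exact Or.inr ⟨hκ.mapsTo (hs hab hne), hκ.mapsTo (hs.mem_right hab hne),
        s.trans' (s.symm' (h a)) (s.trans' hab (h b))⟩

theorem rel_comap (hκ : IsMonotoneRetraction κ V W) (a : α) : r.comap κ a (κ a) := by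
  by_cases ha : a ∈ V
  · rw [Setoid.comap_rel, hκ.eq_of_mem _ (hκ.mapsTo ha)]
  · rw [hκ.eq_of_notMem a ha]

/-- Relations in which every point is equivalent to its image under a monotone retraction are
determined by their restriction to the image, and every relation on the image arises. -/
def orderIso (hκ : IsMonotoneRetraction κ V W) :
    {s : NCSetoid V // ∀ a, s.1 a (κ a)} ≃o NCSetoid W where
  toFun s := s.1.restrict hκ.subset
  invFun r := ⟨⟨r.1.comap κ, hκ.isOrderNoncrossing_comap r.2⟩, hκ.rel_comap⟩
  left_inv s := Subtype.ext <| Subtype.ext <| hκ.comap_restrictTo s.1.2.supported s.2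
  right_inv r := Subtype.ext <| hκ.restrictTo_comap r.2.supported
  map_rel_iff' {s s'} := by
    refine ⟨fun h => ?_, restrictTo_mono⟩
    change s.1.1 ≤ s'.1.1
    rw [← hκ.comap_restrictTo s.1.2.supported s.2, ← hκ.comap_restrictTo s'.1.2.supported s'.2]
    exact fun a b hab => h hab

end IsMonotoneRetraction

theorem IsOrderNoncrossing.of_maximal (hr : IsOrderNoncrossing (V \ {t}) r) (htV : t ∈ V)
    (hmax : ∀ v ∈ V \ {t}, ¬ t ≤ v) : IsOrderNoncrossing V r := by
  simpa [Set.insert_eq_of_mem htV] using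
    hr.sup (isOrderNoncrossing_bot (V := {t})) (by simpa using hmax)

theorem le_iff_of_isolated_or_merged [DecidableEq α]
    (hκ : IsMonotoneRetraction (Function.update id t p) V (V \ {t}))
    (hs : IsSupportedOn V s) (hs' : IsSupportedOn V s') (h : IsIsolatedOrMerged t p s) :
    s ≤ s' ↔ restrictTo (V \ {t}) s ≤ restrictTo (V \ {t}) s' ∧ (s t p → s' t p) := by
  refine ⟨fun hle => ⟨restrictTo_mono hle, fun hst => hle hst⟩, fun ⟨hle, himp⟩ => ?_⟩
  rcases h with hiso | hst
  · rw [← hs.restrictTo_eq_of_isolated hiso]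
    exact hle.trans restrictTo_le
  · rw [← hκ.comap_restrictTo hs (forall_rel_update_iff.2 hst),
      ← hκ.comap_restrictTo hs' (forall_rel_update_iff.2 (himp hst))]
    exact fun a b hab => hle hab

open Classical in
/-- The relations for which a maximal point `t` is isolated or equivalent to its image `p` under a
monotone retraction: restrict to the other points and record which alternative holds. -/
noncomputable def isolatedOrMergedOrderIso [DecidableEq α]
    (hκ : IsMonotoneRetraction (Function.update id t p) V (V \ {t}))
    (htV : t ∈ V) (hmax : ∀ v ∈ V \ {t}, ¬ t ≤ v) :
    {s : NCSetoid V // IsIsolatedOrMerged t p s.1} ≃o NCSetoid (V \ {t}) × Fin 2 :=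
  have hp : p ∈ V \ {t} := by simpa using hκ.mapsTo htV
  RelIso.ofSurjective
    (OrderEmbedding.ofMapLEIff
      (fun s : {s : NCSetoid V // IsIsolatedOrMerged t p s.1} =>
        (s.1.restrict hκ.subset, if s.1.1 t p then (1 : Fin 2) else 0))
      fun s s' => by
        have hflag : ((if s.1.1 t p then (1 : Fin 2) else 0) ≤ if s'.1.1 t p then 1 else 0) ↔
            (s.1.1 t p → s'.1.1 t p) := by
          by_cases h : s.1.1 t p <;> by_cases h' : s'.1.1 t p <;> simp [h, h']
        exact (and_congr_right' hflag).trans (le_iff_of_isolated_or_merged hκ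
          s.1.2.supported s'.1.2.supported s.2).symm)
    fun ⟨r, flag⟩ => by
      match flag with
      | 0 =>
        have hiso (a : α) (hta : r.1 t a) : a = t :=
          (r.2.supported.eq_of_notMem hta fun h => h.2 rfl).symm
        refine ⟨⟨⟨r.1, r.2.of_maximal htV hmax⟩, Or.inl hiso⟩, Prod.ext ?_ ?_⟩
        · exact Subtype.ext r.2.supported.restrictTo_eq
        · exact if_neg fun htp => hp.2 (hiso p htp)
      | 1 =>
        have htp : r.1.comap (Function.update id t p) t p := by
          simpa using hκ.rel_comap (r := r.1) t
        refine ⟨⟨⟨r.1.comap _, hκ.isOrderNoncrossing_comap r.2⟩, Or.inr htp⟩, Prod.ext ?_ ?_⟩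
        · exact Subtype.ext (hκ.restrictTo_comap r.2.supported)
        · exact if_pos htp

/-- When no point of `O` lies below a point of `W`, a relation on `W ∪ O` without classes meeting
both parts is an arbitrary pair of relations on `W` and on `O`; the relation on `O` may be
subjected to a further condition `q`. -/
def splitOrderIso (hOW : ∀ o ∈ O, ∀ w ∈ W, ¬ o ≤ w) (q : NCSetoid O → Prop) :
    {s : NCSetoid (W ∪ O) // (∀ w ∈ W, ∀ o ∈ O, ¬ s.1 w o) ∧
      q (s.restrict Set.subset_union_right)} ≃o NCSetoid W × {r : NCSetoid O // q r} :=
  have hWO : Disjoint W O := Set.disjoint_left.2 fun a haW haO => hOW a haO a haW le_rfl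
  have restrict_right (r₁ : NCSetoid W) (r₂ : NCSetoid O) :
      restrictTo O (r₁.1 ⊔ r₂.1) = r₂.1 := by
    rw [sup_comm, restrictTo_sup_left r₂.2.supported r₁.2.supported hWO.symm]
  { toFun s := (s.1.restrict Set.subset_union_left, ⟨s.1.restrict Set.subset_union_right, s.2.2⟩)
    invFun r := ⟨⟨r.1.1 ⊔ r.2.1.1, r.1.2.sup r.2.1.2 hOW⟩, fun w hw o ho hwo => by
        rw [sup_rel_of_mem_left r.1.2.supported r.2.1.2.supported hWO hw] at hwo
        exact Set.disjoint_left.1 hWO (r.1.2.supported.mem_of_rel hwo hw) ho, by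
      convert r.2.2
      exact Subtype.ext (restrict_right r.1 r.2.1)⟩
    left_inv s := Subtype.ext <| Subtype.ext <|
      restrictTo_sup_restrictTo s.1.2.supported s.2.1
    right_inv r := Prod.ext
      (Subtype.ext <| restrictTo_sup_left r.1.2.supported r.2.1.2.supported hWO)
      (Subtype.ext <| Subtype.ext <| restrict_right r.1 r.2.1)
    map_rel_iff' {s s'} := by
      refine ⟨fun h => ?_, fun h => ⟨restrictTo_mono h, restrictTo_mono h⟩⟩
      change s.1.1 ≤ s'.1.1
      rw [← restrictTo_sup_restrictTo s.1.2.supported s.2.1,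
        ← restrictTo_sup_restrictTo s'.1.2.supported s'.2.1]
      exact sup_le_sup h.1 h.2 }

end Decompositions

section Chains

variable {α : Type*} [PartialOrder α] {f : ℕ ↪o α} {N : ℕ} {s s' : Setoid α}

theorem IsOrderNoncrossing.rel_iff_forall_succ (hs : IsOrderNoncrossing (f '' Set.Iic N) s)
    {i j : ℕ} (hij : i ≤ j) (hjN : j ≤ N) :
    s (f i) (f j) ↔ ∀ l, i ≤ l → l < j → s (f l) (f (l + 1)) := by
  have hmem {l : ℕ} (hl : l ≤ j) : f l ∈ f '' Set.Iic N := ⟨l, hl.trans hjN, rfl⟩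
  constructor
  · intro h l hil hlj
    have hrel {l : ℕ} (hil : i ≤ l) (hlj : l ≤ j) : s (f i) (f l) :=
      hs.rel_of_mem_Icc (hmem hij) (hmem hlj) h ⟨f.monotone hil, f.monotone hlj⟩
    exact s.trans' (s.symm' (hrel hil hlj.le)) (hrel (hil.trans l.le_succ) hlj)
  · intro h
    induction j, hij using Nat.le_induction with
    | base => exact s.refl' _
    | succ j hij ih =>
      exact s.trans' (ih (by omega) (fun hl => hmem (hl.trans j.le_succ))
        fun l hil hlj => h l hil (hlj.trans j.lt_succ_self)) (h j hij j.lt_succ_self)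

theorem IsOrderNoncrossing.le_iff_forall_succ (hs : IsOrderNoncrossing (f '' Set.Iic N) s)
    (hs' : IsOrderNoncrossing (f '' Set.Iic N) s') :
    s ≤ s' ↔ ∀ i < N, s (f i) (f (i + 1)) → s' (f i) (f (i + 1)) := by
  refine ⟨fun hle i _ hi => hle hi, fun h a b hab => ?_⟩
  have hlift {i j : ℕ} (hij : i ≤ j) (hjN : j ≤ N) (hrel : s (f i) (f j)) : s' (f i) (f j) :=
    (hs'.rel_iff_forall_succ hij hjN).2 fun l hil hlj => h l (hlj.trans_le hjN)
      ((hs.rel_iff_forall_succ hij hjN).1 hrel l hil hlj)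
  rcases eq_or_ne a b with rfl | hne
  · exact s'.refl' a
  obtain ⟨i, hi, rfl⟩ := hs.supported hab hne
  obtain ⟨j, hj, rfl⟩ := hs.supported.mem_right hab hne
  rcases le_total i j with hij | hji
  · exact hlift hij hj hab
  · exact s'.symm' (hlift hji hi (s.symm' hab))

theorem exists_isOrderNoncrossing_rel_succ_iff (f : ℕ ↪o α) (N : ℕ) (J : ℕ → Prop) :
    ∃ s, IsOrderNoncrossing (f '' Set.Iic N) s ∧ ∀ i < N, s (f i) (f (i + 1)) ↔ J i := by
  classical
  let ρ : ℕ → ℕ := Nat.count fun l => ¬ J l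
  have hinv (i : ℕ) : Function.invFun f (f i) = i := Function.leftInverse_invFun f.injective i
  refine ⟨_, isOrderNoncrossing_restrictTo_ker (h := ρ ∘ Function.invFun f) ?_, fun i hi => ?_⟩
  · rintro _ ⟨i, -, rfl⟩ _ ⟨j, -, rfl⟩ hij
    simpa only [Function.comp_apply, hinv] using Nat.count_monotone _ (f.le_iff_le.1 hij)
  · rw [restrictTo_rel_of_mem (W := f '' Set.Iic N) ⟨i, hi.le, rfl⟩ ⟨i + 1, hi, rfl⟩,
      Setoid.ker_def]
    by_cases hJ : J i <;> simp [hinv, ρ, Nat.count_succ, hJ]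

open Classical in
/-- An order-noncrossing equivalence relation on a chain is determined by the set of its consecutive
pairs of equivalent points, which can be prescribed arbitrarily. -/
noncomputable def chainOrderIso (f : ℕ ↪o α) (N : ℕ) :
    NCSetoid (f '' Set.Iic N) ≃o Finset (Fin N) :=
  RelIso.ofSurjective
    (OrderEmbedding.ofMapLEIff
      (fun s : NCSetoid (f '' Set.Iic N) => univ.filter fun i : Fin N => s.1 (f i) (f (i + 1)))
      fun s s' => by
        refine Iff.trans ?_ (s.2.le_iff_forall_succ s'.2).symm
        simp [Finset.subset_iff, Fin.forall_iff])
    fun S => by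
      obtain ⟨s, hs, hsS⟩ := exists_isOrderNoncrossing_rel_succ_iff f N fun i => ∃ j ∈ S, ↑j = i
      refine ⟨⟨s, hs⟩, Finset.ext fun i => ?_⟩
      simpa [Fin.val_inj] using hsS i i.2

end Chains

section OrderIsos

variable {α β γ δ : Type*} [Preorder α] [Preorder β] [Preorder γ] [Preorder δ]

/-- The restriction of an order isomorphism to subtypes cut out by corresponding predicates. -/
def subtypeOrderIso {p : α → Prop} {q : β → Prop} (e : α ≃o β) (h : ∀ a, p a ↔ q (e a)) :
    {a // p a} ≃o {b // q b} where
  toEquiv := e.toEquiv.subtypeEquiv h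
  map_rel_iff' := e.map_rel_iff

/-- The product of two order isomorphisms. -/
def prodOrderIso (e : α ≃o γ) (e' : β ≃o δ) : α × β ≃o γ × δ where
  toEquiv := e.toEquiv.prodCongr e'.toEquiv
  map_rel_iff' := and_congr e.map_rel_iff e'.map_rel_iff

end OrderIsos

section Cone

open Sum (inl inr)

variable {M K L N n : ℕ} {s : Setoid (ℕ ⊕ ℕ)}

/-- The points `x_{j+1}` (as `inl j`) and `y_{k+1}` (as `inr k`) of the open cone configurations.
The order of the disjoint union `ℕ ⊕ ℕ` compares points of the same half-axis only. -/
noncomputable def conePoint : ℕ ⊕ ℕ → ℂ :=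
  Sum.elim (fun j => ((j + 1 : ℕ) : ℂ)) fun k => ((k + 1 : ℕ) : ℂ) * Complex.I

theorem isAxisLabelling_conePoint : IsAxisLabelling conePoint := by
  have haxes (a) : conePoint a ∈ positiveAxes := by
    rcases a with j | k
    · exact Or.inl (by simpa [conePoint] using Nat.cast_add_one_pos j)
    · exact Or.inr (by simpa [conePoint] using Nat.cast_add_one_pos k)
  refine ⟨haxes, fun a b => ?_⟩
  rw [mem_segment_zero_iff (haxes a) (haxes b)]
  rcases a with i | i <;> rcases b with j | j
  · simp [conePoint]
  · simpa [conePoint] using fun h : (i : ℝ) + 1 ≤ 0 => absurd h (Nat.cast_add_one_pos i).not_ge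
  · simpa [conePoint] using fun _ => Nat.cast_add_one_pos i
  · simp [conePoint]

/-- The labels of the points of `U_{m,n}`. -/
def coneIndex (m n : ℕ) : Set (ℕ ⊕ ℕ) :=
  conePoint ⁻¹' Uconfig m n

theorem coe_Uconfig (m n : ℕ) :
    (Uconfig m n : Set ℂ) = conePoint '' (inl '' Set.Iio m ∪ inr '' Set.Iio n) := by
  have hIcc (l : ℕ) : Set.Icc 1 l = (· + 1) '' Set.Iio l := by
    ext j
    constructor
    · rintro ⟨hj, hjl⟩
      exact ⟨j - 1, Set.mem_Iio.2 (by omega), Nat.sub_add_cancel hj⟩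
    · rintro ⟨i, hi, rfl⟩
      exact ⟨i.succ_pos, hi⟩
  simp only [Uconfig, coe_union, coe_image, coe_Icc, hIcc, Set.image_union, Set.image_image,
    conePoint, Sum.elim_inl, Sum.elim_inr]

theorem Uconfig_subset_range (m n : ℕ) : ↑(Uconfig m n) ⊆ Set.range conePoint :=
  coe_Uconfig m n ▸ Set.image_subset_range _ _

@[simp]
theorem inl_mem_coneIndex {m n j : ℕ} : inl j ∈ coneIndex m n ↔ j < m := by
  simp [coneIndex, coe_Uconfig, isAxisLabelling_conePoint.injective.eq_iff]

@[simp]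
theorem inr_mem_coneIndex {m n k : ℕ} : inr k ∈ coneIndex m n ↔ k < n := by
  simp [coneIndex, coe_Uconfig, isAxisLabelling_conePoint.injective.eq_iff]

/-- Noncrossing partitions of `U_{m,n}` as equivalence relations on labels. -/
noncomputable def coneOrderIso (m n : ℕ) : NC (Uconfig m n) ≃o NCSetoid (coneIndex m n) :=
  ncOrderIso isAxisLabelling_conePoint (Uconfig_subset_range m n)

/-- The class of `x_{M+2}` contains `y_{K+1}` but none of `x_{M+1}, y_1, …, y_K`: the condition
defining `B_{K+1}`, on labels. -/
def IsFirstPartner (M K : ℕ) (s : Setoid (ℕ ⊕ ℕ)) : Prop :=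
  s (inl (M + 1)) (inr K) ∧ ¬ s (inl (M + 1)) (inl M) ∧
    ∀ j < K, ¬ s (inl (M + 1)) (inr j)

theorem UcondA_iff (μ : NC (Uconfig (M + 2) n)) :
    UcondA (M + 2) n μ ↔ IsIsolatedOrMerged (inl (M + 1)) (inl M) (coneOrderIso _ _ μ).1 := by
  have ht : conePoint (inl (M + 1)) ∈ Uconfig (M + 2) n :=
    inl_mem_coneIndex.2 (Nat.lt_succ_self _)
  refine or_congr
    (singleton_mem_parts_iff isAxisLabelling_conePoint.injective (Uconfig_subset_range _ _) ht) ?_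
  refine Iff.trans ?_ (blockSetoid_rel_iff_exists ht).symm
  exact exists_congr fun B => and_congr_right fun _ => and_comm

theorem UcondB_iff (μ : NC (Uconfig (M + 2) n)) :
    UcondB (M + 2) n (K + 1) μ ↔ IsFirstPartner M K (coneOrderIso _ _ μ).1 := by
  have ht : conePoint (inl (M + 1)) ∈ Uconfig (M + 2) n :=
    inl_mem_coneIndex.2 (Nat.lt_succ_self _)
  constructor
  · rintro ⟨B, hB, htB, hyB, hpB, hjB⟩
    have hrel (b) : (coneOrderIso _ _ μ).1 (inl (M + 1)) b ↔ conePoint b ∈ B :=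
      blockSetoid_rel_of_mem hB htB
    exact ⟨(hrel _).2 hyB, fun h => hpB ((hrel _).1 h),
      fun j hj h => hjB (j + 1) j.succ_pos (Nat.succ_lt_succ hj) ((hrel _).1 h)⟩
  · rintro ⟨hty, htp, htj⟩
    obtain ⟨B, hB, htB, hyB⟩ := (blockSetoid_rel_iff_exists ht).1 hty
    have hrel (b) : (coneOrderIso _ _ μ).1 (inl (M + 1)) b ↔ conePoint b ∈ B :=
      blockSetoid_rel_of_mem hB htB
    refine ⟨B, hB, htB, hyB, fun h => htp ((hrel _).2 h), fun j hj hjK h => ?_⟩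
    obtain ⟨j, rfl⟩ := Nat.exists_eq_add_of_le' hj
    exact htj j (Nat.lt_of_succ_lt_succ hjK) ((hrel _).2 h)

theorem IsOrderNoncrossing.isIsolatedOrMerged_or_exists_isFirstPartner
    (hs : IsOrderNoncrossing (coneIndex (M + 2) n) s) :
    IsIsolatedOrMerged (inl (M + 1)) (inl M) s ∨
      ∃ K < n, IsFirstPartner M K s := by
  classical
  by_contra! hnot
  obtain ⟨hA, hfirst⟩ := hnot
  simp only [IsIsolatedOrMerged, not_or, not_forall, exists_prop] at hA
  obtain ⟨⟨a, hta, hat⟩, htp⟩ := hA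
  have ha : a ∈ coneIndex (M + 2) n := hs.supported.mem_of_rel hta (by simp)
  rcases a with i | k
  · have hiM : i ≤ M := by
      have := inl_mem_coneIndex.1 ha
      have : i ≠ M + 1 := fun h => hat (h ▸ rfl)
      omega
    exact htp (hs.rel_of_le (by simp) (by simp) hta (s.refl' (inl M))
      (Sum.inl_le_inl_iff.2 M.le_succ) (Sum.inl_le_inl_iff.2 hiM))
  · have hex : ∃ k, s (inl (M + 1)) (inr k) := ⟨k, hta⟩
    exact hfirst (Nat.find hex) ((Nat.find_le hta).trans_lt (inr_mem_coneIndex.1 ha))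
      ⟨Nat.find_spec hex, htp, fun j hj => Nat.find_min hex hj⟩

theorem IsFirstPartner.not_isIsolatedOrMerged (h : IsFirstPartner M K s) :
    ¬ IsIsolatedOrMerged (inl (M + 1)) (inl M) s := by
  rintro (hiso | htp)
  · exact Sum.inr_ne_inl (hiso _ h.1)
  · exact h.2.1 htp

theorem IsFirstPartner.eq (h : IsFirstPartner M K s) (h' : IsFirstPartner M L s) : K = L :=
  le_antisymm (not_lt.1 fun hlt => h.2.2 L hlt h'.1) (not_lt.1 fun hlt => h'.2.2 K hlt h.1)

theorem existsUnique_isIsolatedOrMerged_or_isFirstPartner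
    (hs : IsOrderNoncrossing (coneIndex (M + 2) n) s) :
    ∃! k, k ≤ n ∧ ((k = 0 ∧ IsIsolatedOrMerged (inl (M + 1)) (inl M) s) ∨
      ∃ K, k = K + 1 ∧ IsFirstPartner M K s) := by
  rcases hs.isIsolatedOrMerged_or_exists_isFirstPartner with hA | ⟨K, hK, hB⟩
  · refine ⟨0, ⟨n.zero_le, Or.inl ⟨rfl, hA⟩⟩, ?_⟩
    rintro _ ⟨-, ⟨rfl, -⟩ | ⟨L, rfl, hL⟩⟩
    exacts [rfl, absurd hA hL.not_isIsolatedOrMerged]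
  · refine ⟨K + 1, ⟨hK, Or.inr ⟨K, rfl, hB⟩⟩, ?_⟩
    rintro _ ⟨-, ⟨rfl, hA⟩ | ⟨L, rfl, hL⟩⟩
    exacts [absurd hA hB.not_isIsolatedOrMerged, congrArg (· + 1) (hL.eq hB)]

theorem coneIndex_sdiff_singleton :
    coneIndex (M + 2) n \ {inl (M + 1)} = coneIndex (M + 1) n := by
  ext (j | k)
  · simp only [Set.mem_sdiff, inl_mem_coneIndex, Set.mem_singleton_iff, Sum.inl.injEq]
    omega
  · simp

theorem monotoneOn_update_coneIndex :
    MonotoneOn (Function.update id (inl (M + 1)) (inl M)) (coneIndex (M + 2) n) := by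
  rintro (i | i) - (j | j) hj hij
  · rw [inl_mem_coneIndex] at hj
    rw [Sum.inl_le_inl_iff] at hij
    simp only [Function.update_apply, Sum.inl.injEq, id_eq]
    split_ifs <;> rw [Sum.inl_le_inl_iff] <;> omega
  · exact absurd hij Sum.not_inl_le_inr
  · exact absurd hij Sum.not_inr_le_inl
  · simpa using hij

theorem nonempty_isIsolatedOrMerged_orderIso (M n : ℕ) :
    Nonempty ({s : NCSetoid (coneIndex (M + 2) n) //
        IsIsolatedOrMerged (inl (M + 1)) (inl M) s.1} ≃o
      NCSetoid (coneIndex (M + 1) n) × Fin 2) := by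
  rw [← coneIndex_sdiff_singleton (M := M)]
  exact ⟨isolatedOrMergedOrderIso
    (isMonotoneRetraction_update (by simp) (by simp) (by simp) monotoneOn_update_coneIndex)
    (by simp) fun v hv hle => by
      rw [coneIndex_sdiff_singleton] at hv
      rcases v with j | k
      · exact (inl_mem_coneIndex.1 hv).not_ge (Sum.inl_le_inl_iff.1 hle)
      · exact Sum.not_inl_le_inr hle⟩

/-- The points `y_{K+1}, y_{K+2}, …` on the outer side of the segment from `x_m` to `y_{K+1}`. -/
def outerChain (K : ℕ) : ℕ ↪o ℕ ⊕ ℕ :=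
  OrderEmbedding.ofMapLEIff (fun i => inr (K + i)) (by simp)

@[simp]
theorem outerChain_apply (K i : ℕ) : outerChain K i = inr (K + i) :=
  rfl

/-- The labels of `x_{M+2}` and of `y_{K+1}, …, y_{K+1+N}`: the points of `U_{M+2,K+1+N}` that are
not on the inner side of the segment from `x_{M+2}` to `y_{K+1}`. -/
def outerIndex (M K N : ℕ) : Set (ℕ ⊕ ℕ) :=
  insert (inl (M + 1)) (outerChain K '' Set.Iic N)

theorem coneIndex_eq_union_outerIndex :
    coneIndex (M + 2) (K + 1 + N) = coneIndex (M + 1) K ∪ outerIndex M K N := by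
  ext (j | k)
  · have hj : j < M + 2 ↔ j = M + 1 ∨ j < M + 1 := by omega
    simp [outerIndex, hj]
  · simp only [outerIndex, inr_mem_coneIndex, Set.mem_union, Set.mem_insert_iff, Set.mem_image,
      Set.mem_Iic, outerChain_apply, reduceCtorEq, Sum.inr.injEq, false_or]
    constructor
    · intro hk
      exact (lt_or_ge k K).imp_right fun hKk => ⟨k - K, by omega, by omega⟩
    · rintro (hk | ⟨i, hi, rfl⟩) <;> omega

theorem outerIndex_sdiff_singleton :
    outerIndex M K N \ {inl (M + 1)} = outerChain K '' Set.Iic N := by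
  simp [outerIndex]

theorem not_le_of_mem_outerIndex_of_mem_coneIndex :
    ∀ o ∈ outerIndex M K N, ∀ w ∈ coneIndex (M + 1) K, ¬ o ≤ w := by
  rintro _ (rfl | ⟨i, -, rfl⟩) (j | k) hw hle
  · exact (inl_mem_coneIndex.1 hw).not_ge (Sum.inl_le_inl_iff.1 hle)
  · exact Sum.not_inl_le_inr hle
  · exact Sum.not_inr_le_inl hle
  · exact (inr_mem_coneIndex.1 hw).not_ge
      ((K.le_add_right i).trans (Sum.inr_le_inr_iff.1 hle))

theorem monotoneOn_update_outerIndex :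
    MonotoneOn (Function.update id (inl (M + 1)) (inr K)) (outerIndex M K N) := by
  rintro _ (rfl | ⟨i, -, rfl⟩) _ (rfl | ⟨j, -, rfl⟩) <;> simp

theorem IsFirstPartner.not_rel_inner (hB : IsFirstPartner M K s)
    (hs : IsOrderNoncrossing (coneIndex (M + 2) n) s) {w : ℕ ⊕ ℕ}
    (hw : w ∈ coneIndex (M + 1) K) : ¬ s (inl (M + 1)) w := by
  intro htw
  rcases w with i | j
  · exact hB.2.1 (hs.rel_of_le (by simp) (by simp) htw (s.refl' (inl M))
      (Sum.inl_le_inl_iff.2 M.le_succ)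
      (Sum.inl_le_inl_iff.2 (Nat.lt_succ_iff.1 (inl_mem_coneIndex.1 hw))))
  · exact hB.2.2 j (inr_mem_coneIndex.1 hw) htw

theorem IsFirstPartner.not_rel_inner_outer (hB : IsFirstPartner M K s)
    (hs : IsOrderNoncrossing (coneIndex (M + 2) (K + 1 + N)) s) {w o : ℕ ⊕ ℕ}
    (hw : w ∈ coneIndex (M + 1) K) (ho : o ∈ outerIndex M K N) : ¬ s w o := by
  intro hwo
  refine hB.not_rel_inner hs hw ?_
  have hwV : w ∈ coneIndex (M + 2) (K + 1 + N) :=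
    coneIndex_eq_union_outerIndex ▸ Set.mem_union_left _ hw
  have hoV : o ∈ coneIndex (M + 2) (K + 1 + N) :=
    coneIndex_eq_union_outerIndex ▸ Set.mem_union_right _ ho
  rcases ho with rfl | ⟨l, -, rfl⟩
  · exact s.symm' hwo
  have hKl : inr K ≤ outerChain K l := Sum.inr_le_inr_iff.2 (K.le_add_right l)
  rcases w with i | j
  · have hit : i ≤ M + 1 := (inl_mem_coneIndex.1 hw).le
    exact hs.rel_of_le (by simp) hwV hB.1 hwo (Sum.inl_le_inl_iff.2 hit) hKl
  · have hjK : j ≤ K := (inr_mem_coneIndex.1 hw).le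
    have hoy : s (outerChain K l) (inr K) :=
      hs.rel_of_le hoV (inr_mem_coneIndex.2 (by omega)) (s.symm' hwo) (s.refl' (inr K)) hKl
        (Sum.inr_le_inr_iff.2 hjK)
    exact s.trans' hB.1 (s.symm' (s.trans' hwo hoy))

theorem isFirstPartner_iff (hs : IsOrderNoncrossing (coneIndex (M + 1) K ∪ outerIndex M K N) s) :
    IsFirstPartner M K s ↔
      (∀ w ∈ coneIndex (M + 1) K, ∀ o ∈ outerIndex M K N, ¬ s w o) ∧ s (inl (M + 1)) (inr K) := by
  rw [← coneIndex_eq_union_outerIndex] at hs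
  refine ⟨fun hB => ⟨fun w hw o ho => hB.not_rel_inner_outer hs hw ho, hB.1⟩, ?_⟩
  rintro ⟨hsplit, hty⟩
  have ht : inl (M + 1) ∈ outerIndex M K N := Set.mem_insert _ _
  exact ⟨hty, fun htp => hsplit (inl M) (by simp) _ ht (s.symm' htp),
    fun j hj htj => hsplit (inr j) (by simpa) _ ht (s.symm' htj)⟩

theorem isMonotoneRetraction_update_outerIndex :
    IsMonotoneRetraction (Function.update id (inl (M + 1)) (inr K)) (outerIndex M K N)
      (outerIndex M K N \ {inl (M + 1)}) :=
  isMonotoneRetraction_update (Set.mem_insert _ _)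
    (Set.mem_insert_of_mem _ ⟨0, Nat.zero_le N, rfl⟩) (by simp) monotoneOn_update_outerIndex

theorem nonempty_isFirstPartner_orderIso (M K N : ℕ) :
    Nonempty ({s : NCSetoid (coneIndex (M + 2) (K + 1 + N)) // IsFirstPartner M K s.1} ≃o
      NCSetoid (coneIndex (M + 1) K) × Finset (Fin N)) := by
  let κ : ℕ ⊕ ℕ → ℕ ⊕ ℕ := Function.update id (inl (M + 1)) (inr K)
  let q (r : NCSetoid (outerIndex M K N)) : Prop := ∀ a, r.1 a (κ a)
  have hq (s : NCSetoid (coneIndex (M + 1) K ∪ outerIndex M K N)) :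
      q (s.restrict Set.subset_union_right) ↔ s.1 (inl (M + 1)) (inr K) :=
    forall_rel_update_iff.trans <| restrictTo_rel_of_mem (Set.mem_insert _ _)
      (Set.mem_insert_of_mem _ ⟨0, Nat.zero_le N, rfl⟩)
  have hmerge := isMonotoneRetraction_update_outerIndex (M := M) (K := K) (N := N)
  rw [outerIndex_sdiff_singleton] at hmerge
  rw [coneIndex_eq_union_outerIndex]
  exact ⟨(subtypeOrderIso (OrderIso.refl (NCSetoid _)) fun s =>
      (isFirstPartner_iff s.2).trans (and_congr_right' (hq s).symm)).trans <|
    (splitOrderIso not_le_of_mem_outerIndex_of_mem_coneIndex q).trans <|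
    prodOrderIso (OrderIso.refl _) (hmerge.orderIso.trans (chainOrderIso (outerChain K) N))⟩

end Cone

/-- For `m ≥ 2`, `n ≥ 1`: the subposet `A` of `NC(U_{m,n})` is isomorphic to
`NC(U_{m-1,n})` times a two-element chain; each subposet `B_k` (for `1 ≤ k ≤ n`) is
isomorphic to `NC(U_{m-1,k-1})` times the Boolean lattice of subsets of an
`(n-k)`-element set; and `NC(U_{m,n})` is the disjoint union of `A, B_1, …, B_n`
(each `μ` satisfies exactly one of the `n+1` conditions, encoded by a unique `k ≤ n`,
with `k = 0` encoding membership in `A`). -/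
theorem nc_U_recursive (m n : ℕ) (hm : 2 ≤ m) (hn : 1 ≤ n) :
    Nonempty ({μ : NC (Uconfig m n) // UcondA m n μ} ≃o NC (Uconfig (m - 1) n) × Fin 2) ∧
    (∀ k : ℕ, 1 ≤ k → k ≤ n →
      Nonempty ({μ : NC (Uconfig m n) // UcondB m n k μ} ≃o
        NC (Uconfig (m - 1) (k - 1)) × Finset (Fin (n - k)))) ∧
    ∀ μ : NC (Uconfig m n), ∃! k : ℕ, k ≤ n ∧
      ((k = 0 ∧ UcondA m n μ) ∨ (1 ≤ k ∧ UcondB m n k μ)) := by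
  obtain ⟨M, rfl⟩ := Nat.exists_eq_add_of_le' hm
  refine ⟨?_, fun k hk hkn => ?_, fun μ => ?_⟩
  · obtain ⟨e⟩ := nonempty_isIsolatedOrMerged_orderIso M n
    exact ⟨(subtypeOrderIso (coneOrderIso (M + 2) n) UcondA_iff).trans <|
      e.trans (prodOrderIso (coneOrderIso (M + 1) n).symm (OrderIso.refl _))⟩
  · obtain ⟨K, rfl⟩ := Nat.exists_eq_add_of_le' hk
    obtain ⟨N, rfl⟩ := Nat.exists_eq_add_of_le hkn
    obtain ⟨e⟩ := nonempty_isFirstPartner_orderIso M K N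
    rw [Nat.add_sub_cancel_left]
    exact ⟨(subtypeOrderIso (coneOrderIso (M + 2) (K + 1 + N)) UcondB_iff).trans <|
      e.trans (prodOrderIso (coneOrderIso (M + 1) K).symm (OrderIso.refl _))⟩
  · refine (existsUnique_congr fun k => and_congr_right' ?_).2 <|
      existsUnique_isIsolatedOrMerged_or_isFirstPartner (coneOrderIso (M + 2) n μ).2
    cases k <;> simp [UcondA_iff, UcondB_iff]
end

section
/- For all m, n ≥ 0, the poset NC(U_{m,n}) admits a symmetric chain decomposition: its underlying set can be partitioned into saturated chains C (each consecutive pair of elements of C is a covering pair in NC(U_{m,n})) such that for each chain C, ρ(min C) + ρ(max C) = (m + n) − 1, where ρ(π) = (m + n) − (number of blocks of π). -/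
open Finset

/-!
The blocks of a noncrossing partition of `U_{m,n}` are nested around the origin, so the partition is
determined by its *links*: the steps, joining a point to its predecessor on the same axis when both
lie in one block, and the arcs, joining the first points of a run on the real axis and a run on the
imaginary axis that lie in one block. Links form a spanning forest, hence their number is the rank,
and the sets of links that occur are exactly the cliques of a compatibility graph.

The links of the one-block partition form a clique `B` of size `m + n - 1`. Every other link is an
arc incompatible with exactly two elements of `B`, and compatible arcs exclude different elements
of `B`. The cliques with a given part `c` outside `B` therefore form a Boolean interval whose bottom
and top have ranks `#c` and `#c + (m + n - 1 - 2 * #c)`, with sum `m + n - 1`; and Boolean intervals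
have symmetric chain decompositions.
-/

/-! ### Symmetric chain decompositions -/

section SymmChainDecomp

variable {α β ι : Type*}

/-- `C` is a symmetric chain decomposition of the set `S`: a partition of `S` into nonempty lists
that are saturated chains of the ambient order, the values of `rk` at the two ends of each chain
adding up to `N`. -/
structure IsSymmChainDecomp [Preorder α] (S : Set α) (rk : α → ℕ) (N : ℕ) (C : Set (List α)) :
    Prop where
  nil_notMem : [] ∉ C
  subset : ∀ l ∈ C, ∀ x ∈ l, x ∈ S
  existsUnique : ∀ x ∈ S, ∃! l, l ∈ C ∧ x ∈ l
  isChain : ∀ l ∈ C, l.IsChain (· ⋖ ·)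
  head_add_getLast : ∀ l ∈ C, ∀ h : l ≠ [], rk (l.head h) + rk (l.getLast h) = N

/-- The set `S` has a symmetric chain decomposition in the sense of `IsSymmChainDecomp`. -/
def HasSymmChainDecomp [Preorder α] (S : Set α) (rk : α → ℕ) (N : ℕ) : Prop :=
  ∃ C, IsSymmChainDecomp S rk N C

theorem IsSymmChainDecomp.comap [Preorder α] [Preorder β] {S : Set β} {rk : β → ℕ} {N : ℕ}
    {C : Set (List β)} (h : IsSymmChainDecomp S rk N C) {f : α → β} (hf : f.Injective)
    (hS : S ⊆ Set.range f) (hcov : ∀ a b, f a ⋖ f b → a ⋖ b) :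
    IsSymmChainDecomp (f ⁻¹' S) (rk ∘ f) N (List.map f ⁻¹' C) where
  nil_notMem := h.nil_notMem
  subset l hl x hx := h.subset _ hl _ (List.mem_map_of_mem hx)
  existsUnique x hx := by
    obtain ⟨l, ⟨hl, hxl⟩, huniq⟩ := h.existsUnique (f x) hx
    obtain ⟨l, rfl⟩ : l ∈ Set.range (List.map f) := by
      rw [Set.range_list_map]
      exact fun y hy => hS (h.subset l hl y hy)
    rw [List.mem_map_of_injective hf] at hxl
    exact ⟨l, ⟨hl, hxl⟩, fun l' ⟨hl', hxl'⟩ =>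
      hf.list_map (huniq _ ⟨hl', List.mem_map_of_mem hxl'⟩)⟩
  isChain l hl := ((List.isChain_map f).1 (h.isChain _ hl)).imp hcov
  head_add_getLast l hl hne := by
    simpa [List.head_map, List.getLast_map] using
      h.head_add_getLast _ hl (List.map_eq_nil_iff.not.2 hne)

namespace HasSymmChainDecomp

theorem of_isChain [Preorder α] {rk : α → ℕ} {N : ℕ} {l : List α} (hl : l.IsChain (· ⋖ ·))
    (hN : ∀ h : l ≠ [], rk (l.head h) + rk (l.getLast h) = N) :
    HasSymmChainDecomp {x | x ∈ l} rk N := by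
  refine ⟨{l} \ {[]}, by simp, ?_, ?_, ?_, ?_⟩
  · rintro _ ⟨rfl, -⟩ x hx
    exact hx
  · exact fun x hx => ⟨l, ⟨⟨rfl, List.ne_nil_of_mem hx⟩, hx⟩, fun _ h => h.1.1⟩
  · rintro _ ⟨rfl, -⟩
    exact hl
  · rintro _ ⟨rfl, -⟩
    exact hN

theorem iUnion [Preorder α] {S : ι → Set α} {rk : α → ℕ} {N : ℕ}
    (h : ∀ i, HasSymmChainDecomp (S i) rk N) (hS : Pairwise (Function.onFun Disjoint S)) :
    HasSymmChainDecomp (⋃ i, S i) rk N := by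
  choose C hC using h
  refine ⟨⋃ i, C i, ?_, ?_, ?_, ?_, ?_⟩ <;> simp only [Set.mem_iUnion, forall_exists_index]
  · rintro ⟨i, hi⟩
    exact (hC i).nil_notMem hi
  · exact fun l i hl x hx => ⟨i, (hC i).subset l hl x hx⟩
  · intro x i hx
    obtain ⟨l, ⟨hl, hxl⟩, huniq⟩ := (hC i).existsUnique x hx
    refine ⟨l, ⟨⟨i, hl⟩, hxl⟩, ?_⟩
    rintro l' ⟨⟨j, hl'⟩, hxl'⟩
    obtain rfl : i = j := by
      by_contra hij
      exact Set.disjoint_left.1 (hS hij) hx ((hC j).subset l' hl' x hxl')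
    exact huniq l' ⟨hl', hxl'⟩
  · exact fun l i hl => (hC i).isChain l hl
  · exact fun l i hl => (hC i).head_add_getLast l hl

theorem union [Preorder α] {S T : Set α} {rk : α → ℕ} {N : ℕ} (hS : HasSymmChainDecomp S rk N)
    (hT : HasSymmChainDecomp T rk N) (hST : Disjoint S T) : HasSymmChainDecomp (S ∪ T) rk N := by
  rw [Set.union_eq_iUnion]
  exact iUnion (Bool.forall_bool.2 ⟨hT, hS⟩) (pairwise_disjoint_on_bool.2 hST)

end HasSymmChainDecomp

variable [DecidableEq β] {a : β}

theorem isChain_map_insert {l : List (Finset β)} (hl : l.IsChain (· ⋖ ·))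
    (ha : ∀ x ∈ l, a ∉ x) : (l.map (insert a)).IsChain (· ⋖ ·) := by
  rw [List.isChain_map]
  refine hl.imp_of_mem_imp fun x y _ hy hxy => ?_
  obtain ⟨b, hb, rfl⟩ := covBy_iff_exists_insert.1 hxy
  rw [insert_comm]
  refine covBy_insert ?_
  grind [ha _ hy]

theorem erase_mem_iff_mem_or_mem_map_insert {l : List (Finset β)} (ha : ∀ x ∈ l, a ∉ x)
    (x : Finset β) :
    x.erase a ∈ l ↔ x ∈ l ∨ x ∈ l.map (insert a) := by
  have hx (y) (hy : y ∈ l) : x.erase a = y ↔ x = y ∨ x = insert a y := by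
    have := ha y hy
    by_cases hax : a ∈ x
    · grind [insert_erase hax]
    · grind
  simp only [List.mem_map]
  grind

theorem disjoint_concat_insert_map_insert {l : List (Finset β)} {z : Finset β}
    (hl : (l ++ [z]).IsChain (· ⋖ ·)) (ha : ∀ x ∈ l ++ [z], a ∉ x) :
    Disjoint {x | x ∈ l ++ [z] ++ [insert a z]} {x | x ∈ l.map (insert a)} := by
  have hz : z ∉ l := fun hzl => by
    have hlt := List.isChain_iff_pairwise.1 (hl.imp fun _ _ => CovBy.lt)
    exact lt_irrefl z ((List.pairwise_append.1 hlt).2.2 z hzl z (by simp))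
  refine Set.disjoint_left.2 fun x hx hx' => ?_
  obtain ⟨y, hy, rfl⟩ := List.mem_map.1 hx'
  obtain hy' | hy' := List.mem_append.1 hx
  · exact ha _ hy' (mem_insert_self a y)
  · have hyz : y = z := by
      rw [← erase_insert (ha y (by simp [hy])), List.mem_singleton.1 hy',
        erase_insert (ha z (by simp))]
    exact hz (hyz ▸ hy)

namespace HasSymmChainDecomp

/-- A chain `x₁ ⋖ ⋯ ⋖ xₖ ⋖ z` times `{∅, {a}}` splits into the two chains
`x₁ ⋖ ⋯ ⋖ xₖ ⋖ z ⋖ z ∪ {a}` and `x₁ ∪ {a} ⋖ ⋯ ⋖ xₖ ∪ {a}`. -/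
theorem setOf_erase_mem_list {l : List (Finset β)} (hl : l.IsChain (· ⋖ ·)) {N : ℕ}
    (hN : ∀ h : l ≠ [], #(l.head h) + #(l.getLast h) = N) (ha : ∀ x ∈ l, a ∉ x) :
    HasSymmChainDecomp {x : Finset β | x.erase a ∈ l} card (N + 1) := by
  obtain rfl | ⟨l, z, rfl⟩ := l.eq_nil_or_concat'
  · simpa using of_isChain (α := Finset β) .nil (rk := card) (N := N + 1) (by simp)
  have haz : a ∉ z := ha z (by simp)
  have hset : {x | x.erase a ∈ l ++ [z]} =
      {x | x ∈ l ++ [z] ++ [insert a z]} ∪ {x | x ∈ l.map (insert a)} := by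
    ext x
    simp only [Set.mem_union, Set.mem_ofPred_eq, erase_mem_iff_mem_or_mem_map_insert ha]
    grind
  rw [hset]
  refine union (of_isChain ?_ fun _ => ?_) (of_isChain (isChain_map_insert hl.left_of_append
    fun x hx => ha x (by simp [hx])) fun h => ?_) ?_
  · refine hl.append (.singleton _) ?_
    simpa using covBy_insert haz
  · rw [List.head_append_of_ne_nil (by simp), ← hN (by simp)]
    simp [haz, add_assoc]
  · have hl' : l ≠ [] := List.map_eq_nil_iff.not.1 h
    have hlast : #(l.getLast hl') + 1 = #z :=
      Nat.covBy_iff_add_one_eq.1 (hl.rel_getLast_head_of_append hl' (by simp)).card_finset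
    have hahead : a ∉ l.head hl' := ha _ (by simp)
    have halast : a ∉ l.getLast hl' := ha _ (by simp)
    rw [List.head_map, List.getLast_map, card_insert_of_notMem hahead,
      card_insert_of_notMem halast, ← hN (by simp), List.head_append_of_ne_nil hl',
      List.getLast_concat, ← hlast]
    ring
  · exact disjoint_concat_insert_map_insert hl ha

theorem setOf_erase_mem {S : Set (Finset β)} {N : ℕ} (h : HasSymmChainDecomp S card N)
    (ha : ∀ x ∈ S, a ∉ x) : HasSymmChainDecomp {x : Finset β | x.erase a ∈ S} card (N + 1) := by
  obtain ⟨C, hC⟩ := h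
  convert iUnion (ι := C) (S := fun l => {x : Finset β | x.erase a ∈ l.1}) (fun l =>
    setOf_erase_mem_list (hC.isChain l l.2) (hC.head_add_getLast l l.2)
      fun x hx => ha x (hC.subset l l.2 x hx)) ?_ using 1
  · ext x
    simp only [Set.mem_iUnion]
    refine ⟨fun hx => ?_, fun ⟨l, hx⟩ => hC.subset l l.2 _ hx⟩
    obtain ⟨l, ⟨hl, hxl⟩, -⟩ := hC.existsUnique _ hx
    exact ⟨⟨l, hl⟩, hxl⟩
  · intro l l' hne
    refine Set.disjoint_left.2 fun x hx hx' => hne (Subtype.ext ?_)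
    exact (hC.existsUnique _ (hC.subset l l.2 _ hx)).unique ⟨l.2, hx⟩ ⟨l'.2, hx'⟩

theorem Icc (s : Finset β) {u : Finset β} (hu : Disjoint s u) :
    HasSymmChainDecomp (Set.Icc s (s ∪ u)) card (2 * #s + #u) := by
  induction u using Finset.induction_on with
  | empty =>
    simpa [two_mul] using of_isChain (rk := card) (List.isChain_singleton s) (N := 2 * #s)
      (by simp [two_mul])
  | insert a u ha ih =>
    rw [disjoint_insert_right] at hu
    have has : a ∉ s ∪ u := by simp [hu.1, ha]
    convert (ih hu.2).setOf_erase_mem (a := a) (fun x hx hax => has (hx.2 hax)) using 1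
    · ext x
      simp [subset_erase, hu.1, subset_insert_iff]
    · simp [ha, add_assoc]

end HasSymmChainDecomp

section Cliques

variable {G : SimpleGraph β} [DecidableRel G.Adj] {B E : Finset β}

theorem two_mul_card_add_card_filter_forall_adj
    (htwo : ∀ v ∈ E \ B, #{b ∈ B | ¬G.Adj v b} = 2)
    (hdisj : ∀ v ∈ E \ B, ∀ w ∈ E \ B, G.Adj v w →
      Disjoint {b ∈ B | ¬G.Adj v b} {b ∈ B | ¬G.Adj w b})
    {c : Finset β} (hcE : c ⊆ E \ B) (hc : G.IsClique c) :
    2 * #c + #{b ∈ B | ∀ v ∈ c, G.Adj v b} = #B := by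
  have hblocked : {b ∈ B | ¬∀ v ∈ c, G.Adj v b} = c.biUnion fun v => {b ∈ B | ¬G.Adj v b} := by
    grind
  rw [← card_filter_add_card_filter_not (s := B) (fun b => ∀ v ∈ c, G.Adj v b), hblocked,
    card_biUnion fun v hv w hw hvw => hdisj v (hcE hv) w (hcE hw) (hc hv hw hvw),
    sum_congr rfl fun v hv => htwo v (hcE hv), sum_const, smul_eq_mul]
  ring

theorem mem_Icc_union_filter_forall_adj_iff (hBE : B ⊆ E) (hB : G.IsClique B) (Y : Finset β) :
    Y ⊆ E ∧ G.IsClique Y ↔ ∃ c : {c // c ⊆ E \ B ∧ G.IsClique (c : Set β)},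
      Y ∈ Set.Icc c.1 (c ∪ {b ∈ B | ∀ v ∈ c.1, G.Adj v b}) := by
  constructor
  · rintro ⟨hYE, hY⟩
    refine ⟨⟨Y \ B, sdiff_subset_sdiff hYE le_rfl, hY.subset (by simp)⟩, sdiff_subset, ?_⟩
    intro y hy
    by_cases hyB : y ∈ B
    · have (v) (hv : v ∈ Y \ B) : G.Adj v y := hY (by grind) hy (by grind)
      grind
    · grind
  · rintro ⟨⟨c, hcE, hc⟩, -, hY⟩
    refine ⟨hY.trans (by grind), SimpleGraph.IsClique.subset (coe_subset.2 hY) ?_⟩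
    intro v hv w hw hvw
    have := @hc v
    have := @hB v
    grind [G.adj_comm]

/-- Cliques with the same part `c` outside `B` form a Boolean interval, whose top adds to `c` all
but `2 * #c` elements of `B`. -/
theorem HasSymmChainDecomp.cliques (hBE : B ⊆ E) (hB : G.IsClique B)
    (htwo : ∀ v ∈ E \ B, #{b ∈ B | ¬G.Adj v b} = 2)
    (hdisj : ∀ v ∈ E \ B, ∀ w ∈ E \ B, G.Adj v w →
      Disjoint {b ∈ B | ¬G.Adj v b} {b ∈ B | ¬G.Adj w b}) :
    HasSymmChainDecomp {Y : Finset β | Y ⊆ E ∧ G.IsClique Y} card #B := by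
  simp only [mem_Icc_union_filter_forall_adj_iff hBE hB, Set.ofPred_exists]
  refine iUnion (fun c => ?_) fun c d hcd => Set.disjoint_left.2 fun Y hYc hYd => hcd ?_
  · rw [← two_mul_card_add_card_filter_forall_adj htwo hdisj c.2.1 c.2.2]
    exact Icc _ (disjoint_left.2 fun v hv => by grind [c.2.1 hv])
  · have sdiff_eq {e : {c // c ⊆ E \ B ∧ G.IsClique (c : Set β)}}
        (hY : Y ∈ Set.Icc e.1 (e ∪ {b ∈ B | ∀ v ∈ e.1, G.Adj v b})) : Y \ B = e := by
      have := e.2.1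
      have := hY.1
      have := hY.2
      grind
    exact Subtype.ext ((sdiff_eq hYc).symm.trans (sdiff_eq hYd))

end Cliques

end SymmChainDecomp

/-! ### Links -/

section Links

variable {ν : Bool → ℕ}

/-- A point of the cone configuration is labelled `(e, k)`: the `k`-th point from the origin on the
real axis (`e = false`) or on the imaginary axis (`e = true`). -/
abbrev Label : Type := Bool × ℕ

/-- The labels on axes of lengths `ν`, counted from the index `a` on. The points of the
configuration are `labels 1 ν`, and `labels 2 ν` are those with a predecessor on their axis. -/
def labels (a : ℕ) (ν : Bool → ℕ) : Finset Label :=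
  (univ.sigma fun e => Icc a (ν e)).map (Equiv.sigmaEquivProd Bool ℕ).toEmbedding

@[simp]
theorem mem_labels {a : ℕ} {x : Label} : x ∈ labels a ν ↔ a ≤ x.2 ∧ x.2 ≤ ν x.1 := by
  simp [labels, Equiv.sigmaEquivProd]

theorem card_labels (a : ℕ) (ν : Bool → ℕ) : #(labels a ν) = ∑ e, (ν e + 1 - a) := by
  simp [labels]

/-- An edge of the canonical spanning forest of a noncrossing partition: the *step* `inl x` joins
`x` to its predecessor on its axis, the *arc* `inr p` joins `(false, p false)` to `(true, p true)`
across the axes. -/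
abbrev Link : Type := Label ⊕ (Bool → ℕ)

/-- All links on axes of lengths `ν`. -/
def links (ν : Bool → ℕ) : Finset Link :=
  (labels 2 ν).disjSum (Fintype.piFinset fun e => Icc 1 (ν e))

/-- The links of the one-block partition: all steps, and the arc between the innermost points. -/
def baseLinks (ν : Bool → ℕ) : Finset Link :=
  (labels 2 ν).disjSum {p ∈ Fintype.piFinset fun e => Icc 1 (ν e) | p = 1}

/-- Two links are adjacent when they can occur in the same partition: a step cannot enter an end of
an arc, because arcs join *first* points of runs, and arcs have to be nested. -/
def linkGraph : SimpleGraph Link where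
  Adj
    | .inl x, .inl y => x ≠ y
    | .inl x, .inr p => x.2 ≠ p x.1
    | .inr p, .inl x => x.2 ≠ p x.1
    | .inr p, .inr q => StrongLT p q ∨ StrongLT q p
  symm := ⟨by
    rintro (x | p) (y | q) h
    · exact h.symm
    · exact h
    · exact h
    · exact h.symm⟩
  loopless := ⟨by
    rintro (x | p) h
    · exact h rfl
    · exact h.elim (fun h => (h true).false) (fun h => (h true).false)⟩

instance : DecidableRel linkGraph.Adj
  | .inl x, .inl y => inferInstanceAs (Decidable (x ≠ y))
  | .inl x, .inr p => inferInstanceAs (Decidable (x.2 ≠ p x.1))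
  | .inr p, .inl x => inferInstanceAs (Decidable (x.2 ≠ p x.1))
  | .inr p, .inr q => inferInstanceAs (Decidable ((∀ e, p e < q e) ∨ ∀ e, q e < p e))

@[simp]
theorem linkGraph_adj_inl_inr {x : Label} {p : Bool → ℕ} :
    linkGraph.Adj (.inl x) (.inr p) ↔ x.2 ≠ p x.1 := .rfl

@[simp]
theorem linkGraph_adj_inr_inl {x : Label} {p : Bool → ℕ} :
    linkGraph.Adj (.inr p) (.inl x) ↔ x.2 ≠ p x.1 := .rfl

@[simp]
theorem linkGraph_adj_inr_inr {p q : Bool → ℕ} :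
    linkGraph.Adj (.inr p) (.inr q) ↔ StrongLT p q ∨ StrongLT q p := .rfl

@[simp]
theorem inl_mem_links {x : Label} : .inl x ∈ links ν ↔ 2 ≤ x.2 ∧ x.2 ≤ ν x.1 := by
  simp [links]

@[simp]
theorem inr_mem_links {p : Bool → ℕ} : .inr p ∈ links ν ↔ ∀ e, 1 ≤ p e ∧ p e ≤ ν e := by
  simp [links]

@[simp]
theorem inl_mem_baseLinks {x : Label} : .inl x ∈ baseLinks ν ↔ 2 ≤ x.2 ∧ x.2 ≤ ν x.1 := by
  simp [baseLinks]

@[simp]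
theorem inr_mem_baseLinks {p : Bool → ℕ} :
    .inr p ∈ baseLinks ν ↔ p = 1 ∧ ∀ e, 1 ≤ ν e := by
  simp +contextual [baseLinks, and_comm]

theorem baseLinks_subset_links : baseLinks ν ⊆ links ν :=
  disjSum_mono le_rfl (filter_subset _ _)

theorem card_baseLinks (ν : Bool → ℕ) : #(baseLinks ν) = ν false + ν true - 1 := by
  have harc : {p ∈ Fintype.piFinset fun e => Icc 1 (ν e) | p = 1} =
      if 1 ≤ ν false ∧ 1 ≤ ν true then {1} else ∅ := by
    ext p
    split_ifs with h <;> simp +contextual [funext_iff] <;> grind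
  rw [baseLinks, card_disjSum, card_labels, harc, Fintype.sum_bool]
  grind

theorem isClique_baseLinks (ν : Bool → ℕ) : linkGraph.IsClique (baseLinks ν : Set Link) := by
  rintro (x | p) hx (y | q) hy hne <;> simp only [mem_coe, inl_mem_baseLinks,
    inr_mem_baseLinks] at hx hy
  · exact fun h => hne (congrArg _ h)
  · have : q x.1 = 1 := congrFun hy.1 x.1
    exact (linkGraph_adj_inl_inr).2 (by lia)
  · have : p y.1 = 1 := congrFun hx.1 y.1
    exact (linkGraph_adj_inr_inl).2 (by lia)
  · exact absurd (congrArg _ (hx.1.trans hy.1.symm)) hne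

/-- The base link that an arc with end `(e, k)` excludes on the axis `e`. -/
def blockedLink (x : Label) : Link := if x.2 = 1 then .inr 1 else .inl x

theorem blockedLink_eq_inl_iff {x y : Label} : blockedLink x = .inl y ↔ x = y ∧ x.2 ≠ 1 := by
  grind [blockedLink]

theorem blockedLink_eq_inr_iff {x : Label} {q : Bool → ℕ} :
    blockedLink x = .inr q ↔ q = 1 ∧ x.2 = 1 := by
  grind [blockedLink]

theorem filter_not_adj_baseLinks {p : Bool → ℕ} (hp : .inr p ∈ links ν) :
    {b ∈ baseLinks ν | ¬linkGraph.Adj (.inr p) b} = univ.image fun e => blockedLink (e, p e) := by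
  rw [inr_mem_links] at hp
  ext (⟨e, k⟩ | q)
  · simp only [mem_filter, inl_mem_baseLinks, linkGraph_adj_inr_inl, mem_image, mem_univ, true_and,
      blockedLink_eq_inl_iff]
    grind
  · simp only [mem_filter, inr_mem_baseLinks, linkGraph_adj_inr_inr, mem_image, mem_univ, true_and,
      blockedLink_eq_inr_iff, StrongLT, Bool.forall_bool, Bool.exists_bool, funext_iff,
      Pi.one_apply]
    grind

theorem exists_eq_inr_of_mem_links_sdiff {v : Link} (hv : v ∈ links ν \ baseLinks ν) :
    ∃ p, v = .inr p ∧ p ≠ 1 ∧ .inr p ∈ links ν := by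
  obtain x | p := v
  · simp at hv
    grind
  · refine ⟨p, rfl, ?_, (mem_sdiff.1 hv).1⟩
    rintro rfl
    simp at hv
    lia

theorem eq_or_eq_of_bool_ne {e f : Bool} (hef : e ≠ f) (g : Bool) : g = e ∨ g = f := by
  revert e f g
  decide

theorem card_filter_not_adj_baseLinks {v : Link} (hv : v ∈ links ν \ baseLinks ν) :
    #{b ∈ baseLinks ν | ¬linkGraph.Adj v b} = 2 := by
  obtain ⟨p, rfl, hp1, hp⟩ := exists_eq_inr_of_mem_links_sdiff hv
  rw [filter_not_adj_baseLinks hp, card_image_of_injective, card_univ, Fintype.card_bool]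
  intro e f hef
  obtain ⟨hpe, hpf⟩ | h : (p e = 1 ∧ p f = 1) ∨ (e, p e) = (f, p f) := by grind [blockedLink]
  · by_contra hne
    refine hp1 (funext fun g => ?_)
    obtain rfl | rfl := eq_or_eq_of_bool_ne hne g
    exacts [hpe, hpf]
  · exact congrArg Prod.fst h

theorem disjoint_filter_not_adj_baseLinks {v w : Link} (hv : v ∈ links ν \ baseLinks ν)
    (hw : w ∈ links ν \ baseLinks ν) (hvw : linkGraph.Adj v w) :
    Disjoint {b ∈ baseLinks ν | ¬linkGraph.Adj v b} {b ∈ baseLinks ν | ¬linkGraph.Adj w b} := by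
  obtain ⟨p, rfl, -, hp⟩ := exists_eq_inr_of_mem_links_sdiff hv
  obtain ⟨q, rfl, -, hq⟩ := exists_eq_inr_of_mem_links_sdiff hw
  rw [filter_not_adj_baseLinks hp, filter_not_adj_baseLinks hq]
  have hblocked (e f) : blockedLink (e, p e) ≠ blockedLink (f, q f) := by
    have hpq := hvw.imp (fun h => h e) fun h => h e
    have hp1 := inr_mem_links.1 hp
    have hq1 := inr_mem_links.1 hq
    grind [blockedLink, linkGraph_adj_inr_inr, StrongLT]
  simp only [disjoint_left, mem_image, mem_univ, true_and]
  rintro _ ⟨e, rfl⟩ ⟨f, h⟩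
  exact hblocked e f h.symm

theorem hasSymmChainDecomp_cliques_linkGraph (ν : Bool → ℕ) :
    HasSymmChainDecomp {Y : Finset Link | Y ⊆ links ν ∧ linkGraph.IsClique Y} card
      (ν false + ν true - 1) := by
  rw [← card_baseLinks]
  exact .cliques baseLinks_subset_links (isClique_baseLinks ν)
    (fun v hv => card_filter_not_adj_baseLinks hv)
    fun v hv w hw => disjoint_filter_not_adj_baseLinks hv hw

end Links

/-! ### Nested relations and their links -/

section Nested

variable {ν : Bool → ℕ} {r : Label → Label → Prop} {Y : Finset Link}

/-- The label before `x` on its axis. The first label has the predecessor `(x.1, 0)`, which labels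
no point. -/
def Label.pred (x : Label) : Label := (x.1, x.2 - 1)

/-- The relation `r` is an equivalence relation on `labels 1 ν` whose classes are nested, the
combinatorial form of noncrossing: for `i ≤ j` and `j' ≤ i'` the segment joining `(e, i)` to
`(f, i')` meets the one joining `(e, j)` to `(f, j')`, so both must lie in the same class. The case
`e = f` says that classes do not interleave on an axis. -/
structure IsNested (ν : Bool → ℕ) (r : Label → Label → Prop) : Prop where
  left_mem : ∀ {x y}, r x y → x ∈ labels 1 ν
  refl : ∀ {x}, x ∈ labels 1 ν → r x x
  symm : ∀ {x y}, r x y → r y x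
  trans : ∀ {x y z}, r x y → r y z → r x z
  nested : ∀ {e f i j i' j'}, r (e, i) (f, i') → r (e, j) (f, j') → i ≤ j → j' ≤ i' →
    r (e, i) (e, j)

/-- The links of the relation `r`: the steps inside a class, and the arcs that join the first points
of a run on the real axis and a run on the imaginary axis in the same class. -/
def IsLinkOf (r : Label → Label → Prop) : Link → Prop
  | .inl x => r x.pred x
  | .inr p => (∀ e f, r (e, p e) (f, p f)) ∧ ∀ e, ¬r (e, p e - 1) (e, p e)

open Classical in
/-- The set of links of the relation `r`. -/
noncomputable def linksOf (ν : Bool → ℕ) (r : Label → Label → Prop) : Finset Link :=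
  {l ∈ links ν | IsLinkOf r l}

theorem mem_linksOf {l : Link} : l ∈ linksOf ν r ↔ l ∈ links ν ∧ IsLinkOf r l := by
  classical simp [linksOf]

theorem linksOf_subset_links : linksOf ν r ⊆ links ν := fun _ hl => (mem_linksOf.1 hl).1

namespace IsNested

theorem right_mem (hr : IsNested ν r) {x y : Label} (h : r x y) : y ∈ labels 1 ν :=
  hr.left_mem (hr.symm h)

theorem inl_mem_linksOf (hr : IsNested ν r) {x : Label} : .inl x ∈ linksOf ν r ↔ r x.pred x := by
  refine mem_linksOf.trans (and_iff_right_of_imp fun h => ?_)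
  have h₁ := mem_labels.1 (hr.left_mem h)
  have h₂ := mem_labels.1 (hr.right_mem h)
  simp only [Label.pred] at h₁
  rw [inl_mem_links]
  lia

theorem inr_mem_linksOf (hr : IsNested ν r) {p : Bool → ℕ} :
    .inr p ∈ linksOf ν r ↔
      (∀ e f, r (e, p e) (f, p f)) ∧ ∀ e, ¬r (e, p e - 1) (e, p e) :=
  mem_linksOf.trans <| and_iff_right_of_imp fun h =>
    inr_mem_links.2 fun e => mem_labels.1 (hr.left_mem (h.1 e e))

theorem inr_mem_linksOf_of_rel (hr : IsNested ν r) {p : Bool → ℕ} {e f : Bool} (hef : e ≠ f)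
    (h : r (e, p e) (f, p f)) (he : ¬r (e, p e - 1) (e, p e)) (hf : ¬r (f, p f - 1) (f, p f)) :
    .inr p ∈ linksOf ν r := by
  have hrel (g) : r (e, p e) (g, p g) := by
    obtain rfl | rfl := eq_or_eq_of_bool_ne hef g
    exacts [hr.refl (hr.left_mem h), h]
  refine hr.inr_mem_linksOf.2 ⟨fun g g' => hr.trans (hr.symm (hrel g)) (hrel g'), fun g => ?_⟩
  obtain rfl | rfl := eq_or_eq_of_bool_ne hef g
  exacts [he, hf]

theorem start_unique (hr : IsNested ν r) {e : Bool} {s t : ℕ} (h : r (e, s) (e, t))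
    (hs : ¬r (e, s - 1) (e, s)) (ht : ¬r (e, t - 1) (e, t)) : s = t := by
  wlog hst : s < t generalizing s t
  · by_contra hne
    exact hne (this (hr.symm h) ht hs (by lia)).symm
  have hsmem := mem_labels.1 (hr.left_mem h)
  have htmem := mem_labels.1 (hr.right_mem h)
  have hpred : r (e, t - 1) (e, t - 1) := hr.refl (mem_labels.2 ⟨by lia, by lia⟩)
  exact absurd (hr.trans (hr.symm (hr.nested h hpred (by lia) (by lia))) h) ht

theorem isClique_linksOf (hr : IsNested ν r) : linkGraph.IsClique (linksOf ν r : Set Link) := by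
  rintro (x | p) hx (y | q) hy hne <;>
    simp only [mem_coe, hr.inl_mem_linksOf, hr.inr_mem_linksOf] at hx hy
  · exact fun h => hne (congrArg _ h)
  · intro h
    exact hy.2 x.1 (h ▸ hx)
  · intro h
    exact hx.2 y.1 (h ▸ hy)
  · have eq_of_eq (e) (h : p e = q e) : p = q := funext fun f =>
      hr.start_unique (hr.trans (hx.1 f e) (h ▸ hy.1 e f)) (hx.2 f) (hy.2 f)
    have ne (e) : p e ≠ q e := fun h => hne (congrArg _ (eq_of_eq e h))
    have not_crossing (e f) (he : p e < q e) (hf : q f < p f) : False :=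
      ne e (hr.start_unique (hr.nested (hx.1 e f) (hy.1 e f) he.le hf.le) (hx.2 e) (hy.2 e))
    rw [linkGraph_adj_inr_inr]
    simp only [StrongLT, Bool.forall_bool]
    grind [ne true, ne false, not_crossing true false, not_crossing false true]

end IsNested

/-- The index of the first point of the run of `x`, when `Y` is the set of links. -/
def start (Y : Finset Link) (x : Label) : ℕ :=
  Nat.findGreatest (fun k => .inl (x.1, k) ∉ Y) x.2

theorem start_le (Y : Finset Link) (x : Label) : start Y x ≤ x.2 := Nat.findGreatest_le _

theorem start_mono (Y : Finset Link) (e : Bool) : Monotone fun k => start Y (e, k) :=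
  
  fun _ _ => Nat.findGreatest_mono_right _

theorem start_eq_self {x : Label} (hx : .inl x ∉ Y) : start Y x = x.2 :=
  le_antisymm (start_le Y x) (Nat.le_findGreatest le_rfl hx)

theorem start_pred (hY : Y ⊆ links ν) {x : Label} (hx : .inl x ∈ Y) :
    start Y x.pred = start Y x := by
  obtain ⟨e, _ | k⟩ := x
  · simpa using hY hx
  · exact (Nat.findGreatest_of_not (not_not.2 hx)).symm

theorem inl_start_notMem (hY : Y ⊆ links ν) (x : Label) : .inl (x.1, start Y x) ∉ Y := by
  refine Nat.findGreatest_spec (P := fun k => Sum.inl (x.1, k) ∉ Y) (Nat.zero_le _) fun h => ?_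
  simpa using hY h

/-- The relation whose set of links is `Y`: its classes are the runs, merged along the arcs. -/
def linkRel (ν : Bool → ℕ) (Y : Finset Link) (x y : Label) : Prop :=
  x ∈ labels 1 ν ∧ y ∈ labels 1 ν ∧
    ((x.1 = y.1 ∧ start Y x = start Y y) ∨
      ∃ p, .inr p ∈ Y ∧ start Y x = p x.1 ∧ start Y y = p y.1)

theorem linkRel.start_eq {e : Bool} {i j : ℕ} (h : linkRel ν Y (e, i) (e, j)) :
    start Y (e, i) = start Y (e, j) := by
  obtain ⟨-, -, h | ⟨p, -, hi, hj⟩⟩ := h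
  exacts [h.2, hi.trans hj.symm]

theorem eq_of_isClique_of_apply_eq (hY : linkGraph.IsClique (Y : Set Link)) {p q : Bool → ℕ}
    (hp : .inr p ∈ Y) (hq : .inr q ∈ Y) {e : Bool} (h : p e = q e) : p = q := by
  by_contra hne
  obtain h' | h' := linkGraph_adj_inr_inr.1 (hY hp hq (Sum.inr_injective.ne hne))
  exacts [(h' e).ne h, (h' e).ne' h]

theorem eq_of_isClique_of_crossing (hY : linkGraph.IsClique (Y : Set Link)) {p q : Bool → ℕ}
    (hp : .inr p ∈ Y) (hq : .inr q ∈ Y) {e f : Bool} (he : p e ≤ q e) (hf : q f ≤ p f) :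
    p = q := by
  by_contra hne
  obtain h' | h' := linkGraph_adj_inr_inr.1 (hY hp hq (Sum.inr_injective.ne hne))
  exacts [(h' f).not_ge hf, (h' e).not_ge he]

theorem isNested_linkRel (hY : linkGraph.IsClique (Y : Set Link)) : IsNested ν (linkRel ν Y) where
  left_mem h := h.1
  refl hx := ⟨hx, hx, .inl ⟨rfl, rfl⟩⟩
  symm := by
    rintro x y ⟨hx, hy, h | ⟨p, hp, hpx, hpy⟩⟩
    exacts [⟨hy, hx, .inl ⟨h.1.symm, h.2.symm⟩⟩, ⟨hy, hx, .inr ⟨p, hp, hpy, hpx⟩⟩]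
  trans := by
    rintro x y z ⟨hx, -, h⟩ ⟨-, hz, h'⟩
    refine ⟨hx, hz, ?_⟩
    obtain ⟨h₁, h₂⟩ | ⟨p, hp, hpx, hpy⟩ := h <;> obtain ⟨h₁', h₂'⟩ | ⟨q, hq, hqy, hqz⟩ := h'
    · exact .inl ⟨h₁.trans h₁', h₂.trans h₂'⟩
    · exact .inr ⟨q, hq, h₁ ▸ h₂.trans hqy, hqz⟩
    · exact .inr ⟨p, hp, hpx, h₁' ▸ h₂'.symm.trans hpy⟩
    · obtain rfl := eq_of_isClique_of_apply_eq hY hp hq (hpy.symm.trans hqy)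
      exact .inr ⟨p, hp, hpx, hqz⟩
  nested := by
    rintro e f i j i' j' h h' hij hji
    refine ⟨h.1, h'.1, .inl ⟨rfl, ?_⟩⟩
    have hmono := start_mono Y e hij
    have hmono' := start_mono Y f hji
    by_cases hef : e = f
    · subst hef
      exact le_antisymm hmono ((h'.start_eq.trans_le hmono').trans_eq h.start_eq.symm)
    · obtain ⟨-, -, h | ⟨p, hp, hpi, hpi'⟩⟩ := h
      · exact absurd h.1 hef
      obtain ⟨-, -, h' | ⟨q, hq, hqj, hqj'⟩⟩ := h'
      · exact absurd h'.1 hef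
      simp only at hmono hmono'
      obtain rfl := eq_of_isClique_of_crossing (e := e) (f := f) hY hp hq (by lia) (by lia)
      exact hpi.trans hqj.symm

theorem linkRel_pred_iff (hYν : Y ⊆ links ν) {x : Label} :
    linkRel ν Y x.pred x ↔ .inl x ∈ Y := by
  refine ⟨fun h => ?_, fun h => ?_⟩
  · by_contra hx
    have hle := start_le Y x.pred
    have hpos := mem_labels.1 h.1
    have heq : start Y x.pred = start Y x := linkRel.start_eq h
    rw [heq, start_eq_self hx] at hle
    simp only [Label.pred] at hle hpos
    lia
  · have hx := inl_mem_links.1 (hYν h)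
    refine ⟨?_, ?_, .inl ⟨rfl, start_pred hYν h⟩⟩ <;> simp only [mem_labels, Label.pred] <;> lia

theorem linksOf_linkRel (hYν : Y ⊆ links ν) (hY : linkGraph.IsClique (Y : Set Link)) :
    linksOf ν (linkRel ν Y) = Y := by
  have hr := isNested_linkRel (ν := ν) hY
  ext (x | p)
  · rw [hr.inl_mem_linksOf, linkRel_pred_iff hYν]
  have hpred (e) : linkRel ν Y (e, p e - 1) (e, p e) ↔ .inl (e, p e) ∈ Y :=
    linkRel_pred_iff (x := (e, p e)) hYν
  simp only [hr.inr_mem_linksOf, hpred]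
  refine ⟨fun ⟨hp, hstart⟩ => ?_, fun hp => ?_⟩
  · obtain ⟨-, -, h | ⟨q, hq, hfalse, htrue⟩⟩ := hp false true
    · exact absurd h.1 Bool.false_ne_true
    rw [start_eq_self (hstart _)] at hfalse htrue
    rwa [show p = q from funext (Bool.forall_bool.2 ⟨hfalse, htrue⟩)]
  · have hstart (e) : .inl (e, p e) ∉ Y := fun h =>
      linkGraph_adj_inl_inr.1 (hY h hp Sum.inl_ne_inr) rfl
    have hmem (e) : (e, p e) ∈ labels 1 ν := mem_labels.2 (inr_mem_links.1 (hYν hp) e)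
    exact ⟨fun e f => ⟨hmem e, hmem f,
      .inr ⟨p, hp, start_eq_self (hstart e), start_eq_self (hstart f)⟩⟩, hstart⟩

namespace IsNested

theorem rel_start (hr : IsNested ν r) (hY : Y ⊆ linksOf ν r) {x : Label} (hx : x ∈ labels 1 ν) :
    r x (x.1, start Y x) := by
  obtain ⟨e, k⟩ := x
  induction k with
  | zero => simp at hx
  | succ k ih =>
    by_cases hstep : Sum.inl (e, k + 1) ∈ Y
    · have hrel := hr.inl_mem_linksOf.1 (hY hstep)
      rw [← start_pred (hY.trans linksOf_subset_links) hstep]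
      exact hr.trans (hr.symm hrel) (ih (hr.left_mem hrel))
    · rw [start_eq_self hstep]
      exact hr.refl hx

theorem rel_of_linkRel (hr : IsNested ν r) (hY : Y ⊆ linksOf ν r) {x y : Label}
    (h : linkRel ν Y x y) : r x y := by
  obtain ⟨hx, hy, ⟨hxy, h⟩ | ⟨p, hp, hpx, hpy⟩⟩ := h
  · exact hr.trans (hr.rel_start hY hx) (hr.symm (h ▸ hxy ▸ hr.rel_start hY hy))
  · refine hr.trans (hpx ▸ hr.rel_start hY hx) (hr.trans ?_ (hpy ▸ hr.symm (hr.rel_start hY hy)))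
    exact (hr.inr_mem_linksOf.1 (hY hp)).1 _ _

theorem not_rel_start_pred (hr : IsNested ν r) (x : Label) :
    ¬r (x.1, start (linksOf ν r) x - 1) (x.1, start (linksOf ν r) x) := fun h =>
  inl_start_notMem linksOf_subset_links x (hr.inl_mem_linksOf.2 h)

theorem linkRel_linksOf_iff (hr : IsNested ν r) {x y : Label} :
    linkRel ν (linksOf ν r) x y ↔ r x y := by
  refine ⟨hr.rel_of_linkRel subset_rfl, fun h => ⟨hr.left_mem h, hr.right_mem h, ?_⟩⟩
  obtain ⟨e, i⟩ := x
  obtain ⟨f, j⟩ := y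
  have hi := hr.rel_start subset_rfl (hr.left_mem h)
  have hj := hr.rel_start subset_rfl (hr.right_mem h)
  have hij := hr.trans (hr.symm hi) (hr.trans h hj)
  have hsi := hr.not_rel_start_pred (e, i)
  have hsj := hr.not_rel_start_pred (f, j)
  by_cases hef : e = f
  · subst hef
    exact .inl ⟨rfl, hr.start_unique hij hsi hsj⟩
  · refine .inr ⟨Function.update (fun _ => start (linksOf ν r) (f, j)) e
      (start (linksOf ν r) (e, i)), hr.inr_mem_linksOf_of_rel hef ?_ ?_ ?_,
      by simp, by simp [Ne.symm hef]⟩ <;>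
      simpa [Ne.symm hef]

theorem rel_of_linksOf_subset_linksOf (hr : IsNested ν r) {r' : Label → Label → Prop}
    (hr' : IsNested ν r') (h : linksOf ν r ⊆ linksOf ν r') {x y : Label} (hxy : r x y) : r' x y :=
  hr'.rel_of_linkRel h (hr.linkRel_linksOf_iff.2 hxy)

end IsNested

end Nested

/-! ### Counting classes -/

section Roots

variable {ν : Bool → ℕ} {r : Label → Label → Prop} {Y : Finset Link}

/-- The far end of a link, when every class is rooted at its innermost point on the real axis or,
if there is none, on the imaginary axis. -/
def Link.child : Link → Label
  | .inl x => x
  | .inr p => (true, p true)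

/-- The label `x` is the root of its class, for the choice of roots explained at `Link.child`. -/
def IsRoot (r : Label → Label → Prop) (x : Label) : Prop :=
  ¬r x.pred x ∧ (x.1 = true → ∀ j, ¬r (false, j) x)

theorem injOn_child (hY : linkGraph.IsClique (Y : Set Link)) :
    Set.InjOn Link.child (Y : Set Link) := by
  rintro (x | p) hl (y | q) hl' h
  · exact congrArg _ h
  · obtain rfl : x = (true, q true) := h
    exact absurd rfl (linkGraph_adj_inl_inr.1 (hY hl hl' Sum.inl_ne_inr))
  · obtain rfl : (true, p true) = y := h
    exact absurd rfl (linkGraph_adj_inr_inl.1 (hY hl hl' Sum.inr_ne_inl))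
  · exact congrArg _ (eq_of_isClique_of_apply_eq hY hl hl' (congrArg Prod.snd h))

theorem child_mem_labels {l : Link} (hl : l ∈ links ν) : l.child ∈ labels 1 ν := by
  obtain x | p := l
  · have := inl_mem_links.1 hl
    exact mem_labels.2 ⟨by simp only [Link.child]; lia, this.2⟩
  · exact mem_labels.2 (inr_mem_links.1 hl true)

namespace IsNested

theorem exists_start (hr : IsNested ν r) {x : Label} (hx : x ∈ labels 1 ν) :
    ∃ s, r x (x.1, s) ∧ ¬r (x.1, s - 1) (x.1, s) :=
  ⟨_, hr.rel_start subset_rfl hx, hr.not_rel_start_pred x⟩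

theorem mem_image_child_linksOf_iff (hr : IsNested ν r) {x : Label} :
    x ∈ (linksOf ν r).image Link.child ↔ x ∈ labels 1 ν ∧ ¬IsRoot r x := by
  rw [mem_image]
  constructor
  · rintro ⟨l, hl, rfl⟩
    refine ⟨child_mem_labels (linksOf_subset_links hl), fun hroot => ?_⟩
    obtain x | p := l
    exacts [hroot.1 (hr.inl_mem_linksOf.1 hl), hroot.2 rfl _ ((hr.inr_mem_linksOf.1 hl).1 _ _)]
  · rintro ⟨-, hx⟩
    by_cases hpred : r x.pred x
    · exact ⟨.inl x, hr.inl_mem_linksOf.2 hpred, rfl⟩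
    obtain ⟨e, k⟩ := x
    obtain ⟨rfl, j, hj⟩ : e = true ∧ ∃ j, r (false, j) (e, k) := by
      simpa [IsRoot, hpred] using hx
    obtain ⟨s, hjs, hs⟩ := hr.exists_start (hr.left_mem hj)
    exact ⟨.inr fun g => cond g k s, hr.inr_mem_linksOf_of_rel Bool.false_ne_true
      (hr.trans (hr.symm hjs) hj) hs hpred, rfl⟩

theorem card_isRoot_add_card_linksOf [DecidablePred (IsRoot r)] (hr : IsNested ν r) :
    #{x ∈ labels 1 ν | IsRoot r x} + #(linksOf ν r) = ∑ e, ν e := by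
  have himage : (linksOf ν r).image Link.child = {x ∈ labels 1 ν | ¬IsRoot r x} := by
    ext x
    rw [hr.mem_image_child_linksOf_iff, mem_filter]
  rw [← card_image_of_injOn (injOn_child hr.isClique_linksOf), himage,
    card_filter_add_card_filter_not, card_labels]
  simp

theorem exists_isRoot (hr : IsNested ν r) {x : Label} (hx : x ∈ labels 1 ν) :
    ∃ y, r x y ∧ IsRoot r y := by
  obtain ⟨s, hxs, hs⟩ := hr.exists_start hx
  by_cases hroot : IsRoot r (x.1, s)
  · exact ⟨_, hxs, hroot⟩
  obtain ⟨-, j, hj⟩ : x.1 = true ∧ ∃ j, r (false, j) (x.1, s) := by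
    simpa [IsRoot, Label.pred, hs] using hroot
  obtain ⟨t, hjt, ht⟩ := hr.exists_start (hr.left_mem hj)
  exact ⟨_, hr.trans hxs (hr.trans (hr.symm hj) hjt), ht, fun h => absurd h Bool.false_ne_true⟩

theorem eq_of_isRoot (hr : IsNested ν r) {x y : Label} (hx : IsRoot r x) (hy : IsRoot r y)
    (hxy : r x y) : x = y := by
  obtain ⟨e, i⟩ := x
  obtain ⟨f, j⟩ := y
  cases e <;> cases f
  · exact congrArg _ (hr.start_unique hxy hx.1 hy.1)
  · exact absurd hxy (hy.2 rfl i)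
  · exact absurd (hr.symm hxy) (hx.2 rfl j)
  · exact congrArg _ (hr.start_unique hxy hx.1 hy.1)

end IsNested

end Roots

/-! ### Convex hulls of points on two axes -/

section Geometry

theorem segment_inter_segment_nonempty_of_nested {𝕜 E : Type*} [Field 𝕜] [LinearOrder 𝕜]
    [IsStrictOrderedRing 𝕜] [AddCommGroup E] [Module 𝕜 E] {a b c d : 𝕜} (ha : 0 < a) (hab : a ≤ b)
    (hd : 0 < d) (hdc : d ≤ c) (u v : E) :
    (segment 𝕜 (a • u) (c • v) ∩ segment 𝕜 (b • u) (d • v)).Nonempty := by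
  obtain rfl | hab' := hab.eq_or_lt
  · exact ⟨a • u, left_mem_segment .., left_mem_segment ..⟩
  have hD : 0 < c * (b - a) + a * (c - d) :=
    add_pos_of_pos_of_nonneg (mul_pos (hd.trans_le hdc) (sub_pos.2 hab'))
      (mul_nonneg ha.le (sub_nonneg.2 hdc))
  set D := c * (b - a) + a * (c - d)
  have : 0 < b - a := sub_pos.2 hab'
  have : 0 ≤ c - d := sub_nonneg.2 hdc
  have hb : 0 < b := ha.trans_le hab
  have hc : 0 < c := hd.trans_le hdc
  refine ⟨(a * b * (c - d) / D) • u + (c * d * (b - a) / D) • v,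
    ⟨b * (c - d) / D, d * (b - a) / D, by positivity, by positivity, ?_, ?_⟩,
    ⟨a * (c - d) / D, c * (b - a) / D, by positivity, by positivity, ?_, ?_⟩⟩
  · field_simp
    ring
  · simp only [smul_smul]
    congr 2 <;> ring
  · field_simp
    ring
  · simp only [smul_smul]
    congr 2 <;> ring

/-- The point with a given label. -/
noncomputable def pt (x : Label) : ℂ := (x.2 : ℝ) • cond x.1 Complex.I 1

theorem eq_of_pt_eq_pt {x y : Label} (hx : 1 ≤ x.2) (h : pt x = pt y) : x = y := by
  obtain ⟨e, i⟩ := x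
  obtain ⟨f, j⟩ := y
  cases e <;> cases f <;> simp_all [pt, Complex.ext_iff]

theorem disjoint_convexHull_image_pt_of_lt_of_le {S T : Set Label} {b : Bool → ℕ}
    (hb : ∀ e, 0 < b e) (hS : ∀ x ∈ S, x.2 < b x.1) (hT : ∀ y ∈ T, b y.1 ≤ y.2) :
    Disjoint (convexHull ℝ (pt '' S)) (convexHull ℝ (pt '' T)) := by
  let f : ℂ →ₗ[ℝ] ℝ := (b false : ℝ)⁻¹ • Complex.reLm + (b true : ℝ)⁻¹ • Complex.imLm
  have hf (x : Label) : f (pt x) = x.2 / b x.1 := by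
    obtain ⟨e, k⟩ := x
    cases e <;> simp [f, pt, div_eq_inv_mul]
  have hb' (e) : (0 : ℝ) < b e := Nat.cast_pos.2 (hb e)
  have hlt : convexHull ℝ (pt '' S) ⊆ f ⁻¹' Set.Iio 1 := by
    refine convexHull_min ?_ ((convex_Iio 1).linear_preimage f)
    rintro _ ⟨x, hx, rfl⟩
    simpa [hf, div_lt_one (hb' _)] using hS x hx
  have hle : convexHull ℝ (pt '' T) ⊆ f ⁻¹' Set.Ici 1 := by
    refine convexHull_min ?_ ((convex_Ici 1).linear_preimage f)
    rintro _ ⟨y, hy, rfl⟩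
    simpa [hf, one_le_div (hb' _)] using hT y hy
  exact (Disjoint.preimage f (Set.Iio_disjoint_Ici le_rfl)).mono hlt hle

theorem disjoint_convexHull_image_pt {S T : Set Label} (hS : S.Finite) (hT : ∀ y ∈ T, 0 < y.2)
    (hST : ∀ e i j, (e, i) ∈ S → (e, j) ∈ T → i < j) :
    Disjoint (convexHull ℝ (pt '' S)) (convexHull ℝ (pt '' T)) := by
  refine disjoint_convexHull_image_pt_of_lt_of_le
    (b := fun e => {x ∈ hS.toFinset | x.1 = e}.sup Prod.snd + 1) (fun e => Nat.succ_pos _)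
    (fun x hx => ?_) fun y hy => ?_
  · exact Nat.lt_succ_of_le (le_sup (f := Prod.snd) (mem_filter.2 ⟨hS.mem_toFinset.2 hx, rfl⟩))
  · refine Nat.succ_le_of_lt ((Finset.sup_lt_iff (hT y hy)).2 fun x hx => ?_)
    obtain ⟨hxS, hxy⟩ := mem_filter.1 hx
    exact hST y.1 x.2 y.2 (hxy ▸ hS.mem_toFinset.1 hxS) hy

theorem IsNested.forall_lt_or_forall_lt {ν : Bool → ℕ} {r : Label → Label → Prop}
    (hr : IsNested ν r) {x y : Label} (hxy : ¬r x y) :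
    (∀ e i j, r x (e, i) → r y (e, j) → i < j) ∨ ∀ e i j, r y (e, i) → r x (e, j) → i < j := by
  by_contra! h
  obtain ⟨⟨e, i, j, hxi, hyj, hji⟩, f, j', i', hyj', hxi', hij'⟩ := h
  have hnested := hr.nested (hr.trans (hr.symm hxi') hxi) (hr.trans (hr.symm hyj') hyj) hij' hji
  exact hxy (hr.trans hxi' (hr.trans hnested (hr.symm hyj')))

end Geometry

/-! ### Noncrossing partitions of the cone configuration -/

section NoncrossingPartitions

theorem eq_of_le_of_card_parts_le {α : Type*} [DecidableEq α] {s : Finset α}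
    {P Q : Finpartition s} (hPQ : P ≤ Q) (hcard : #P.parts ≤ #Q.parts) : P = Q := by
  choose! f hfP hfle using fun b (hb : b ∈ Q.parts) => Finpartition.exists_le_of_le hPQ hb
  have hinj : Set.InjOn f (Q.parts : Set (Finset α)) := fun b hb c hc hbc => by
    obtain ⟨z, hz⟩ := P.nonempty_of_mem_parts (hfP b hb)
    exact Q.eq_of_mem_parts hb hc (hfle b hb hz) (hfle c hc (hbc ▸ hz))
  have himage : Q.parts.image f = P.parts :=
    eq_of_subset_of_card_le (image_subset_iff.2 hfP) (by rwa [card_image_of_injOn hinj])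
  refine hPQ.antisymm fun q hq => ⟨f q, hfP q hq, fun x hx => ?_⟩
  obtain ⟨p, hp, hxp⟩ := P.exists_mem (Q.subset hq hx)
  obtain ⟨q', hq', rfl⟩ := mem_image.1 (himage ▸ hp)
  rwa [Q.eq_of_mem_parts hq hq' hx (hfle q' hq' hxp)]

variable {m n : ℕ}

/-- The numbers of points of the configuration on the real and on the imaginary axis. -/
def axisLength (m n : ℕ) (e : Bool) : ℕ := cond e n m

theorem mem_uconfig {z : ℂ} :
    z ∈ Uconfig m n ↔ ∃ x ∈ labels 1 (axisLength m n), pt x = z := by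
  simp [Uconfig, axisLength, pt]

theorem pt_mem_uconfig {x : Label} : pt x ∈ Uconfig m n ↔ x ∈ labels 1 (axisLength m n) := by
  rw [mem_uconfig]
  refine ⟨?_, fun hx => ⟨x, hx, rfl⟩⟩
  rintro ⟨y, hy, hyx⟩
  rwa [← eq_of_pt_eq_pt (mem_labels.1 hy).1 hyx]

/-- The relation on labels that the corresponding points lie in a common block of `P`. -/
def blockRel (P : Finpartition (Uconfig m n)) (x y : Label) : Prop := pt y ∈ P.part (pt x)

variable {P Q : Finpartition (Uconfig m n)}

theorem part_eq_of_blockRel {x y : Label} (h : blockRel P x y) : P.part (pt y) = P.part (pt x) :=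
  P.part_eq_of_mem (P.part_mem.2 (P.part_nonempty.1 ⟨_, h⟩)) h

theorem exists_part_pt_eq {B : Finset ℂ} (hB : B ∈ P.parts) :
    ∃ x ∈ labels 1 (axisLength m n), P.part (pt x) = B := by
  obtain ⟨z, hz⟩ := P.nonempty_of_mem_parts hB
  obtain ⟨x, hx, rfl⟩ := mem_uconfig.1 (P.subset hB hz)
  exact ⟨x, hx, P.part_eq_of_mem hB hz⟩

theorem coe_part_pt_eq (P : Finpartition (Uconfig m n)) (x : Label) :
    (P.part (pt x) : Set ℂ) = pt '' {y | blockRel P x y} := by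
  refine Set.Subset.antisymm (fun z hz => ?_) (Set.image_subset_iff.2 fun y hy => hy)
  obtain ⟨y, -, rfl⟩ := mem_uconfig.1 (P.part_subset _ hz)
  exact ⟨y, hz, rfl⟩

theorem isNested_blockRel (hP : IsNoncrossing P) : IsNested (axisLength m n) (blockRel P) where
  left_mem h := pt_mem_uconfig.1 (P.part_nonempty.1 ⟨_, h⟩)
  refl hx := P.mem_part (pt_mem_uconfig.2 hx)
  symm h := (part_eq_of_blockRel h).ge (P.mem_part (P.part_nonempty.1 ⟨_, h⟩))
  trans h h' := (part_eq_of_blockRel h).le h'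
  nested := by
    intro e f i j i' j' h h' hij hji
    have hi := P.part_nonempty.1 ⟨_, h⟩
    have hj := P.part_nonempty.1 ⟨_, h'⟩
    have hpos {x : Label} (hx : pt x ∈ Uconfig m n) : (0 : ℝ) < x.2 :=
      Nat.cast_pos.2 (mem_labels.1 (pt_mem_uconfig.1 hx)).1
    obtain ⟨z, hz, hz'⟩ := segment_inter_segment_nonempty_of_nested (hpos hi)
      (Nat.cast_le.2 hij) (hpos (P.part_subset _ h')) (Nat.cast_le.2 hji)
      (cond e Complex.I 1) (cond f Complex.I 1)
    have hpart : P.part (pt (e, i)) = P.part (pt (e, j)) := by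
      by_contra hne
      exact Set.disjoint_left.1 (hP (P.part_mem.2 hi) (P.part_mem.2 hj) hne)
        (segment_subset_convexHull (P.mem_part hi) h hz)
        (segment_subset_convexHull (P.mem_part hj) h' hz')
    exact hpart.ge (P.mem_part hj)

theorem isNoncrossing_of_isNested_blockRel (hP : IsNested (axisLength m n) (blockRel P)) :
    IsNoncrossing P := by
  have hfinite (x) : {y | blockRel P x y}.Finite :=
    (labels 1 (axisLength m n)).finite_toSet.subset fun y hy => hP.right_mem hy
  have hpos (x) : ∀ y ∈ {y | blockRel P x y}, 0 < y.2 :=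
    fun y hy => (mem_labels.1 (hP.right_mem hy)).1
  intro B hB B' hB' hne
  obtain ⟨x, -, rfl⟩ := exists_part_pt_eq hB
  obtain ⟨y, -, rfl⟩ := exists_part_pt_eq hB'
  have hxy : ¬blockRel P x y := fun h => hne (P.part_eq_of_mem hB h).symm
  rw [coe_part_pt_eq, coe_part_pt_eq]
  obtain h | h := hP.forall_lt_or_forall_lt hxy
  · exact disjoint_convexHull_image_pt (hfinite x) (hpos y) h
  · exact (disjoint_convexHull_image_pt (hfinite y) (hpos x) h).symm

theorem exists_blockRel_eq {r : Label → Label → Prop} (hr : IsNested (axisLength m n) r) :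
    ∃ P : Finpartition (Uconfig m n), blockRel P = r := by
  classical
  let cls (z : ℂ) : Set Label := {y | ∃ x, pt x = z ∧ r x y}
  have cls_pt (x) : cls (pt x) = {y | r x y} := by
    ext y
    refine ⟨?_, fun h => ⟨x, rfl, h⟩⟩
    rintro ⟨x', hx', h⟩
    rwa [eq_of_pt_eq_pt (mem_labels.1 (hr.left_mem h)).1 hx'] at h
  refine ⟨.ofSetSetoid (.ker cls) _, funext₂ fun x y => propext ?_⟩
  rw [blockRel, Finpartition.mem_part_ofSetSetoid_iff_rel, Setoid.ker_def, cls_pt, cls_pt,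
    pt_mem_uconfig, pt_mem_uconfig, Set.ext_iff]
  exact ⟨fun ⟨_, hy, h⟩ => (h y).2 (hr.refl hy), fun h => ⟨hr.left_mem h, hr.right_mem h,
    fun z => ⟨hr.trans (hr.symm h), hr.trans h⟩⟩⟩

theorem le_of_blockRel_imp (h : ∀ x y, blockRel P x y → blockRel Q x y) : P ≤ Q := by
  intro B hB
  obtain ⟨x, hx, rfl⟩ := exists_part_pt_eq hB
  refine ⟨Q.part (pt x), Q.part_mem.2 (pt_mem_uconfig.2 hx), ?_⟩
  change P.part (pt x) ⊆ Q.part (pt x)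
  rw [← coe_subset, coe_part_pt_eq, coe_part_pt_eq]
  exact Set.image_mono fun y => h x y

theorem card_parts_eq_card_isRoot [DecidablePred (IsRoot (blockRel P))]
    (hP : IsNested (axisLength m n) (blockRel P)) :
    #P.parts = #{x ∈ labels 1 (axisLength m n) | IsRoot (blockRel P) x} := by
  refine (card_bij (fun x _ => P.part (pt x)) (fun x hx => ?_) (fun x hx y hy hxy => ?_)
    fun B hB => ?_).symm
  · exact P.part_mem.2 (pt_mem_uconfig.2 (mem_filter.1 hx).1)
  · obtain ⟨-, hx⟩ := mem_filter.1 hx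
    obtain ⟨hymem, hy⟩ := mem_filter.1 hy
    exact hP.eq_of_isRoot hx hy (hxy ▸ hP.refl hymem : pt y ∈ P.part (pt x))
  · obtain ⟨x, hx, rfl⟩ := exists_part_pt_eq hB
    obtain ⟨y, hxy, hy⟩ := hP.exists_isRoot hx
    exact ⟨y, mem_filter.2 ⟨hP.right_mem hxy, hy⟩, P.part_eq_of_mem hB hxy⟩

namespace NC

/-- The set of links of a noncrossing partition of the cone configuration. -/
noncomputable def code (π : NC (Uconfig m n)) : Finset Link :=
  linksOf (axisLength m n) (blockRel π.1)

theorem card_parts_add_card_code (π : NC (Uconfig m n)) : #π.parts + #π.code = m + n := by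
  classical
  have hπ := isNested_blockRel π.2
  rw [NC.parts, card_parts_eq_card_isRoot hπ, NC.code, hπ.card_isRoot_add_card_linksOf,
    Fintype.sum_bool]
  exact add_comm n m

theorem le_of_code_subset {π σ : NC (Uconfig m n)} (h : π.code ⊆ σ.code) : π ≤ σ :=
  le_of_blockRel_imp fun _ _ =>
    (isNested_blockRel π.2).rel_of_linksOf_subset_linksOf (isNested_blockRel σ.2) h

theorem code_injective : (code (m := m) (n := n)).Injective := fun _ _ h =>
  (le_of_code_subset h.le).antisymm (le_of_code_subset h.ge)

theorem covBy_of_code_covBy_code {π σ : NC (Uconfig m n)} (h : π.code ⋖ σ.code) : π ⋖ σ := by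
  have hcard := Nat.covBy_iff_add_one_eq.1 h.card_finset
  have hπ := π.card_parts_add_card_code
  have hσ := σ.card_parts_add_card_code
  refine ⟨(le_of_code_subset h.le).lt_of_ne (by rintro rfl; exact h.ne rfl), fun τ hπτ hτσ => ?_⟩
  have card_parts_lt {ρ τ : NC (Uconfig m n)} (hlt : ρ < τ) : #τ.parts < #ρ.parts :=
    lt_of_not_ge fun hle => hlt.ne (Subtype.ext (eq_of_le_of_card_parts_le hlt.le hle))
  have := card_parts_lt hπτ
  have := card_parts_lt hτσ
  lia

theorem setOf_isClique_subset_range_code :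
    {Y | Y ⊆ links (axisLength m n) ∧ linkGraph.IsClique (Y : Set Link)} ⊆
      Set.range (code (m := m) (n := n)) := by
  rintro Y ⟨hYlinks, hY⟩
  obtain ⟨P, hP⟩ := exists_blockRel_eq (isNested_linkRel (ν := axisLength m n) hY)
  refine ⟨⟨P, isNoncrossing_of_isNested_blockRel (hP ▸ isNested_linkRel hY)⟩, ?_⟩
  rw [code, hP, linksOf_linkRel hYlinks hY]

theorem code_mem_setOf_isClique (π : NC (Uconfig m n)) :
    π.code ∈ {Y : Finset Link | Y ⊆ links (axisLength m n) ∧ linkGraph.IsClique (Y : Set Link)} :=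
  ⟨linksOf_subset_links, (isNested_blockRel π.2).isClique_linksOf⟩

end NC

end NoncrossingPartitions

/-- For all `m, n ≥ 0`, `NC(U_{m,n})` admits a symmetric chain decomposition: it can be
partitioned into saturated chains, each satisfying `ρ(min C) + ρ(max C) = (m + n) - 1`,
where `ρ(π) = (m + n) - #blocks(π)`. -/
theorem nc_U_symmetric_chain_decomposition (m n : ℕ) :
    ∃ chains : Set (List (NC (Uconfig m n))),
      [] ∉ chains ∧
      (∀ x : NC (Uconfig m n), ∃! l, l ∈ chains ∧ x ∈ l) ∧
      (∀ l ∈ chains, List.Chain' (· ⋖ ·) l) ∧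
      ∀ l ∈ chains, ∀ h : l ≠ [],
        ((m + n) - (l.head h).parts.card) +
            ((m + n) - (l.getLast h).parts.card) = (m + n) - 1 := by
  obtain ⟨C, hC⟩ := hasSymmChainDecomp_cliques_linkGraph (axisLength m n)
  have h := hC.comap NC.code_injective NC.setOf_isClique_subset_range_code
    fun _ _ => NC.covBy_of_code_covBy_code
  have hrank (π : NC (Uconfig m n)) : (m + n) - #π.parts = #π.code := by
    rw [← π.card_parts_add_card_code, Nat.add_sub_cancel_left]
  refine ⟨_, h.nil_notMem, fun π => h.existsUnique π π.code_mem_setOf_isClique, h.isChain,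
    fun l hl hne => ?_⟩
  rw [hrank, hrank]
  exact h.head_add_getLast l hl hne
end

section
/- For all m, n ≥ 0, the poset NC(V_{m,n}) admits a symmetric chain decomposition: its underlying set can be partitioned into saturated chains C (each consecutive pair of elements of C is a covering pair in NC(V_{m,n})) such that for each chain C, ρ(min C) + ρ(max C) = (m + n + 1) − 1, where ρ(π) = (m + n + 1) − (number of blocks of π). -/
open Finset

/-- The closed cone configuration `V_{m,n} = U_{m,n} ∪ {0}`. -/
noncomputable def Vconfig (m n : ℕ) : Finset ℂ := insert 0 (Uconfig m n)

/-
By convexity, a block of a noncrossing partition meets each of the two rays in a run of consecutive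
points. Record the partition by the set `T` of the points that share a block with their predecessor
on their ray, and by the matching `K` across the rays that pairs the first points of the two runs of
a block. The matching is again noncrossing, and `T` consists of points other than the origin that
`K` leaves unmatched. Conversely, any set `T` of such points occurs: joining them to their
predecessors creates no crossing.

Hence `NC(V_{m,n})` is a disjoint union of Boolean lattices, one for each noncrossing matching `K`.
Adding a point to `T` merges two blocks, hence raises the rank by one. If `K` has `k` pairs, then
there are `m + n - 2k` points to choose from, and the ranks run from `k` to `m + n - k`: each of
these Boolean lattices is centred in `NC(V_{m,n})`. The symmetric chain decompositions of the
Boolean lattices due to de Bruijn, Tengbergen and Kruyswijk therefore form one of `NC(V_{m,n})`.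
-/

section SymmetricChains

variable {X : Type*}

/-- `C` is a symmetric chain decomposition, with respect to the rank function `ρ` and the height
`N`, of the preorder `X`. Chains are encoded as nonempty lists whose consecutive entries are
covering pairs. -/
structure IsSymmetricChainDecomposition [Preorder X] (ρ : X → ℕ) (N : ℕ)
    (C : Set (List X)) : Prop where
  nil_notMem : [] ∉ C
  existsUnique_mem : ∀ x, ∃! l, l ∈ C ∧ x ∈ l
  isChain : ∀ l ∈ C, l.IsChain (· ⋖ ·)
  head_add_getLast : ∀ l ∈ C, ∀ h : l ≠ [], ρ (l.head h) + ρ (l.getLast h) = N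

-- The rank condition says that the fibres are centred in `X`: doubled ranks, measured from the
-- middle, are preserved.
theorem IsSymmetricChainDecomposition.iUnion_image_map [Preorder X] {κ : Type*}
    {Y : κ → Type*} [∀ k, Preorder (Y k)] {σ : ∀ k, Y k → ℕ} {M : κ → ℕ} {C : ∀ k, Set (List (Y k))}
    (hC : ∀ k, IsSymmetricChainDecomposition (σ k) (M k) (C k)) {ρ : X → ℕ} {N : ℕ}
    {f : ∀ k, Y k → X} (hf : Function.Bijective fun y : Σ k, Y k => f y.1 y.2)
    (hcov : ∀ k y y', y ⋖ y' → f k y ⋖ f k y')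
    (hρ : ∀ k y, 2 * ρ (f k y) + M k = 2 * σ k y + N) :
    IsSymmetricChainDecomposition ρ N (⋃ k, List.map (f k) '' C k) where
  nil_notMem h := by
    simp only [Set.mem_iUnion, Set.mem_image, List.map_eq_nil_iff] at h
    obtain ⟨k, _, hl, rfl⟩ := h
    exact (hC k).nil_notMem hl
  existsUnique_mem x := by
    obtain ⟨⟨k, y⟩, rfl⟩ := hf.surjective x
    obtain ⟨l, ⟨hl, hy⟩, huniq⟩ := (hC k).existsUnique_mem y
    refine ⟨l.map (f k), ⟨Set.mem_iUnion.2 ⟨k, l, hl, rfl⟩, List.mem_map_of_mem hy⟩, ?_⟩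
    rintro _ ⟨hL, hx⟩
    obtain ⟨k', l', hl', rfl⟩ := Set.mem_iUnion.1 hL
    obtain ⟨y', hy', hyy'⟩ := List.mem_map.1 hx
    cases hf.injective (a₁ := ⟨k', y'⟩) (a₂ := ⟨k, y⟩) hyy'
    rw [huniq l' ⟨hl', hy'⟩]
  isChain L hL := by
    obtain ⟨k, l, hl, rfl⟩ := Set.mem_iUnion.1 hL
    exact List.isChain_map_of_isChain _ (hcov k) ((hC k).isChain l hl)
  head_add_getLast L hL h := by
    obtain ⟨k, l, hl, rfl⟩ := Set.mem_iUnion.1 hL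
    have hne : l ≠ [] := by simpa using h
    have hsum := (hC k).head_add_getLast l hl hne
    have hhead := hρ k (l.head hne)
    have hlast := hρ k (l.getLast hne)
    rw [List.head_map, List.getLast_map]
    omega

/-- The chains into which de Bruijn, Tengbergen and Kruyswijk cut the product of the chain `l` with
`Bool`: the hook running along `l × {false}` and up its last edge, and the remainder of `l × {true}`
if that is nonempty. -/
def hookChains (l : List X) : Set (List (X × Bool)) :=
  {L | ∃ i z, l = i ++ [z] ∧ (L = l.map (·, false) ++ [(z, true)] ∨
    i ≠ [] ∧ L = i.map (·, true))}

theorem nil_notMem_hookChains (l : List X) : [] ∉ hookChains l := by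
  rintro ⟨i, z, -, h | ⟨hi, h⟩⟩
  · simp at h
  · exact hi (List.map_eq_nil_iff.1 h.symm)

theorem mem_of_mem_hookChains {l : List X} {L : List (X × Bool)}
    (hL : L ∈ hookChains l) {p : X × Bool} (hp : p ∈ L) : p.1 ∈ l := by
  obtain ⟨i, z, rfl, rfl | ⟨-, rfl⟩⟩ := hL <;> grind

theorem existsUnique_mem_hookChains {l : List X} (hl : l.Nodup) {x : X} (hx : x ∈ l)
    (b : Bool) : ∃! L, L ∈ hookChains l ∧ (x, b) ∈ L := by
  obtain ⟨i, z, rfl⟩ := List.eq_nil_or_concat' l |>.resolve_left (List.ne_nil_of_mem hx)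
  have hz : z ∉ i := by grind
  by_cases h : b = true ∧ x ≠ z
  · have hxi : x ∈ i := by grind
    refine ⟨i.map (·, true), ⟨⟨i, z, rfl, .inr ⟨List.ne_nil_of_mem hxi, rfl⟩⟩, by grind⟩, ?_⟩
    rintro L ⟨⟨i', z', hi, hL⟩, hxL⟩
    obtain ⟨rfl, rfl⟩ : i = i' ∧ z = z' := List.append_singleton_inj.1 hi
    obtain rfl | ⟨-, rfl⟩ := hL
    · simp [h] at hxL
    · rfl
  · refine ⟨(i ++ [z]).map (·, false) ++ [(z, true)],
      ⟨⟨i, z, rfl, .inl rfl⟩, by cases b <;> grind⟩, ?_⟩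
    rintro L ⟨⟨i', z', hi, hL⟩, hxL⟩
    obtain ⟨rfl, rfl⟩ : i = i' ∧ z = z' := List.append_singleton_inj.1 hi
    obtain rfl | ⟨-, rfl⟩ := hL
    · rfl
    · cases b <;> grind

variable [PartialOrder X]

theorem isChain_covBy_of_mem_hookChains {l : List X} (hl : l.IsChain (· ⋖ ·))
    {L : List (X × Bool)} (hL : L ∈ hookChains l) : L.IsChain (· ⋖ ·) := by
  have hmap (b : Bool) {l' : List X} (hl' : l'.IsChain (· ⋖ ·)) :
      (l'.map (·, b)).IsChain (· ⋖ ·) :=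
    List.isChain_map_of_isChain _ (fun _ _ h => Prod.mk_covBy_mk_iff_left.2 h) hl'
  obtain ⟨i, z, rfl, rfl | ⟨-, rfl⟩⟩ := hL
  · refine (hmap false hl).append (.singleton _) ?_
    simp [Prod.mk_covBy_mk_iff_right, Bool.covBy_iff]
  · exact hmap true (List.isChain_append.1 hl).1

namespace IsSymmetricChainDecomposition

variable {ρ : X → ℕ} {N : ℕ}

theorem nodup {C : Set (List X)} (hC : IsSymmetricChainDecomposition ρ N C) {l : List X}
    (hl : l ∈ C) : l.Nodup :=
  ((hC.isChain l hl).imp fun _ _ h => h.lt).sortedLT.pairwise.nodup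

theorem biUnion_hookChains {C : Set (List X)} (hρ : ∀ x y, x ⋖ y → ρ y = ρ x + 1)
    (hC : IsSymmetricChainDecomposition ρ N C) :
    IsSymmetricChainDecomposition (fun p : X × Bool => ρ p.1 + p.2.toNat) (N + 1)
      (⋃ l ∈ C, hookChains l) where
  nil_notMem := by simp [nil_notMem_hookChains]
  existsUnique_mem := by
    rintro ⟨x, b⟩
    obtain ⟨l, ⟨hl, hx⟩, hl_unique⟩ := hC.existsUnique_mem x
    obtain ⟨L, ⟨hL, hxL⟩, hL_unique⟩ := existsUnique_mem_hookChains (hC.nodup hl) hx b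
    refine ⟨L, ⟨Set.mem_biUnion hl hL, hxL⟩, ?_⟩
    rintro L' ⟨hL', hxL'⟩
    obtain ⟨l', hl', hL'⟩ := Set.mem_iUnion₂.1 hL'
    obtain rfl := hl_unique l' ⟨hl', mem_of_mem_hookChains hL' hxL'⟩
    exact hL_unique L' ⟨hL', hxL'⟩
  isChain L hL := by
    obtain ⟨l, hl, hL⟩ := Set.mem_iUnion₂.1 hL
    exact isChain_covBy_of_mem_hookChains (hC.isChain l hl) hL
  head_add_getLast L hL h := by
    obtain ⟨l, hl, i, z, rfl, rfl | ⟨hi, rfl⟩⟩ := Set.mem_iUnion₂.1 hL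
    · have hsum := hC.head_add_getLast _ hl (by simp)
      cases i <;> simp_all <;> omega
    · have hsum := hC.head_add_getLast _ hl (by simp)
      have hcov : i.getLast hi ⋖ z :=
        (List.isChain_append.1 (hC.isChain _ hl)).2.2 _ (List.getLast_mem_getLast? hi) z (by simp)
      have := hρ _ _ hcov
      rw [List.head_append_of_ne_nil hi, List.getLast_append_singleton] at hsum
      simp only [List.head_map, List.getLast_map, Bool.toNat_true]
      omega

end IsSymmetricChainDecomposition

/-- Subsets of `insert a S`, split according to whether they contain the new point `a`. -/
def iicInsertOrderIso {α : Type*} [DecidableEq α] {a : α} {S : Finset α} (ha : a ∉ S) :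
    Set.Iic S × Bool ≃o Set.Iic (insert a S) where
  toFun p := ⟨if p.2 then insert a p.1.1 else p.1.1, by
    have := p.1.2
    simp only [Set.mem_Iic] at this ⊢
    split_ifs <;> grind⟩
  invFun T := (⟨T.1.erase a, by have := T.2; simp only [Set.mem_Iic] at this ⊢; grind⟩, a ∈ T.1)
  left_inv := by
    rintro ⟨⟨T, hT⟩, b⟩
    have : a ∉ T := fun h => ha (hT h)
    cases b <;> simp [this]
  right_inv := by
    rintro ⟨T, hT⟩
    by_cases h : a ∈ T <;> simp [h]
  map_rel_iff' := by
    rintro ⟨⟨T, hT⟩, b⟩ ⟨⟨T', hT'⟩, b'⟩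
    have h : a ∉ T := fun h => ha (hT h)
    have h' : a ∉ T' := fun h => ha (hT' h)
    cases b <;> cases b' <;> simp [subset_insert_iff_of_notMem, insert_subset_iff, h, h']

theorem card_eq_card_add_one_of_covBy_Iic {α : Type*} {S : Finset α} {T T' : Set.Iic S}
    (h : T ⋖ T') : #T'.1 = #T.1 + 1 := by
  refine (Nat.covBy_iff_add_one_eq.1 (CovBy.card_finset ?_)).symm
  exact (Set.OrdConnected.apply_covBy_apply_iff (OrderEmbedding.subtype (· ∈ Set.Iic S))
    (by rw [OrderEmbedding.coe_subtype, Subtype.range_coe]; exact Set.ordConnected_Iic)).2 h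

theorem exists_isSymmetricChainDecomposition_Iic_finset {α : Type*} (S : Finset α) :
    ∃ C, IsSymmetricChainDecomposition (fun T : Set.Iic S => #T.1) #S C := by
  classical
  induction S using Finset.induction with
  | empty =>
    refine ⟨{[⟨∅, Set.mem_Iic.2 le_rfl⟩]}, by simp, fun ⟨T, hT⟩ => ?_, by simp, by simp⟩
    obtain rfl := Finset.subset_empty.1 hT
    exact ⟨_, ⟨rfl, by simp⟩, fun _ h => h.1⟩
  | insert a S ha ih =>
    obtain ⟨C, hC⟩ := ih
    let e := iicInsertOrderIso ha
    have hρ (T : Set.Iic S) (b : Bool) : #(e (T, b)).1 = #T.1 + b.toNat := by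
      have : a ∉ T.1 := fun h => ha (T.2 h)
      cases b <;> simp [e, iicInsertOrderIso, this]
    refine ⟨_, .iUnion_image_map (κ := Unit)
      (fun _ => hC.biUnion_hookChains fun _ _ => card_eq_card_add_one_of_covBy_Iic)
      (f := fun _ => e)
      (e.bijective.comp (Equiv.uniqueSigma fun _ : Unit => Set.Iic S × Bool).bijective)
      (fun _ _ _ => (apply_covBy_apply_iff e).2) fun _ p => ?_⟩
    rw [hρ, card_insert_of_notMem ha]

end SymmetricChains

section Finpartition

variable {α : Type*} [DecidableEq α] {s : Finset α} {P Q : Finpartition s}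

theorem card_parts_lt_of_lt (h : P < Q) : #Q.parts < #P.parts := by
  choose! f hf hf_le using fun b => P.exists_le_of_le (b := b) h.le
  have hinj : Set.InjOn f Q.parts := fun b hb c hc hbc => by
    obtain ⟨x, hx⟩ := P.nonempty_of_mem_parts (hf b hb)
    exact Q.eq_of_mem_parts hb hc (hf_le b hb hx) (hf_le c hc (hbc ▸ hx))
  rw [← card_image_of_injOn hinj]
  refine card_lt_card ((image_subset_iff.2 hf).ssubset_of_ne fun himage => h.not_ge ?_)
  -- If every part of `P` is some `f b ⊆ b`, then `f b` is the only part of `P` meeting `b`.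
  intro b hb
  refine ⟨f b, hf b hb, fun x hx => ?_⟩
  obtain ⟨c, hc, hxc⟩ := P.exists_mem (Q.le hb hx)
  obtain ⟨b', hb', rfl⟩ := mem_image.1 (himage ▸ hc)
  rwa [Q.eq_of_mem_parts hb hb' hx (hf_le b' hb' hxc)]

theorem card_parts_eq_of_existsUnique {R : Finset α} (hR : R ⊆ s)
    (h : ∀ b ∈ P.parts, ∃! x, x ∈ R ∧ x ∈ b) : #P.parts = #R := by
  refine (card_bij (fun x _ => P.part x) (fun x hx => P.part_mem.2 (hR hx)) ?_ ?_).symm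
  · intro x hx y hy hxy
    refine (h _ (P.part_mem.2 (hR hx))).unique ⟨hx, P.mem_part (hR hx)⟩ ⟨hy, ?_⟩
    rw [hxy]
    exact P.mem_part (hR hy)
  · intro b hb
    obtain ⟨x, ⟨hx, hxb⟩, -⟩ := h b hb
    exact ⟨x, hx, P.part_eq_of_mem hb hxb⟩

end Finpartition

namespace ConeConfig

/-- `RayLE a b` means that `a` lies between `0` and `b`. Integers index the points of the cone
configurations: `p ≥ 0` stands for the point `p` of the real axis, `p ≤ 0` for the point `-p * i` of
the imaginary axis, so that `RayLE a b` compares the positions of two points of one ray. -/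
def RayLE (a b : ℤ) : Prop := (0 ≤ a ∧ a ≤ b) ∨ (b ≤ a ∧ a ≤ 0)

namespace RayLE

variable {a b c : ℤ}

theorem refl (a : ℤ) : RayLE a a := by unfold RayLE; omega

theorem trans (h : RayLE a b) (h' : RayLE b c) : RayLE a c := by unfold RayLE at *; omega

theorem antisymm (h : RayLE a b) (h' : RayLE b a) : a = b := by unfold RayLE at *; omega

theorem eq_zero (h : RayLE a 0) : a = 0 := by unfold RayLE at h; omega

theorem zero_left (a : ℤ) : RayLE 0 a := by unfold RayLE; omega

theorem natAbs_lt (h : RayLE a b) (hne : a ≠ b) : a.natAbs < b.natAbs := by unfold RayLE at h; omega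

theorem mem_Icc {m n : ℕ} (h : RayLE a b) (hb : b ∈ Icc (-n : ℤ) m) : a ∈ Icc (-n : ℤ) m := by
  rw [Finset.mem_Icc] at *; unfold RayLE at h; omega

theorem comparable_of_lt_of_lt (hab : a < b) (hbc : b < c) :
    RayLE a b ∨ RayLE b a ∨ RayLE b c ∨ RayLE c b := by
  unfold RayLE; omega

theorem sign_mul_rayLE (k : ℕ) (h : k ≤ a.natAbs) : RayLE (a.sign * k) a := by
  unfold RayLE
  rcases lt_trichotomy a 0 with ha | rfl | ha
  · rw [Int.sign_eq_neg_one_of_neg ha]; omega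
  · simp
  · rw [Int.sign_eq_one_of_pos ha]; omega

theorem sign_mul_rayLE_sign_mul {j k : ℕ} (h : j ≤ k) (a : ℤ) :
    RayLE (a.sign * j) (a.sign * k) := by
  unfold RayLE
  rcases lt_trichotomy a 0 with ha | rfl | ha
  · rw [Int.sign_eq_neg_one_of_neg ha]; omega
  · simp
  · rw [Int.sign_eq_one_of_pos ha]; omega

theorem eq_sign_mul (h : RayLE a b) : a = b.sign * a.natAbs := by
  unfold RayLE at h
  rcases lt_trichotomy b 0 with hb | rfl | hb
  · rw [Int.sign_eq_neg_one_of_neg hb]; omega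
  · rw [Int.sign_zero]; omega
  · rw [Int.sign_eq_one_of_pos hb]; omega

end RayLE

section Matchings

/-- The last index on the way from the origin to `p` that does not belong to `T`, provided that `T`
does not contain the origin. If `T` is the set of indices joined to their predecessors, then this is
where the run through `p` starts. -/
def runStart (T : Finset ℤ) (p : ℤ) : ℤ :=
  p.sign * Nat.findGreatest (fun k => p.sign * k ∉ T) p.natAbs

section RunStart

variable {T T' : Finset ℤ} {p q : ℤ}

theorem runStart_rayLE (T : Finset ℤ) (p : ℤ) : RayLE (runStart T p) p :=
  .sign_mul_rayLE _ (Nat.findGreatest_le _)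

theorem runStart_notMem (hT : 0 ∉ T) (p : ℤ) : runStart T p ∉ T :=
  Nat.findGreatest_spec (P := fun k : ℕ => p.sign * k ∉ T) (Nat.zero_le _) (by simpa using hT)

theorem rayLE_runStart (h : RayLE q p) (hq : q ∉ T) : RayLE q (runStart T p) := by
  have hle : q.natAbs ≤ p.natAbs := by unfold RayLE at h; omega
  rw [h.eq_sign_mul] at hq ⊢
  exact .sign_mul_rayLE_sign_mul (Nat.le_findGreatest hle hq) p

theorem runStart_eq_self (h : p ∉ T) : runStart T p = p :=
  (runStart_rayLE T p).antisymm (rayLE_runStart (.refl p) h)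

theorem runStart_mono (hT : 0 ∉ T) (h : RayLE p q) : RayLE (runStart T p) (runStart T q) :=
  rayLE_runStart ((runStart_rayLE T p).trans h) (runStart_notMem hT p)

theorem runStart_runStart_of_subset (hT' : 0 ∉ T') (h : T ⊆ T') (p : ℤ) :
    runStart T' (runStart T p) = runStart T' p :=
  (runStart_mono hT' (runStart_rayLE T p)).antisymm <|
    have hp := runStart_notMem hT' p
    rayLE_runStart (rayLE_runStart (runStart_rayLE T' p) fun h' => hp (h h')) hp

end RunStart

/-- The combinatorial counterpart of a noncrossing partition of `Vconfig m n`: a setoid on the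
indices, trivial outside of `Icc (-n) m`, in which crossing pairs of related indices are related. -/
structure IsConeNoncrossing (m n : ℕ) (r : Setoid ℤ) : Prop where
  mem_Icc : ∀ {p q}, r p q → p ≠ q → p ∈ Icc (-n : ℤ) m
  cross : ∀ {a a' b b'}, RayLE a a' → RayLE b b' → r a b' → r a' b → r a b

/-- A noncrossing setoid all of whose related pairs join the two rays. -/
structure IsConeMatching (m n : ℕ) (K : Setoid ℤ) : Prop extends IsConeNoncrossing m n K where
  eq_of_rayLE : ∀ {p q}, RayLE p q → K p q → p = q

/-- The index `p` is the one nearest to the origin in its ray and its class. -/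
def IsRunStart (r : Setoid ℤ) (p : ℤ) : Prop := ∀ q, RayLE q p → r q p → q = p

/-- The restriction of `r` to its run starts. -/
def skeleton (r : Setoid ℤ) : Setoid ℤ where
  r p q := p = q ∨ IsRunStart r p ∧ IsRunStart r q ∧ r p q
  iseqv := by
    refine ⟨fun p => .inl rfl, ?_, ?_⟩
    · rintro p q (rfl | ⟨hp, hq, h⟩)
      exacts [.inl rfl, .inr ⟨hq, hp, r.symm h⟩]
    · rintro p q t (rfl | ⟨hp, hq, h⟩) (rfl | ⟨hq', ht, h'⟩)
      exacts [.inl rfl, .inr ⟨hq', ht, h'⟩, .inr ⟨hp, hq, h⟩, .inr ⟨hp, ht, r.trans h h'⟩]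

open Classical in
/-- The indices that share their class with an earlier index of their ray. -/
noncomputable def joined (m n : ℕ) (r : Setoid ℤ) : Finset ℤ :=
  {p ∈ Icc (-n : ℤ) m | ¬IsRunStart r p}

open Classical in
/-- The indices, other than the origin, that `K` leaves unmatched. -/
noncomputable def unmatched (m n : ℕ) (K : Setoid ℤ) : Finset ℤ :=
  {p ∈ Icc (-n : ℤ) m | p ≠ 0 ∧ ∀ q, K p q → p = q}

/-- The setoid obtained from `K` by joining every index of `T` to its predecessor. -/
def fill (K : Setoid ℤ) (T : Finset ℤ) : Setoid ℤ := K.comap (runStart T)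

variable {m n : ℕ} {r K : Setoid ℤ} {T T' : Finset ℤ} {p q : ℤ}

theorem mem_joined : p ∈ joined m n r ↔ p ∈ Icc (-n : ℤ) m ∧ ¬IsRunStart r p := by
  simp [joined]

theorem mem_unmatched : p ∈ unmatched m n K ↔ p ∈ Icc (-n : ℤ) m ∧ p ≠ 0 ∧ ∀ q, K p q → p = q := by
  simp [unmatched]

theorem zero_notMem_of_subset_unmatched (hT : T ⊆ unmatched m n K) : 0 ∉ T :=
  fun h => (mem_unmatched.1 (hT h)).2.1 rfl

theorem notMem_of_rel_of_subset_unmatched (hT : T ⊆ unmatched m n K) (h : K p q) (hne : p ≠ q) :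
    p ∉ T :=
  fun hp => hne ((mem_unmatched.1 (hT hp)).2.2 q h)

theorem isRunStart_zero (r : Setoid ℤ) : IsRunStart r 0 := fun _ h _ => h.eq_zero

theorem exists_isRunStart (r : Setoid ℤ) (p : ℤ) : ∃ q, RayLE q p ∧ IsRunStart r q ∧ r q p := by
  induction h : p.natAbs using Nat.strong_induction_on generalizing p with
  | _ k ih =>
    by_cases hp : IsRunStart r p
    · exact ⟨p, .refl p, hp, r.refl p⟩
    · unfold IsRunStart at hp
      push Not at hp
      obtain ⟨q, hqp, hrel, hne⟩ := hp
      obtain ⟨s, hsq, hs, hrel'⟩ := ih _ (h ▸ hqp.natAbs_lt hne) q rfl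
      exact ⟨s, hsq.trans hqp, hs, r.trans hrel' hrel⟩

namespace IsConeNoncrossing

theorem notMem_joined_iff (hr : IsConeNoncrossing m n r) : p ∉ joined m n r ↔ IsRunStart r p := by
  refine ⟨fun hp => ?_, fun hp h => (mem_joined.1 h).2 hp⟩
  intro q hqp hrel
  by_contra hne
  exact hp (mem_joined.2 ⟨hr.mem_Icc (r.symm hrel) (Ne.symm hne), fun hp => hne (hp q hqp hrel)⟩)

theorem zero_notMem_joined (hr : IsConeNoncrossing m n r) : 0 ∉ joined m n r :=
  hr.notMem_joined_iff.2 (isRunStart_zero r)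

theorem rel_runStart (hr : IsConeNoncrossing m n r) (p : ℤ) :
    r (runStart (joined m n r) p) p := by
  obtain ⟨q, hqp, hq, hrel⟩ := exists_isRunStart r p
  exact r.trans (r.symm (hr.cross (rayLE_runStart hqp (hr.notMem_joined_iff.2 hq))
    (runStart_rayLE _ p) hrel (r.refl _))) hrel

theorem isRunStart_runStart (hr : IsConeNoncrossing m n r) (p : ℤ) :
    IsRunStart r (runStart (joined m n r) p) :=
  hr.notMem_joined_iff.1 (runStart_notMem hr.zero_notMem_joined p)

theorem fill_skeleton_joined (hr : IsConeNoncrossing m n r) :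
    fill (skeleton r) (joined m n r) = r := by
  ext p q
  have hp := hr.rel_runStart p
  have hq := hr.rel_runStart q
  constructor
  · rintro (h | ⟨-, -, h⟩)
    · exact r.trans (r.symm hp) (h ▸ hq)
    · exact r.trans (r.symm hp) (r.trans h hq)
  · intro h
    exact .inr ⟨hr.isRunStart_runStart p, hr.isRunStart_runStart q,
      r.trans hp (r.trans h (r.symm hq))⟩

end IsConeNoncrossing

theorem eq_of_rayLE_of_skeleton (h : RayLE p q) (hrel : skeleton r p q) : p = q :=
  hrel.elim id fun ⟨_, hq, hrel⟩ => hq p h hrel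

namespace IsConeNoncrossing

theorem isConeMatching_skeleton (hr : IsConeNoncrossing m n r) :
    IsConeMatching m n (skeleton r) where
  mem_Icc h hne := hr.mem_Icc (h.resolve_left hne).2.2 hne
  cross := by
    intro a a' b b' haa' hbb' hab' ha'b
    obtain rfl | ⟨ha, -, hrel⟩ := id hab'
    · obtain rfl := eq_of_rayLE_of_skeleton (hbb'.trans haa') ((skeleton r).symm ha'b)
      exact .inl (haa'.antisymm hbb')
    obtain rfl | ⟨-, hb, hrel'⟩ := id ha'b
    · obtain rfl := eq_of_rayLE_of_skeleton (haa'.trans hbb') hab'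
      exact .inl (haa'.antisymm hbb')
    exact .inr ⟨ha, hb, hr.cross haa' hbb' hrel hrel'⟩
  eq_of_rayLE := eq_of_rayLE_of_skeleton

theorem joined_subset_unmatched (hr : IsConeNoncrossing m n r) :
    joined m n r ⊆ unmatched m n (skeleton r) := by
  intro p hp
  have hstart : ¬IsRunStart r p := (mem_joined.1 hp).2
  refine mem_unmatched.2 ⟨(mem_joined.1 hp).1, ?_, fun q h => h.resolve_right fun h => hstart h.1⟩
  rintro rfl
  exact hr.zero_notMem_joined hp

end IsConeNoncrossing

theorem IsConeNoncrossing.fill (hK : IsConeNoncrossing m n K) (hT : T ⊆ unmatched m n K) :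
    IsConeNoncrossing m n (fill K T) where
  mem_Icc {p q} h hne := by
    by_cases hp : p ∈ T
    · exact (mem_unmatched.1 (hT hp)).1
    change K (runStart T p) (runStart T q) at h
    rw [runStart_eq_self hp] at h
    by_cases hpq : p = runStart T q
    · have hq : q ∈ T := by
        by_contra hq
        exact hne (hpq.trans (runStart_eq_self hq))
      exact (hpq ▸ runStart_rayLE T q).mem_Icc (mem_unmatched.1 (hT hq)).1
    · exact hK.mem_Icc h hpq
  cross haa' hbb' := hK.cross (runStart_mono (zero_notMem_of_subset_unmatched hT) haa')
    (runStart_mono (zero_notMem_of_subset_unmatched hT) hbb')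

theorem fill_mono (h : T ⊆ T') (hT' : T' ⊆ unmatched m n K) : fill K T ≤ fill K T' := by
  intro p q hpq
  have h0 := zero_notMem_of_subset_unmatched hT'
  change K (runStart T' p) (runStart T' q)
  rw [← runStart_runStart_of_subset h0 h p, ← runStart_runStart_of_subset h0 h q]
  by_cases hne : runStart T p = runStart T q
  · rw [hne]
  · rwa [runStart_eq_self (notMem_of_rel_of_subset_unmatched hT' hpq hne),
      runStart_eq_self (notMem_of_rel_of_subset_unmatched hT' (K.symm hpq) (Ne.symm hne))]

namespace IsConeMatching

theorem isRunStart_fill_iff (hK : IsConeMatching m n K) (hT : 0 ∉ T) :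
    IsRunStart (fill K T) p ↔ p ∉ T := by
  constructor
  · intro h hp
    have hs := runStart_notMem hT p
    refine hs ?_
    rwa [h (runStart T p) (runStart_rayLE T p) ?_]
    change K _ _
    rw [runStart_eq_self hs]
  · intro hp q hqp h
    change K _ _ at h
    rw [runStart_eq_self hp] at h
    have hsq := runStart_rayLE T q
    exact hqp.antisymm (hK.eq_of_rayLE (hsq.trans hqp) h ▸ hsq)

theorem joined_fill (hK : IsConeMatching m n K) (hT : T ⊆ unmatched m n K) :
    joined m n (fill K T) = T := by
  ext p
  rw [mem_joined, hK.isRunStart_fill_iff (zero_notMem_of_subset_unmatched hT), not_not,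
    and_iff_right_of_imp fun h => (mem_unmatched.1 (hT h)).1]

theorem skeleton_fill (hK : IsConeMatching m n K) (hT : T ⊆ unmatched m n K) :
    skeleton (fill K T) = K := by
  have h0 := zero_notMem_of_subset_unmatched hT
  ext p q
  change p = q ∨ IsRunStart (fill K T) p ∧ IsRunStart (fill K T) q ∧ K _ _ ↔ K p q
  rw [hK.isRunStart_fill_iff h0, hK.isRunStart_fill_iff h0]
  constructor
  · rintro (rfl | ⟨hp, hq, h⟩)
    · rfl
    · rwa [runStart_eq_self hp, runStart_eq_self hq] at h
  · intro h
    refine or_iff_not_imp_left.2 fun hne => ?_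
    have hp := notMem_of_rel_of_subset_unmatched hT h hne
    have hq := notMem_of_rel_of_subset_unmatched hT (K.symm h) (Ne.symm hne)
    exact ⟨hp, hq, by rwa [runStart_eq_self hp, runStart_eq_self hq]⟩

end IsConeMatching

open Classical in
/-- For each class of `fill K T` that meets `Icc (-n) m`, the run start in it that maximizes `f`. -/
noncomputable def leaders (m n : ℕ) (K : Setoid ℤ) (T : Finset ℤ) (f : ℤ → ℤ) : Finset ℤ :=
  {p ∈ Icc (-n : ℤ) m \ T | ∀ q, K p q → f q ≤ f p}

theorem mem_leaders {f : ℤ → ℤ} :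
    p ∈ leaders m n K T f ↔ p ∈ Icc (-n : ℤ) m \ T ∧ ∀ q, K p q → f q ≤ f p := by
  simp [leaders]

theorem leaders_subset (f : ℤ → ℤ) : leaders m n K T f ⊆ Icc (-n : ℤ) m :=
  fun _ hp => (mem_sdiff.1 (mem_leaders.1 hp).1).1

namespace IsConeMatching

theorem existsUnique_mem_leaders (hK : IsConeMatching m n K) (hT : T ⊆ unmatched m n K) {f : ℤ → ℤ}
    (hf : f.Injective) (hp : p ∈ Icc (-n : ℤ) m) :
    ∃! x, x ∈ leaders m n K T f ∧ fill K T p x := by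
  classical
  have hs : runStart T p ∈ Icc (-n : ℤ) m \ T :=
    mem_sdiff.2 ⟨(runStart_rayLE T p).mem_Icc hp,
      runStart_notMem (zero_notMem_of_subset_unmatched hT) p⟩
  obtain ⟨x, hx, hmax⟩ := exists_max_image {q ∈ Icc (-n : ℤ) m \ T | K (runStart T p) q} f
    ⟨_, mem_filter.2 ⟨hs, K.refl _⟩⟩
  obtain ⟨hxT, hpx⟩ := mem_filter.1 hx
  refine ⟨x, ⟨mem_leaders.2 ⟨hxT, fun q hxq => ?_⟩, ?_⟩, ?_⟩
  · by_cases hne : x = q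
    · rw [hne]
    have hqx := K.symm hxq
    exact hmax q (mem_filter.2 ⟨mem_sdiff.2 ⟨hK.mem_Icc hqx (Ne.symm hne),
      notMem_of_rel_of_subset_unmatched hT hqx (Ne.symm hne)⟩, K.trans hpx hxq⟩)
  · change K _ _
    rwa [runStart_eq_self (mem_sdiff.1 hxT).2]
  · rintro y ⟨hy, hpy⟩
    obtain ⟨hyT, hymax⟩ := mem_leaders.1 hy
    change K _ _ at hpy
    rw [runStart_eq_self (mem_sdiff.1 hyT).2] at hpy
    exact hf ((hmax y (mem_filter.2 ⟨hyT, hpy⟩)).antisymm (hymax x (K.trans (K.symm hpy) hpx)))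

-- A class of a matching is a singleton or a pair, and its greatest and least elements coincide
-- exactly when it is a singleton.
theorem leaders_id_union_leaders_neg (hK : IsConeMatching m n K) :
    leaders m n K T id ∪ leaders m n K T Neg.neg = Icc (-n : ℤ) m \ T := by
  ext x
  simp only [mem_union, mem_leaders, ← and_or_left, and_iff_left_iff_imp, id]
  intro _
  by_contra! h
  obtain ⟨⟨b, hxb, hb⟩, a, hxa, ha⟩ := h
  rcases RayLE.comparable_of_lt_of_lt (neg_lt_neg_iff.1 ha) hb with h | h | h | h
  · exact ha.ne (congrArg _ (hK.eq_of_rayLE h (K.symm hxa)).symm)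
  · exact ha.ne (congrArg _ (hK.eq_of_rayLE h hxa))
  · exact hb.ne (hK.eq_of_rayLE h hxb)
  · exact hb.ne (hK.eq_of_rayLE h (K.symm hxb)).symm

theorem leaders_id_inter_leaders_neg (hK : IsConeMatching m n K) :
    leaders m n K T id ∩ leaders m n K T Neg.neg = insert 0 (unmatched m n K) \ T := by
  ext x
  simp only [mem_inter, mem_leaders, mem_sdiff, mem_insert, mem_unmatched, id]
  constructor
  · rintro ⟨⟨⟨hx, hxT⟩, hmax⟩, -, hmin⟩
    refine ⟨or_iff_not_imp_left.2 fun h0 => ⟨hx, h0, fun q hq => ?_⟩, hxT⟩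
    exact (neg_le_neg_iff.1 (hmin q hq)).antisymm (hmax q hq)
  · rintro ⟨h, hxT⟩
    have hx : x ∈ Icc (-n : ℤ) m ∧ ∀ q, K x q → x = q := by
      rcases h with rfl | ⟨hx, -, h⟩
      · exact ⟨by simp, fun q => hK.eq_of_rayLE (.zero_left q)⟩
      · exact ⟨hx, h⟩
    exact ⟨⟨⟨hx.1, hxT⟩, fun q hq => (hx.2 q hq).ge⟩, ⟨hx.1, hxT⟩,
      fun q hq => neg_le_neg (hx.2 q hq).le⟩

theorem card_leaders_id_add_card_leaders_neg (hK : IsConeMatching m n K)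
    (hT : T ⊆ unmatched m n K) :
    #(leaders m n K T id) + #(leaders m n K T Neg.neg) + 2 * #T =
      m + n + 2 + #(unmatched m n K) := by
  have hTIcc : T ⊆ Icc (-n : ℤ) m := fun p hp => (mem_unmatched.1 (hT hp)).1
  have h0 : 0 ∉ unmatched m n K := zero_notMem_of_subset_unmatched subset_rfl
  have hle := card_le_card hT
  have hle' := card_le_card hTIcc
  have hIcc : #(Icc (-n : ℤ) m) = m + n + 1 := by rw [Int.card_Icc]; omega
  rw [← card_union_add_card_inter, hK.leaders_id_union_leaders_neg,
    hK.leaders_id_inter_leaders_neg, card_sdiff_of_subset hTIcc,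
    card_sdiff_of_subset (hT.trans (subset_insert _ _)), card_insert_of_notMem h0]
  omega

end IsConeMatching

end Matchings

section Geometry

/-- The point with index `p`: the point `p` of the real axis if `p ≥ 0`, and the point `-p * i` of
the imaginary axis if `p ≤ 0`. -/
def pt (p : ℤ) : ℂ := ⟨(max p 0 : ℤ), (max (-p) 0 : ℤ)⟩

theorem pt_of_nonneg {p : ℤ} (h : 0 ≤ p) : pt p = ⟨p, 0⟩ := by
  rw [pt, max_eq_left h, max_eq_right (neg_nonpos.2 h), Int.cast_zero]

theorem pt_of_nonpos {p : ℤ} (h : p ≤ 0) : pt p = ⟨0, -p⟩ := by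
  rw [pt, max_eq_right h, max_eq_left (neg_nonneg.2 h), Int.cast_zero, Int.cast_neg]

theorem pt_natCast (k : ℕ) : pt k = k := by
  rw [pt_of_nonneg (Int.natCast_nonneg k)]
  apply Complex.ext <;> simp

theorem pt_neg_natCast (k : ℕ) : pt (-k) = k * Complex.I := by
  rw [pt_of_nonpos (by omega)]
  apply Complex.ext <;> simp

theorem pt_injective : Function.Injective pt := by
  intro p q h
  rw [pt, pt, Complex.mk.injEq, Int.cast_inj, Int.cast_inj] at h
  omega

theorem Vconfig_eq_image_pt (m n : ℕ) : Vconfig m n = (Icc (-n : ℤ) m).image pt := by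
  ext z
  simp only [Vconfig, Uconfig, mem_insert, mem_union, mem_image, mem_Icc]
  constructor
  · rintro (rfl | ⟨k, hk, rfl⟩ | ⟨k, hk, rfl⟩)
    · exact ⟨0, by omega, by simpa using pt_natCast 0⟩
    · exact ⟨k, by omega, pt_natCast k⟩
    · exact ⟨-k, by omega, pt_neg_natCast k⟩
  · rintro ⟨p, hp, rfl⟩
    obtain ⟨k, rfl | rfl⟩ := Int.eq_nat_or_neg p
    · rcases Nat.eq_zero_or_pos k with rfl | hk
      · exact .inl (by simpa using pt_natCast 0)
      · exact .inr (.inl ⟨k, by omega, (pt_natCast k).symm⟩)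
    · rcases Nat.eq_zero_or_pos k with rfl | hk
      · exact .inl (by simpa using pt_natCast 0)
      · exact .inr (.inr ⟨k, by omega, (pt_neg_natCast k).symm⟩)

theorem pt_mem_Vconfig {m n : ℕ} {p : ℤ} : pt p ∈ Vconfig m n ↔ p ∈ Icc (-n : ℤ) m := by
  rw [Vconfig_eq_image_pt, pt_injective.mem_finset_image]

theorem pt_mem_segment {a b c : ℤ} (hab : RayLE a b) (hbc : RayLE b c) :
    pt b ∈ segment ℝ (pt a) (pt c) := by
  have hseg {x y z : ℝ} (hxy : x ≤ y) (hyz : y ≤ z) : y ∈ segment ℝ x z :=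
    segment_eq_Icc (hxy.trans hyz) ▸ ⟨hxy, hyz⟩
  by_cases hc : 0 ≤ c
  · have ⟨ha, hab, hbc⟩ : 0 ≤ a ∧ a ≤ b ∧ b ≤ c := by unfold RayLE at *; omega
    obtain ⟨s, t, hs, ht, hst, h⟩ := hseg (Int.cast_le.2 hab) (Int.cast_le.2 hbc)
    rw [pt_of_nonneg ha, pt_of_nonneg (ha.trans hab), pt_of_nonneg hc]
    exact ⟨s, t, hs, ht, hst, by apply Complex.ext <;> simp [← h]⟩
  · have ⟨hcb, hba, ha⟩ : c ≤ b ∧ b ≤ a ∧ a ≤ 0 := by unfold RayLE at *; omega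
    obtain ⟨t, s, ht, hs, hts, h⟩ := hseg (Int.cast_le.2 hcb) (Int.cast_le.2 hba)
    rw [pt_of_nonpos ha, pt_of_nonpos (hba.trans ha), pt_of_nonpos (by omega)]
    exact ⟨s, t, hs, ht, add_comm t s ▸ hts, by apply Complex.ext <;> simp [← h, add_comm]⟩

theorem exists_mem_segment_mem_segment {x x' y y' : ℝ} (hx : 0 < x) (hxx' : x ≤ x') (hy : 0 < y)
    (hyy' : y ≤ y') :
    ∃ z : ℂ, z ∈ segment ℝ ⟨x, 0⟩ ⟨0, y'⟩ ∧ z ∈ segment ℝ ⟨x', 0⟩ ⟨0, y⟩ := by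
  rcases eq_or_lt_of_le (mul_le_mul hxx' hyy' hy.le (hx.le.trans hxx')) with h | h
  · have hx' : x = x' := by nlinarith
    have hy' : y = y' := by nlinarith
    subst hx' hy'
    exact ⟨_, left_mem_segment _ _ _, left_mem_segment _ _ _⟩
  have hD : 0 < x' * y' - x * y := sub_pos.2 h
  -- The witness solves the equations of the two lines.
  set D := x' * y' - x * y with hDdef
  refine ⟨⟨x * (x' * (y' - y) / D), y' * (y * (x' - x) / D)⟩,
    ⟨x' * (y' - y) / D, y * (x' - x) / D, ?_, ?_, ?_, ?_⟩,
    ⟨x * (y' - y) / D, y' * (x' - x) / D, ?_, ?_, ?_, ?_⟩⟩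
  · exact div_nonneg (mul_nonneg (by linarith) (by linarith)) hD.le
  · exact div_nonneg (mul_nonneg (by linarith) (by linarith)) hD.le
  · rw [← add_div, div_eq_one_iff_eq hD.ne', hDdef]; ring
  · apply Complex.ext <;> simp <;> ring
  · exact div_nonneg (mul_nonneg (by linarith) (by linarith)) hD.le
  · exact div_nonneg (mul_nonneg (by linarith) (by linarith)) hD.le
  · rw [← add_div, div_eq_one_iff_eq hD.ne', hDdef]; ring
  · apply Complex.ext <;> simp <;> ring

theorem exists_mem_segment_pt_mem_segment_pt {a a' b b' : ℤ} (ha : RayLE a a') (hb : RayLE b b') :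
    ∃ z, z ∈ segment ℝ (pt a) (pt b') ∧ z ∈ segment ℝ (pt a') (pt b) := by
  by_cases hab : RayLE a b
  · exact ⟨pt b, pt_mem_segment hab hb, right_mem_segment _ _ _⟩
  by_cases hba : RayLE b a
  · exact ⟨pt a, left_mem_segment _ _ _, segment_symm ℝ (pt b) (pt a') ▸ pt_mem_segment hba ha⟩
  have hcross {a a' b b' : ℤ} (ha : 0 < a) (haa' : a ≤ a') (hb : b < 0) (hbb' : b' ≤ b) :
      ∃ z, z ∈ segment ℝ (pt a) (pt b') ∧ z ∈ segment ℝ (pt a') (pt b) := by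
    rw [pt_of_nonneg ha.le, pt_of_nonneg (ha.le.trans haa'), pt_of_nonpos hb.le,
      pt_of_nonpos (hbb'.trans hb.le)]
    apply exists_mem_segment_mem_segment <;> norm_cast <;> omega
  unfold RayLE at *
  rcases lt_or_ge 0 a with h | h
  · exact hcross h (by omega) (by omega) (by omega)
  · simp only [segment_symm ℝ (pt a), segment_symm ℝ (pt a')]
    exact exists_congr (fun _ => and_comm) |>.1 (hcross (by omega) (by omega) (by omega) (by omega))

theorem disjoint_convexHull_of_intercepts {s t : ℤ} (hs : 0 < s) (ht : 0 < t) {P Q : Set ℤ}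
    (hP : ∀ p ∈ P, p < s ∧ -p < t) (hQ : ∀ q ∈ Q, s ≤ q ∨ t ≤ -q) :
    Disjoint (convexHull ℝ (pt '' P)) (convexHull ℝ (pt '' Q)) := by
  let f (z : ℂ) : ℝ := t * z.re + s * z.im
  have hf : IsLinearMap ℝ f := ⟨fun x y => by simp [f]; ring, fun c x => by simp [f]; ring⟩
  have hf_nonneg {p : ℤ} (hp : 0 ≤ p) : f (pt p) = (t * p : ℤ) := by simp [f, pt_of_nonneg hp]
  have hf_nonpos {p : ℤ} (hp : p ≤ 0) : f (pt p) = (s * -p : ℤ) := by simp [f, pt_of_nonpos hp]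
  have hPf : convexHull ℝ (pt '' P) ⊆ {z | f z < (t * s : ℤ)} := by
    refine convexHull_min (Set.image_subset_iff.2 fun p hp => ?_) (convex_halfSpace_lt hf _)
    rw [Set.mem_preimage, Set.mem_ofPred_eq]
    rcases le_total 0 p with h | h
    · rw [hf_nonneg h, Int.cast_lt]
      exact mul_lt_mul_of_pos_left (hP p hp).1 ht
    · rw [hf_nonpos h, Int.cast_lt, mul_comm t]
      exact mul_lt_mul_of_pos_left (hP p hp).2 hs
  have hQf : convexHull ℝ (pt '' Q) ⊆ {z | ((t * s : ℤ) : ℝ) ≤ f z} := by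
    refine convexHull_min (Set.image_subset_iff.2 fun q hq => ?_) (convex_halfSpace_ge hf _)
    rw [Set.mem_preimage, Set.mem_ofPred_eq]
    rcases hQ q hq with h | h
    · rw [hf_nonneg (hs.le.trans h), Int.cast_le]
      exact mul_le_mul_of_nonneg_left h ht.le
    · rw [hf_nonpos (by omega), Int.cast_le, mul_comm t]
      exact mul_le_mul_of_nonneg_left h hs.le
  exact Disjoint.mono hPf hQf (Set.disjoint_left.2 fun z (hz : f z < _) => not_le_of_gt hz)

theorem disjoint_convexHull_of_not_rayLE {P : Finset ℤ} {Q : Set ℤ}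
    (h : ∀ p ∈ P, ∀ q ∈ Q, ¬RayLE q p) :
    Disjoint (convexHull ℝ (pt '' P)) (convexHull ℝ (pt '' Q)) := by
  rcases P.eq_empty_or_nonempty with rfl | hP
  · simp
  obtain ⟨p₁, hp₁, hmax⟩ := P.exists_max_image id hP
  obtain ⟨p₀, hp₀, hmin⟩ := P.exists_min_image id hP
  refine disjoint_convexHull_of_intercepts (s := max p₁ 0 + 1) (t := max (-p₀) 0 + 1) (by omega)
    (by omega) (fun p hp => ?_) fun q hq => ?_
  · have := hmax p hp
    have := hmin p hp
    simp only [id] at *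
    omega
  · have := h p₁ hp₁ q hq
    have := h p₀ hp₀ q hq
    unfold RayLE at *
    omega

theorem disjoint_convexHull_pt_iff {P Q : Finset ℤ} :
    Disjoint (convexHull ℝ (pt '' P)) (convexHull ℝ (pt '' Q)) ↔
      ∀ a ∈ P, ∀ b' ∈ P, ∀ a' ∈ Q, ∀ b ∈ Q, RayLE a a' → ¬RayLE b b' := by
  constructor
  · intro h a ha b' hb' a' ha' b hb haa' hbb'
    obtain ⟨z, hz, hz'⟩ := exists_mem_segment_pt_mem_segment_pt haa' hbb'
    have hsub {S : Finset ℤ} {p q : ℤ} (hp : p ∈ S) (hq : q ∈ S) :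
        segment ℝ (pt p) (pt q) ⊆ convexHull ℝ (pt '' S) :=
      segment_subset_convexHull (Set.mem_image_of_mem pt hp) (Set.mem_image_of_mem pt hq)
    exact Set.disjoint_left.1 h (hsub ha hb' hz) (hsub ha' hb hz')
  · intro h
    by_cases hPQ : ∃ a ∈ P, ∃ a' ∈ Q, RayLE a a'
    · obtain ⟨a, ha, a', ha', haa'⟩ := hPQ
      exact disjoint_convexHull_of_not_rayLE fun b' hb' b hb => h a ha b' hb' a' ha' b hb haa'
    · push Not at hPQ
      exact (disjoint_convexHull_of_not_rayLE fun q hq p hp => hPQ p hp q hq).symm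

end Geometry

section Dictionary

variable {m n : ℕ}

/-- The setoid on the indices whose nontrivial classes are the blocks of `π`. -/
def indexSetoid (π : Finpartition (Vconfig m n)) : Setoid ℤ where
  r p q := p = q ∨ ∃ B ∈ π.parts, pt p ∈ B ∧ pt q ∈ B
  iseqv := by
    refine ⟨fun p => .inl rfl, ?_, ?_⟩
    · rintro p q (rfl | ⟨B, hB, hp, hq⟩)
      exacts [.inl rfl, .inr ⟨B, hB, hq, hp⟩]
    · rintro p q s (rfl | ⟨B, hB, hp, hq⟩) (rfl | ⟨C, hC, hq', hs⟩)
      · exact .inl rfl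
      · exact .inr ⟨C, hC, hq', hs⟩
      · exact .inr ⟨B, hB, hp, hq⟩
      · obtain rfl := π.eq_of_mem_parts hB hC hq hq'
        exact .inr ⟨B, hB, hp, hs⟩

variable {π π' : Finpartition (Vconfig m n)} {B C : Finset ℂ} {p q : ℤ}

theorem indexSetoid_iff_eq (hB : B ∈ π.parts) (hC : C ∈ π.parts) (hp : pt p ∈ B) (hq : pt q ∈ C) :
    indexSetoid π p q ↔ B = C := by
  constructor
  · rintro (rfl | ⟨D, hD, hp', hq'⟩)
    · exact π.eq_of_mem_parts hB hC hp hq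
    · exact (π.eq_of_mem_parts hB hD hp hp').trans (π.eq_of_mem_parts hD hC hq' hq)
  · rintro rfl
    exact .inr ⟨B, hB, hp, hq⟩

theorem exists_pt_eq_of_mem (hB : B ∈ π.parts) {x : ℂ} (hx : x ∈ B) :
    ∃ p ∈ Icc (-n : ℤ) m, pt p = x := by
  have := π.le hB hx
  rwa [Vconfig_eq_image_pt, mem_image] at this

theorem indexSetoid_le_indexSetoid_iff : indexSetoid π ≤ indexSetoid π' ↔ π ≤ π' := by
  constructor
  · intro h B hB
    obtain ⟨x, hx⟩ := π.nonempty_of_mem_parts hB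
    obtain ⟨C, hC, hxC⟩ := π'.exists_mem (π.le hB hx)
    refine ⟨C, hC, fun y hy => ?_⟩
    obtain ⟨D, hD, hyD⟩ := π'.exists_mem (π.le hB hy)
    obtain ⟨p, -, rfl⟩ := exists_pt_eq_of_mem hB hx
    obtain ⟨q, -, rfl⟩ := exists_pt_eq_of_mem hB hy
    rwa [(indexSetoid_iff_eq hC hD hxC hyD).1 (h ((indexSetoid_iff_eq hB hB hx hy).2 rfl))]
  · rintro h p q (rfl | ⟨B, hB, hp, hq⟩)
    · exact .inl rfl
    · obtain ⟨C, hC, hBC⟩ := h hB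
      exact .inr ⟨C, hC, hBC hp, hBC hq⟩

theorem isConeNoncrossing_indexSetoid (hπ : IsNoncrossing π) :
    IsConeNoncrossing m n (indexSetoid π) where
  mem_Icc := by
    rintro p q (rfl | ⟨B, hB, hp, -⟩) hne
    · exact absurd rfl hne
    · exact pt_mem_Vconfig.1 (π.le hB hp)
  cross := by
    intro a a' b b' haa' hbb' hab' ha'b
    have of_mem {B C} (hB : B ∈ π.parts) (hC : C ∈ π.parts) (ha : pt a ∈ B) (hb' : pt b' ∈ B)
        (ha' : pt a' ∈ C) (hb : pt b ∈ C) : indexSetoid π a b := by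
      rw [indexSetoid_iff_eq hB hC ha hb]
      by_contra hne
      obtain ⟨z, hz, hz'⟩ := exists_mem_segment_pt_mem_segment_pt haa' hbb'
      exact Set.disjoint_left.1 (hπ hB hC hne) (segment_subset_convexHull ha hb' hz)
        (segment_subset_convexHull ha' hb hz')
    have exists_mem_of_rayLE {p q B} (hpq : RayLE p q) (hB : B ∈ π.parts) (hq : pt q ∈ B) :
        ∃ C ∈ π.parts, pt p ∈ C :=
      π.exists_mem (pt_mem_Vconfig.2 (hpq.mem_Icc (pt_mem_Vconfig.1 (π.le hB hq))))
    rcases hab' with rfl | ⟨B, hB, ha, hb'⟩ <;> rcases ha'b with rfl | ⟨C, hC, ha', hb⟩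
    · exact .inl (haa'.antisymm hbb')
    · obtain ⟨B, hB, ha⟩ := exists_mem_of_rayLE haa' hC ha'
      exact of_mem hB hC ha ha ha' hb
    · obtain ⟨C, hC, hb⟩ := exists_mem_of_rayLE hbb' hB hb'
      exact of_mem hB hC ha hb' hb hb
    · exact of_mem hB hC ha hb' ha' hb

theorem isNoncrossing_of_isConeNoncrossing (h : IsConeNoncrossing m n (indexSetoid π)) :
    IsNoncrossing π := by
  intro B hB C hC hne
  obtain ⟨P, -, rfl⟩ := subset_image_iff.1 (Vconfig_eq_image_pt m n ▸ π.le hB)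
  obtain ⟨Q, -, rfl⟩ := subset_image_iff.1 (Vconfig_eq_image_pt m n ▸ π.le hC)
  rw [coe_image, coe_image, disjoint_convexHull_pt_iff]
  intro a ha b' hb' a' ha' b hb haa' hbb'
  have hrel {S : Finset ℤ} (hS : S.image pt ∈ π.parts) {p q : ℤ} (hp : p ∈ S) (hq : q ∈ S) :
      indexSetoid π p q :=
    (indexSetoid_iff_eq hS hS (mem_image_of_mem pt hp) (mem_image_of_mem pt hq)).2 rfl
  exact hne ((indexSetoid_iff_eq hB hC (mem_image_of_mem pt ha) (mem_image_of_mem pt hb)).1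
    (h.cross haa' hbb' (hrel hB ha hb') (hrel hC ha' hb)))

theorem exists_indexSetoid_eq {r : Setoid ℤ} (h : ∀ p q, r p q → p ≠ q → p ∈ Icc (-n : ℤ) m) :
    ∃ π : Finpartition (Vconfig m n), indexSetoid π = r := by
  classical
  refine ⟨.ofSetSetoid (r.comap (Function.invFun pt)) _, ?_⟩
  ext p q
  by_cases hpq : p = q
  · exact hpq ▸ iff_of_true (.inl rfl) (r.refl p)
  · change p = q ∨ _ ↔ _
    rw [or_iff_right hpq, ← Finpartition.mem_part_iff_exists,
      Finpartition.mem_part_ofSetSetoid_iff_rel, pt_mem_Vconfig, pt_mem_Vconfig, Setoid.comap_rel,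
      Function.leftInverse_invFun pt_injective, Function.leftInverse_invFun pt_injective]
    exact ⟨fun h => r.symm h.2.2,
      fun hrel => ⟨h q p (r.symm hrel) (Ne.symm hpq), h p q hrel hpq, r.symm hrel⟩⟩

/-- The dictionary between the geometry and the combinatorics of noncrossing partitions. -/
noncomputable def indexOrderIso (m n : ℕ) :
    NC (Vconfig m n) ≃o {r : Setoid ℤ // IsConeNoncrossing m n r} :=
  RelIso.ofSurjective
    (OrderEmbedding.ofMapLEIff
      (fun π => ⟨indexSetoid π.1, isConeNoncrossing_indexSetoid π.2⟩)
      fun _ _ => indexSetoid_le_indexSetoid_iff)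
    fun ⟨r, hr⟩ => by
      obtain ⟨π, rfl⟩ := exists_indexSetoid_eq fun _ _ => hr.mem_Icc
      exact ⟨⟨π, isNoncrossing_of_isConeNoncrossing hr⟩, rfl⟩

theorem card_parts_eq_of_existsUnique_index {R : Finset ℤ} (hR : R ⊆ Icc (-n : ℤ) m)
    (h : ∀ p ∈ Icc (-n : ℤ) m, ∃! x, x ∈ R ∧ indexSetoid π p x) : #π.parts = #R := by
  rw [card_parts_eq_of_existsUnique (R := R.image pt), card_image_of_injective _ pt_injective]
  · rw [Vconfig_eq_image_pt]
    exact image_subset_image hR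
  · intro B hB
    obtain ⟨_, hpB⟩ := π.nonempty_of_mem_parts hB
    obtain ⟨p, hp, rfl⟩ := exists_pt_eq_of_mem hB hpB
    obtain ⟨x, ⟨hx, hpx⟩, huniq⟩ := h p hp
    have mem_iff {y} (hy : y ∈ R) : pt y ∈ B ↔ indexSetoid π p y := by
      obtain ⟨C, hC, hyC⟩ := π.exists_mem (pt_mem_Vconfig.2 (hR hy))
      rw [indexSetoid_iff_eq hB hC hpB hyC]
      exact ⟨fun hyB => π.eq_of_mem_parts hB hC hyB hyC, fun hBC => hBC ▸ hyC⟩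
    refine ⟨pt x, ⟨mem_image_of_mem pt hx, (mem_iff hx).2 hpx⟩, ?_⟩
    rintro _ ⟨hy, hyB⟩
    obtain ⟨y, hyR, rfl⟩ := mem_image.1 hy
    rw [huniq y ⟨hyR, (mem_iff hyR).1 hyB⟩]

end Dictionary

section Fibers

variable {m n : ℕ}

/-- The noncrossing partition with matching `K` in which every index of `T` is joined to its
predecessor. -/
noncomputable def fillPartition (K : {K : Setoid ℤ // IsConeMatching m n K})
    (T : Set.Iic (unmatched m n K.1)) : NC (Vconfig m n) :=
  (indexOrderIso m n).symm ⟨fill K.1 T.1, K.2.fill T.2⟩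

theorem indexSetoid_fillPartition (K : {K : Setoid ℤ // IsConeMatching m n K})
    (T : Set.Iic (unmatched m n K.1)) : indexSetoid (fillPartition K T).1 = fill K.1 T.1 :=
  congrArg Subtype.val ((indexOrderIso m n).apply_symm_apply ⟨_, K.2.fill T.2⟩)

theorem bijective_fillPartition (m n : ℕ) :
    Function.Bijective fun x : Σ K : {K : Setoid ℤ // IsConeMatching m n K},
      Set.Iic (unmatched m n K.1) => fillPartition x.1 x.2 := by
  constructor
  · rintro ⟨⟨K, hK⟩, T, hT⟩ ⟨⟨K', hK'⟩, T', hT'⟩ h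
    have hfill : fill K T = fill K' T' :=
      congrArg Subtype.val ((indexOrderIso m n).symm.injective h)
    obtain rfl : K = K' := by rw [← hK.skeleton_fill hT, hfill, hK'.skeleton_fill hT']
    obtain rfl : T = T' := by rw [← hK.joined_fill hT, hfill, hK'.joined_fill hT']
    rfl
  · intro π
    obtain ⟨⟨r, hr⟩, rfl⟩ := (indexOrderIso m n).symm.surjective π
    exact ⟨⟨⟨skeleton r, hr.isConeMatching_skeleton⟩, joined m n r, hr.joined_subset_unmatched⟩,
      congrArg (indexOrderIso m n).symm (Subtype.ext hr.fill_skeleton_joined)⟩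

variable (K : {K : Setoid ℤ // IsConeMatching m n K})

theorem two_mul_card_parts_fillPartition (T : Set.Iic (unmatched m n K.1)) :
    2 * #(fillPartition K T).parts + 2 * #T.1 = m + n + 2 + #(unmatched m n K.1) := by
  have hcard (f : ℤ → ℤ) (hf : f.Injective) :
      #(fillPartition K T).parts = #(leaders m n K.1 T.1 f) := by
    refine card_parts_eq_of_existsUnique_index (leaders_subset f) fun p hp => ?_
    rw [indexSetoid_fillPartition]
    exact K.2.existsUnique_mem_leaders T.2 hf hp
  have := K.2.card_leaders_id_add_card_leaders_neg T.2
  rw [← hcard _ Function.injective_id, ← hcard _ neg_injective] at this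
  omega

theorem card_parts_le (π : NC (Vconfig m n)) : #π.parts ≤ m + n + 1 := by
  refine π.1.card_parts_le_card.trans_eq ?_
  rw [Vconfig_eq_image_pt, card_image_of_injective _ pt_injective, Int.card_Icc]
  omega

theorem covBy_of_le_of_card_parts {P : Finset ℂ} {π π' : NC P} (h : π ≤ π')
    (hcard : #π.parts = #π'.parts + 1) : π ⋖ π' := by
  refine ⟨h.lt_of_ne (by rintro rfl; omega), fun ν hν hν' => ?_⟩
  have : #ν.parts < #π.parts := card_parts_lt_of_lt hν
  have : #π'.parts < #ν.parts := card_parts_lt_of_lt hν'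
  omega

theorem fillPartition_covBy {T T' : Set.Iic (unmatched m n K.1)} (h : T ⋖ T') :
    fillPartition K T ⋖ fillPartition K T' := by
  refine covBy_of_le_of_card_parts ((indexOrderIso m n).symm.monotone (fill_mono h.le T'.2)) ?_
  have := card_eq_card_add_one_of_covBy_Iic h
  have := two_mul_card_parts_fillPartition K T
  have := two_mul_card_parts_fillPartition K T'
  omega

end Fibers

end ConeConfig

/-- For all `m, n ≥ 0`, `NC(V_{m,n})` admits a symmetric chain decomposition: it can be
partitioned into saturated chains, each satisfying
`ρ(min C) + ρ(max C) = (m + n + 1) - 1`, where `ρ(π) = (m + n + 1) - #blocks(π)`. -/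
theorem nc_V_symmetric_chain_decomposition (m n : ℕ) :
    ∃ chains : Set (List (NC (Vconfig m n))),
      [] ∉ chains ∧
      (∀ x : NC (Vconfig m n), ∃! l, l ∈ chains ∧ x ∈ l) ∧
      (∀ l ∈ chains, List.Chain' (· ⋖ ·) l) ∧
      ∀ l ∈ chains, ∀ h : l ≠ [],
        ((m + n + 1) - (l.head h).parts.card) +
            ((m + n + 1) - (l.getLast h).parts.card) = (m + n + 1) - 1 := by
  choose C hC using fun K : {K : Setoid ℤ // ConeConfig.IsConeMatching m n K} =>
    exists_isSymmetricChainDecomposition_Iic_finset (ConeConfig.unmatched m n K.1)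
  have h := IsSymmetricChainDecomposition.iUnion_image_map (N := (m + n + 1) - 1)
    (ρ := fun π => (m + n + 1) - #π.parts) hC (ConeConfig.bijective_fillPartition m n)
    (fun K _ _ => ConeConfig.fillPartition_covBy K) fun K T => ?_
  · exact ⟨_, h.nil_notMem, h.existsUnique_mem, h.isChain, h.head_add_getLast⟩
  · have := ConeConfig.two_mul_card_parts_fillPartition K T
    have := ConeConfig.card_parts_le (ConeConfig.fillPartition K T)
    omega
end
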